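/- arXiv:1104.1647 — 8 statements merged into one kernel-verified Lean document; each statement's English description precedes it below -/
import Mathlib

section
/- Let V and W be n-dimensional real vector spaces, A : V → W a linear bijection, and F a Minkowski norm on W. Define the pullback Minkowski norm A*F on V by (A*F)(ξ) = F(A(ξ)). Then the Binet–Legendre scalar products satisfy g_{A*F}(ξ,η) = g_F(A(ξ), A(η)) for all ξ, η ∈ V; equivalently, on dual spaces, g*_{A*F}(θ,θ) = g*_F(θ∘A⁻¹, θ∘A⁻¹) for every linear functional θ on V. -/
/-!
A linear isomorphism `A : V → W` maps the unit ball of `A*F` onto the unit ball of `F` and pushes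
a Haar measure of `V` forward to a Haar measure of `W`. The average `g*_F` does not depend on the
scale of the measure, so `g*_{A*F}(θ ∘ A, φ ∘ A) = g*_F(θ, φ)`. Hence the pullback of `g_F` by `A`
is dual to `g*_{A*F}`, and a scalar product dual to `g*_{A*F}` is unique because `g*_{A*F}` is
symmetric.
-/

open MeasureTheory

/-- A Minkowski norm on a real topological vector space: continuous, nonnegative,
positively homogeneous, subadditive, and vanishing only at `0`. -/
def IsMinkowskiNorm {V : Type*} [AddCommGroup V] [Module ℝ V] [TopologicalSpace V]
    (F : V → ℝ) : Prop :=
  Continuous F ∧ (∀ ξ, 0 ≤ F ξ) ∧ (∀ c : ℝ, 0 ≤ c → ∀ ξ, F (c • ξ) = c * F ξ) ∧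
    (∀ ξ η, F (ξ + η) ≤ F ξ + F η) ∧ ∀ ξ, F ξ = 0 → ξ = 0

/-- The Binet–Legendre dual scalar product of `F` (with respect to the measure `μ`,
on a space of dimension `n`), evaluated on two linear functionals:
`g*_F(θ,φ) = ((n+2)/μ(Ω)) ∫_Ω θ(η)·φ(η) dμ(η)` where `Ω = {ξ | F ξ < 1}`. -/
noncomputable def BLdual {V : Type*} [AddCommGroup V] [Module ℝ V] [MeasurableSpace V]
    (n : ℕ) (μ : Measure V) (F : V → ℝ) (θ φ : V →ₗ[ℝ] ℝ) : ℝ :=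
  ((n + 2 : ℝ) / (μ {ξ | F ξ < 1}).toReal) * ∫ η in {ξ | F ξ < 1}, θ η * φ η ∂μ

/-- `g` is the Binet–Legendre scalar product of `F`: the bilinear form on `V` dual to
the Binet–Legendre dual scalar product `g*_F` on `V*`, i.e. for every `ξ` the functional
`g(ξ,·)` is the flat `ξ^♭` characterized by `g*_F(ξ^♭, θ) = θ(ξ)` for all `θ`. -/
def IsBLMetric {V : Type*} [AddCommGroup V] [Module ℝ V] [MeasurableSpace V]
    (n : ℕ) (μ : Measure V) (F : V → ℝ) (g : V →ₗ[ℝ] V →ₗ[ℝ] ℝ) : Prop :=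
  ∀ ξ : V, ∀ θ : V →ₗ[ℝ] ℝ, BLdual n μ F (g ξ) θ = θ ξ

section Algebraic

variable {V W : Type*} [AddCommGroup V] [Module ℝ V] [MeasurableSpace V]
  [AddCommGroup W] [Module ℝ W] [MeasurableSpace W]
  {n : ℕ} {μ : Measure V} {F : V → ℝ} {g h : V →ₗ[ℝ] V →ₗ[ℝ] ℝ}

theorem BLdual_comm (θ φ : V →ₗ[ℝ] ℝ) : BLdual n μ F θ φ = BLdual n μ F φ θ := by
  simp only [BLdual, mul_comm (θ _)]

theorem BLdual_smul_measure {c : NNReal} (hc : c ≠ 0) (θ φ : V →ₗ[ℝ] ℝ) :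
    BLdual n (c • μ) F θ φ = BLdual n μ F θ φ := by
  have hc' : (c : ℝ) ≠ 0 := NNReal.coe_ne_zero.2 hc
  simp only [BLdual, Measure.restrict_smul, integral_smul_nnreal_measure, Measure.smul_apply,
    ENNReal.toReal_smul, NNReal.smul_def, smul_eq_mul]
  field_simp

theorem BLdual_map_measure {A : V →ₗ[ℝ] W} (hA : MeasurableEmbedding A) (F : W → ℝ)
    (θ φ : W →ₗ[ℝ] ℝ) :
    BLdual n (μ.map A) F θ φ = BLdual n μ (F ∘ A) (θ ∘ₗ A) (φ ∘ₗ A) := by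
  simp only [BLdual, hA.setIntegral_map, hA.map_apply, Set.preimage_ofPred_eq,
    LinearMap.comp_apply, Function.comp_apply]

theorem IsBLMetric.apply_comm (hg : IsBLMetric n μ F g) (ξ η : V) : g ξ η = g η ξ := by
  rw [← hg η (g ξ), BLdual_comm, hg]

theorem IsBLMetric.unique (hg : IsBLMetric n μ F g) (hh : IsBLMetric n μ F h) : g = h := by
  ext ξ η
  calc
    g ξ η = BLdual n μ F (h η) (g ξ) := (hh η (g ξ)).symm
    _ = BLdual n μ F (g ξ) (h η) := BLdual_comm _ _
    _ = h η ξ := hg ξ (h η)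
    _ = h ξ η := hh.apply_comm η ξ

end Algebraic

section Haar

variable {V W : Type*}
  [AddCommGroup V] [Module ℝ V] [TopologicalSpace V] [IsTopologicalAddGroup V]
  [MeasurableSpace V] [BorelSpace V]
  [AddCommGroup W] [Module ℝ W] [TopologicalSpace W] [IsTopologicalAddGroup W]
  [LocallyCompactSpace W] [SecondCountableTopology W] [MeasurableSpace W] [BorelSpace W]
  {n : ℕ} {μV : Measure V} [μV.IsAddHaarMeasure] {μW : Measure W} [μW.IsAddHaarMeasure]
  {F : W → ℝ} {gW : W →ₗ[ℝ] W →ₗ[ℝ] ℝ}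

theorem BLdual_eq_of_isAddHaarMeasure (μ ν : Measure W) [μ.IsAddHaarMeasure]
    [ν.IsAddHaarMeasure] (θ φ : W →ₗ[ℝ] ℝ) : BLdual n μ F θ φ = BLdual n ν F θ φ := by
  rw [Measure.isAddLeftInvariant_eq_smul μ ν,
    BLdual_smul_measure (Measure.addHaarScalarFactor_pos_of_isAddHaarMeasure μ ν).ne']

variable (μV μW) in
theorem BLdual_comp_continuousLinearEquiv (A : V ≃L[ℝ] W) (θ φ : W →ₗ[ℝ] ℝ) :
    BLdual n μV (F ∘ A) (θ ∘ₗ (A : V →ₗ[ℝ] W)) (φ ∘ₗ (A : V →ₗ[ℝ] W)) = BLdual n μW F θ φ := by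
  have hA : MeasurableEmbedding (A : V →ₗ[ℝ] W) := A.toHomeomorph.measurableEmbedding
  calc
    BLdual n μV (F ∘ A) (θ ∘ₗ (A : V →ₗ[ℝ] W)) (φ ∘ₗ (A : V →ₗ[ℝ] W))
      = BLdual n (μV.map A) F θ φ := (BLdual_map_measure hA F θ φ).symm
    _ = BLdual n μW F θ φ := BLdual_eq_of_isAddHaarMeasure _ _ θ φ

theorem IsBLMetric.comp_continuousLinearEquiv (hg : IsBLMetric n μW F gW) (A : V ≃L[ℝ] W) :
    IsBLMetric n μV (F ∘ A) (gW.compl₁₂ (A : V →ₗ[ℝ] W) (A : V →ₗ[ℝ] W)) := by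
  intro ξ θ
  have hθ : (θ ∘ₗ A.symm.toLinearMap) ∘ₗ (A : V →ₗ[ℝ] W) = θ := by ext; simp
  calc
    BLdual n μV (F ∘ A) (gW (A ξ) ∘ₗ (A : V →ₗ[ℝ] W)) θ
      = BLdual n μW F (gW (A ξ)) (θ ∘ₗ A.symm.toLinearMap) := by
        rw [← BLdual_comp_continuousLinearEquiv μV μW A, hθ]
    _ = θ (A.symm (A ξ)) := hg (A ξ) _
    _ = θ ξ := by rw [A.symm_apply_apply]

theorem statement1_general (A : V ≃L[ℝ] W) (hgW : IsBLMetric (Module.finrank ℝ W) μW F gW)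
    {gV : V →ₗ[ℝ] V →ₗ[ℝ] ℝ} (hgV : IsBLMetric (Module.finrank ℝ V) μV (F ∘ A) gV) (ξ η : V) :
    gV ξ η = gW (A ξ) (A η) := by
  rw [← A.toLinearEquiv.finrank_eq] at hgW
  rw [hgV.unique (hgW.comp_continuousLinearEquiv A)]
  rfl

end Haar

/-- Naturality of the Binet–Legendre metric under linear bijections: for a linear
bijection `A : V → W` and a Minkowski norm `F` on `W`, the Binet–Legendre scalar
products satisfy `g_{A*F}(ξ,η) = g_F(Aξ, Aη)`. -/
theorem statement1 (n : ℕ)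
    (V W : Type*) [NormedAddCommGroup V] [NormedSpace ℝ V] [FiniteDimensional ℝ V]
    [MeasurableSpace V] [BorelSpace V]
    [NormedAddCommGroup W] [NormedSpace ℝ W] [FiniteDimensional ℝ W]
    [MeasurableSpace W] [BorelSpace W]
    (hdimV : Module.finrank ℝ V = n) (hdimW : Module.finrank ℝ W = n)
    (μV : Measure V) [μV.IsAddHaarMeasure] (μW : Measure W) [μW.IsAddHaarMeasure]
    (F : W → ℝ) (hF : IsMinkowskiNorm F)
    (A : V ≃ₗ[ℝ] W)
    (gW : W →ₗ[ℝ] W →ₗ[ℝ] ℝ) (hgW : IsBLMetric n μW F gW)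
    (gV : V →ₗ[ℝ] V →ₗ[ℝ] ℝ) (hgV : IsBLMetric n μV (fun ξ => F (A ξ)) gV) :
    ∀ ξ η : V, gV ξ η = gW (A ξ) (A η) :=
  statement1_general A.toContinuousLinearEquiv (hdimW ▸ hgW) (hdimV ▸ hgV)
end

section
/- Liouville theorem for Minkowski spaces: let n ≥ 2 and let V₁, V₂ be n-dimensional real vector spaces equipped with Minkowski norms F₁, F₂ respectively, neither of which is Euclidean (i.e., for i = 1,2 there is no inner product g on V_i with F_i(ξ) = √g(ξ,ξ) for all ξ). Let U₁ ⊆ V₁ and U₂ ⊆ V₂ be nonempty open connected sets and f : U₁ → U₂ a C¹ diffeomorphism that is conformal, i.e., there is a function λ : U₁ → (0,∞) with F₂(df_x(ξ)) = λ(x)·F₁(ξ) for all x ∈ U₁ and ξ ∈ V₁. Then there exist a linear bijection L : V₁ → V₂ with F₂(L(ξ)) = F₁(ξ) for all ξ (so (V₁,F₁) and (V₂,F₂) are linearly isometric), a constant c > 0, and a vector b ∈ V₂, such that f(x) = c·L(x) + b for all x ∈ U₁; that is, f is the restriction of a similarity. -/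
/-- A Minkowski norm is Euclidean if it is induced by an inner product:
`F(ξ) = √g(ξ,ξ)` for some symmetric positive definite bilinear form `g`. -/
def IsEuclideanNorm {V : Type*} [AddCommGroup V] [Module ℝ V]
    (F : V → ℝ) : Prop :=
  ∃ g : V →ₗ[ℝ] V →ₗ[ℝ] ℝ, (∀ ξ η, g ξ η = g η ξ) ∧ (∀ ξ, ξ ≠ 0 → 0 < g ξ ξ) ∧
    ∀ ξ, F ξ = Real.sqrt (g ξ ξ)

/-!
A linear isometry of a Minkowski norm `F` preserves the polar body of `F`, hence the inner product
whose values are the second moments of that body. Composing with the inverse of the differential at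
one point turns a conformal map into one from `(V, F)` to itself, and the latter is conformal for
this inner product too, with the same factor `λ`. It remains to see that `λ` is locally constant.

The coordinates of an `n`-dimensional Euclidean conformal map `f` are `n`-harmonic, so by a
Caccioppoli estimate the difference quotients of `df` are bounded in `L²`. This is enough
regularity for the Koszul formula, which expresses `⟪∂_v df(ξ), df(p)⟫`, integrated against a test
function, through the weak derivative `α` of `λ²`. Let `p` support `F` at `ξ`, that is
`⟪p, η⟫ ≤ F η` for all `η`, with equality at `ξ`. Since `F` is multiplied by `λ` as well,
`⟪∂_v df(ξ), df(p)⟫ ≤ F(ξ) ∂_v λ² / 2`, and this becomes `α(ξ) ⟪v, p⟫ ≤ α(p) ⟪v, ξ⟫` for all `v`.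
If `α ≠ 0`, then `p` is proportional to `ξ`, for all `ξ` outside a hyperplane, and `F` is a multiple
of the Euclidean norm.

Once `λ` is locally constant, `f` multiplies short distances by a constant, hence is locally a
similarity, its differential is locally constant, and `f` is affine on a connected set.
-/

open MeasureTheory Filter Topology Set
open scoped RealInnerProductSpace Gradient fwdDiff

section MinkowskiNorm

variable {V W : Type*} [NormedAddCommGroup V] [NormedSpace ℝ V]
  [NormedAddCommGroup W] [NormedSpace ℝ W] {F : V → ℝ}

namespace IsMinkowskiNorm

theorem continuous (hF : IsMinkowskiNorm F) : Continuous F := hF.1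

theorem nonneg (hF : IsMinkowskiNorm F) (ξ : V) : 0 ≤ F ξ := hF.2.1 ξ

theorem map_smul (hF : IsMinkowskiNorm F) {c : ℝ} (hc : 0 ≤ c) (ξ : V) : F (c • ξ) = c * F ξ :=
  hF.2.2.1 c hc ξ

theorem add_le (hF : IsMinkowskiNorm F) (ξ η : V) : F (ξ + η) ≤ F ξ + F η := hF.2.2.2.1 ξ η

theorem eq_zero_of_map_eq_zero (hF : IsMinkowskiNorm F) {ξ : V} (h : F ξ = 0) : ξ = 0 :=
  hF.2.2.2.2 ξ h

theorem map_zero (hF : IsMinkowskiNorm F) : F 0 = 0 := by simpa using hF.map_smul le_rfl 0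

theorem pos (hF : IsMinkowskiNorm F) {ξ : V} (hξ : ξ ≠ 0) : 0 < F ξ :=
  (hF.nonneg ξ).lt_of_ne' fun h => hξ (hF.eq_zero_of_map_eq_zero h)

theorem injective_of_map_eq (hF : IsMinkowskiNorm F) {G : W → ℝ} {A : V →ₗ[ℝ] W} {a : ℝ}
    (ha : 0 < a) (hA : ∀ ξ, G (A ξ) = a * F ξ) : Function.Injective A := by
  refine (injective_iff_map_eq_zero A).2 fun ξ hξ => hF.eq_zero_of_map_eq_zero ?_
  have h : a * F ξ = a * F 0 := by rw [← hA, ← hA, hξ, _root_.map_zero]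
  rw [mul_left_cancel₀ ha.ne' h, hF.map_zero]

theorem comp_linearEquiv (hF : IsMinkowskiNorm F) (e : W ≃L[ℝ] V) : IsMinkowskiNorm (F ∘ e) :=
  ⟨hF.continuous.comp e.continuous, fun ξ => hF.nonneg (e ξ),
    fun c hc ξ => by simp [hF.map_smul hc], fun ξ η => by simpa using hF.add_le (e ξ) (e η),
    fun _ h => e.map_eq_zero_iff.1 (hF.eq_zero_of_map_eq_zero h)⟩

theorem eq_norm_mul_normalize (hF : IsMinkowskiNorm F) (ξ : V) :
    F ξ = ‖ξ‖ * F (NormedSpace.normalize ξ) := by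
  rw [← hF.map_smul (norm_nonneg ξ), NormedSpace.norm_smul_normalize]

theorem exists_norm_bounds [FiniteDimensional ℝ V] (hF : IsMinkowskiNorm F) :
    ∃ c > 0, ∃ C, ∀ ξ, c * ‖ξ‖ ≤ F ξ ∧ F ξ ≤ C * ‖ξ‖ := by
  have hS : IsCompact (Metric.sphere (0 : V) 1) := isCompact_sphere 0 1
  obtain ⟨c, hc, hcF⟩ := hS.exists_forall_le' hF.continuous.continuousOn
    fun ξ hξ => hF.pos (ne_zero_of_mem_unit_sphere ⟨ξ, hξ⟩)
  obtain ⟨C, hC⟩ := hS.bddAbove_image hF.continuous.continuousOn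
  refine ⟨c, hc, C, fun ξ => ?_⟩
  rcases eq_or_ne ξ 0 with rfl | hξ
  · simp [hF.map_zero]
  have hmem : NormedSpace.normalize ξ ∈ Metric.sphere (0 : V) 1 := by
    simpa using NormedSpace.norm_normalize hξ
  rw [hF.eq_norm_mul_normalize ξ, mul_comm c, mul_comm C]
  exact ⟨by gcongr; exact hcF _ hmem, by gcongr; exact hC (mem_image_of_mem F hmem)⟩

end IsMinkowskiNorm

theorem IsEuclideanNorm.comp_linearEquiv (hF : IsEuclideanNorm F) (e : W ≃L[ℝ] V) :
    IsEuclideanNorm (F ∘ e) := by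
  obtain ⟨g, hsymm, hpos, hg⟩ := hF
  exact ⟨g.compl₁₂ (e : W →ₗ[ℝ] V) (e : W →ₗ[ℝ] V), fun ξ η => hsymm _ _,
    fun ξ hξ => hpos _ (e.map_ne_zero_iff.2 hξ), fun ξ => hg (e ξ)⟩

/-- The polar body of `F`: the functionals bounded above by `F`. It is the unit ball of the
norm dual to `F`, described without dividing by `F`. -/
def polarBody (F : V → ℝ) : Set (StrongDual ℝ V) := {p | ∀ ξ, p ξ ≤ F ξ}

theorem isClosed_polarBody (F : V → ℝ) : IsClosed (polarBody F) := by
  simp only [polarBody, ofPred_forall]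
  exact isClosed_iInter fun ξ => isClosed_le (by fun_prop) continuous_const

namespace IsMinkowskiNorm

variable [FiniteDimensional ℝ V]

theorem isCompact_polarBody (hF : IsMinkowskiNorm F) : IsCompact (polarBody F) := by
  obtain ⟨_, -, C, hC⟩ := hF.exists_norm_bounds
  refine (isCompact_closedBall (0 : StrongDual ℝ V) (max C 0)).of_isClosed_subset
    (isClosed_polarBody F) fun p hp => ?_
  have hle : ∀ ξ, p ξ ≤ max C 0 * ‖ξ‖ := fun ξ =>
    (hp ξ).trans ((hC ξ).2.trans (by gcongr; exact le_max_left _ _))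
  refine mem_closedBall_zero_iff.2 (p.opNorm_le_bound (le_max_right _ _) fun ξ => abs_le'.2 ?_)
  exact ⟨hle ξ, by simpa using hle (-ξ)⟩

theorem polarBody_mem_nhds_zero (hF : IsMinkowskiNorm F) :
    polarBody F ∈ 𝓝 (0 : StrongDual ℝ V) := by
  obtain ⟨c, hc, _, hcF⟩ := hF.exists_norm_bounds
  filter_upwards [Metric.closedBall_mem_nhds (0 : StrongDual ℝ V) hc] with p hp ξ
  calc p ξ ≤ ‖p‖ * ‖ξ‖ := (le_abs_self _).trans (p.le_opNorm ξ)
    _ ≤ c * ‖ξ‖ := by gcongr; simpa using hp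
    _ ≤ F ξ := (hcF ξ).1

theorem exists_mem_polarBody_apply_eq (hF : IsMinkowskiNorm F) (ξ : V) :
    ∃ p ∈ polarBody F, p ξ = F ξ := by
  rcases eq_or_ne ξ 0 with rfl | hξ
  · exact ⟨0, fun η => hF.nonneg η, by simp [hF.map_zero]⟩
  obtain ⟨g, hgξ, hgF⟩ := exists_extension_of_le_sublinear
    (LinearPMap.mkSpanSingleton (σ := RingHom.id ℝ) ξ (F ξ) hξ) F
    (fun c hc => hF.map_smul hc.le) hF.add_le (by
      rintro ⟨_, hx⟩
      obtain ⟨c, rfl⟩ := Submodule.mem_span_singleton.1 hx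
      rw [show LinearPMap.mkSpanSingleton ξ (F ξ) hξ ⟨c • ξ, hx⟩ = c * F ξ from
        LinearPMap.mkSpanSingleton'_apply ..]
      rcases le_total 0 c with hc | hc
      · exact (hF.map_smul hc ξ).ge
      · exact (mul_nonpos_of_nonpos_of_nonneg hc (hF.nonneg ξ)).trans (hF.nonneg _))
  refine ⟨LinearMap.toContinuousLinearMap g, hgF, ?_⟩
  simpa using (hgξ ⟨ξ, Submodule.mem_span_singleton_self ξ⟩).trans
    (LinearPMap.mkSpanSingleton_apply ..)

end IsMinkowskiNorm

end MinkowskiNorm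

section BinetLegendre

theorem measurePreserving_of_preimage_eq {X : Type*} [NormedAddCommGroup X] [NormedSpace ℝ X]
    [FiniteDimensional ℝ X] [MeasurableSpace X] [BorelSpace X] {μ : Measure X}
    [μ.IsAddHaarMeasure] {K : Set X} (hK₀ : μ K ≠ 0) (hK : μ K ≠ ⊤) {A : X ≃L[ℝ] X}
    (hA : A ⁻¹' K = K) : MeasurePreserving A μ μ := by
  have hdet : LinearMap.det (A : X →ₗ[ℝ] X) ≠ 0 := A.toLinearEquiv.isUnit_det'.ne_zero
  have hone : ENNReal.ofReal |(LinearMap.det (A : X →ₗ[ℝ] X))⁻¹| = 1 := by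
    have h := Measure.addHaar_preimage_linearMap μ hdet K
    exact (ENNReal.mul_eq_right hK₀ hK).1 (by rw [← h]; exact congrArg μ hA)
  refine ⟨A.continuous.measurable, ?_⟩
  have h := Measure.map_linearMap_addHaar_eq_smul_addHaar μ hdet
  rwa [hone, one_smul] at h

variable {V : Type*} [NormedAddCommGroup V] [NormedSpace ℝ V] [FiniteDimensional ℝ V]
  {F : V → ℝ}

/-- The Binet–Legendre form of `F`: the second moment of the polar body, a Euclidean structure
canonically attached to `F`. The choice of Haar measure is immaterial. -/
noncomputable def binetLegendreForm (F : V → ℝ) (x y : V) : ℝ :=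
  ∫ p in polarBody F, p x * p y ∂Measure.addHaar

theorem binetLegendreForm_comm (F : V → ℝ) (x y : V) :
    binetLegendreForm F x y = binetLegendreForm F y x := by
  simp only [binetLegendreForm, mul_comm]

theorem binetLegendreForm_smul_left (F : V → ℝ) (c : ℝ) (x y : V) :
    binetLegendreForm F (c • x) y = c * binetLegendreForm F x y := by
  simp only [binetLegendreForm, map_smul, smul_eq_mul, mul_assoc, integral_const_mul]

theorem binetLegendreForm_self_nonneg (F : V → ℝ) (x : V) : 0 ≤ binetLegendreForm F x x :=
  integral_nonneg fun p => mul_self_nonneg (p x)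

namespace IsMinkowskiNorm

theorem integrableOn_polarBody (hF : IsMinkowskiNorm F) (x y : V) :
    IntegrableOn (fun p : StrongDual ℝ V => p x * p y) (polarBody F) Measure.addHaar :=
  ContinuousOn.integrableOn_compact hF.isCompact_polarBody (by fun_prop)

theorem binetLegendreForm_add_left (hF : IsMinkowskiNorm F) (x y z : V) :
    binetLegendreForm F (x + y) z = binetLegendreForm F x z + binetLegendreForm F y z := by
  simp only [binetLegendreForm, map_add, add_mul]
  exact integral_add (hF.integrableOn_polarBody x z) (hF.integrableOn_polarBody y z)

theorem binetLegendreForm_self_pos (hF : IsMinkowskiNorm F) {x : V} (hx : x ≠ 0) :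
    0 < binetLegendreForm F x x := by
  rw [binetLegendreForm, setIntegral_pos_iff_support_of_nonneg_ae
    (Eventually.of_forall fun p => mul_self_nonneg _) (hF.integrableOn_polarBody x x)]
  have hopen : IsOpen {p : StrongDual ℝ V | p x ≠ 0} := isOpen_ne_fun (by fun_prop) (by fun_prop)
  obtain ⟨p₀, hp₀⟩ := SeparatingDual.exists_ne_zero (R := ℝ) hx
  have htend : Tendsto (fun t : ℝ => t • p₀) (𝓝[≠] 0) (𝓝 0) :=
    ((by fun_prop : Continuous fun t : ℝ => t • p₀).tendsto' 0 0 (zero_smul ℝ p₀)).mono_left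
      nhdsWithin_le_nhds
  obtain ⟨t, htK, ht⟩ := ((htend.eventually
    (eventually_mem_nhds_iff.2 hF.polarBody_mem_nhds_zero)).and self_mem_nhdsWithin).exists
  refine ((hopen.inter isOpen_interior).measure_pos Measure.addHaar
    ⟨t • p₀, mul_ne_zero ht hp₀, mem_interior_iff_mem_nhds.2 htK⟩).trans_le
    (measure_mono (inter_subset_inter (fun p hp => mul_self_ne_zero.2 hp) interior_subset))

theorem binetLegendreForm_map_map (hF : IsMinkowskiNorm F) {A : V ≃L[ℝ] V}
    (hA : ∀ ξ, F (A ξ) = F ξ) (x y : V) :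
    binetLegendreForm F (A x) (A y) = binetLegendreForm F x y := by
  let T : StrongDual ℝ V ≃L[ℝ] StrongDual ℝ V :=
    A.symm.arrowCongr (ContinuousLinearEquiv.refl ℝ ℝ)
  have hT : T ⁻¹' polarBody F = polarBody F := by
    ext p
    refine Iff.trans ?_ A.surjective.forall.symm
    simp [T, polarBody, hA]
  have hmp : MeasurePreserving T Measure.addHaar Measure.addHaar :=
    measurePreserving_of_preimage_eq
      (Measure.measure_pos_of_mem_nhds _ hF.polarBody_mem_nhds_zero).ne'
      hF.isCompact_polarBody.measure_lt_top.ne hT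
  have h := hmp.setIntegral_preimage_emb T.toHomeomorph.measurableEmbedding
    (fun p => p x * p y) (polarBody F)
  rw [hT] at h
  simpa [binetLegendreForm, T] using h

end IsMinkowskiNorm

theorem exists_linearEquiv_norm_eq {W : Type*} [AddCommGroup W] [Module ℝ W]
    [FiniteDimensional ℝ W] (core : InnerProductSpace.Core ℝ W) :
    ∃ Ψ : W ≃ₗ[ℝ] EuclideanSpace ℝ (Fin (Module.finrank ℝ W)),
      ∀ x, ‖Ψ x‖ = √(core.inner x x) := by
  let : NormedAddCommGroup W := core.toNormedAddCommGroup
  let : InnerProductSpace ℝ W := InnerProductSpace.ofCore core.toCore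
  refine ⟨(stdOrthonormalBasis ℝ W).repr.toLinearEquiv, fun x => ?_⟩
  exact ((stdOrthonormalBasis ℝ W).repr.norm_map x).trans (norm_eq_sqrt_real_inner x)

theorem IsMinkowskiNorm.exists_equiv_norm_map_eq (hF : IsMinkowskiNorm F) :
    ∃ Ψ : V ≃L[ℝ] EuclideanSpace ℝ (Fin (Module.finrank ℝ V)), ∀ A : V →ₗ[ℝ] V,
      (∀ ξ, F (A ξ) = F ξ) → ∀ x, ‖Ψ (A x)‖ = ‖Ψ x‖ := by
  obtain ⟨Ψ, hΨ⟩ := exists_linearEquiv_norm_eq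
    { inner := binetLegendreForm F
      conj_inner_symm := fun x y => binetLegendreForm_comm F y x
      re_inner_nonneg := binetLegendreForm_self_nonneg F
      add_left := hF.binetLegendreForm_add_left
      smul_left := fun x y c => binetLegendreForm_smul_left F c x y
      definite := fun x h => by_contra fun hx => (hF.binetLegendreForm_self_pos hx).ne' h }
  refine ⟨Ψ.toContinuousLinearEquiv, fun A hA x => ?_⟩
  have hinj : Function.Injective A := hF.injective_of_map_eq one_pos fun ξ => by simpa using hA ξ
  have h := hF.binetLegendreForm_map_map
    (A := (LinearEquiv.ofInjectiveEndo A hinj).toContinuousLinearEquiv) hA x x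
  exact (hΨ (A x)).trans ((congrArg Real.sqrt h).trans (hΨ x).symm)

end BinetLegendre

section EuclideanCharacterization

variable {E : Type*} [NormedAddCommGroup E] [InnerProductSpace ℝ E]

theorem isEuclideanNorm_of_eq_mul_norm {F : E → ℝ} {c : ℝ} (hc : 0 < c)
    (hF : ∀ ξ, F ξ = c * ‖ξ‖) : IsEuclideanNorm F := by
  refine ⟨c ^ 2 • innerₗ E, fun ξ η => by simp [real_inner_comm], fun ξ hξ => ?_, fun ξ => ?_⟩
  · have := norm_pos_iff.2 hξ
    simp only [LinearMap.smul_apply, innerₗ_apply_apply, real_inner_self_eq_norm_sq, smul_eq_mul]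
    positivity
  · simp only [LinearMap.smul_apply, innerₗ_apply_apply, real_inner_self_eq_norm_sq, smul_eq_mul]
    rw [← mul_pow, Real.sqrt_sq (by positivity), hF]

theorem eq_of_abs_sub_le_mul_norm_sub_sq (hE : 1 < Module.rank ℝ E) {F : E → ℝ} {C : ℝ}
    (hF : ∀ a b, ‖a‖ = 1 → ‖b‖ = 1 → |F a - F b| ≤ C * ‖a - b‖ ^ 2) {a b : E}
    (ha : ‖a‖ = 1) (hb : ‖b‖ = 1) : F a = F b := by
  have hderiv : ∀ ξ : E, ξ ≠ 0 → HasFDerivAt (F ∘ NormedSpace.normalize) (0 : E →L[ℝ] ℝ) ξ := by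
    intro ξ hξ
    have hdiff : DifferentiableAt ℝ (NormedSpace.normalize : E → E) ξ :=
      ((differentiableAt_id.norm ℝ hξ).inv (norm_ne_zero_iff.2 hξ)).smul differentiableAt_id
    refine (hasFDerivAt_sub_const_iff (F (NormedSpace.normalize ξ))).1
      (Asymptotics.IsBigO.hasFDerivAt (n := 2) ?_ one_lt_two)
    refine Asymptotics.IsBigO.trans ?_ (hdiff.hasFDerivAt.isBigO_sub.norm_norm.pow 2)
    refine Asymptotics.IsBigO.of_bound C ?_
    filter_upwards [isOpen_ne.mem_nhds hξ] with η hη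
    simpa using hF _ _ (NormedSpace.norm_normalize hη) (NormedSpace.norm_normalize hξ)
  have hconst : (F ∘ NormedSpace.normalize) a = (F ∘ NormedSpace.normalize) b :=
    isOpen_compl_singleton.is_const_of_fderiv_eq_zero (𝕜 := ℝ) (s := {0}ᶜ)
      (isConnected_compl_singleton_of_one_lt_rank hE 0).isPreconnected
      (fun ξ hξ => (hderiv ξ hξ).differentiableAt.differentiableWithinAt)
      (fun ξ hξ => (hderiv ξ hξ).fderiv)
      (norm_ne_zero_iff.1 (ha ▸ one_ne_zero)) (norm_ne_zero_iff.1 (hb ▸ one_ne_zero))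
  simpa [NormedSpace.normalize, ha, hb] using hconst

namespace IsMinkowskiNorm

variable [FiniteDimensional ℝ E] {F : E → ℝ}

theorem exists_inner_le_inner_eq (hF : IsMinkowskiNorm F) (ξ : E) :
    ∃ p : E, (∀ η, ⟪p, η⟫ ≤ F η) ∧ ⟪p, ξ⟫ = F ξ := by
  obtain ⟨p, hp, hpξ⟩ := hF.exists_mem_polarBody_apply_eq ξ
  exact ⟨(InnerProductSpace.toDual ℝ E).symm p, fun η => by simpa using hp η, by simpa using hpξ⟩

theorem isEuclideanNorm_of_mul_inner_le (hF : IsMinkowskiNorm F) (hE : 1 < Module.rank ℝ E)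
    (h : ∀ ξ η, F ξ * ⟪ξ, η⟫ ≤ F η * ‖ξ‖ ^ 2) : IsEuclideanNorm F := by
  obtain ⟨_, -, C, hC⟩ := hF.exists_norm_bounds
  have hle : ∀ a b : E, ‖a‖ = 1 → ‖b‖ = 1 → F a - F b ≤ C / 2 * ‖a - b‖ ^ 2 := by
    intro a b ha hb
    have hinner : ⟪a, b⟫ = 1 - ‖a - b‖ ^ 2 / 2 := by
      rw [norm_sub_sq_real, ha, hb]
      ring
    have hab := h a b
    have hCa := (hC a).2
    rw [ha] at hab hCa
    rw [hinner] at hab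
    nlinarith [mul_le_mul_of_nonneg_right hCa (sq_nonneg ‖a - b‖)]
  have hconst : ∀ {a b : E}, ‖a‖ = 1 → ‖b‖ = 1 → F a = F b :=
    eq_of_abs_sub_le_mul_norm_sub_sq hE fun a b ha hb =>
      abs_sub_le_iff.2 ⟨hle a b ha hb, norm_sub_rev a b ▸ hle b a hb ha⟩
  have : Nontrivial E := rank_pos_iff_nontrivial.1 (one_pos.trans hE)
  obtain ⟨e, he⟩ := exists_norm_eq E zero_le_one
  refine isEuclideanNorm_of_eq_mul_norm (hF.pos (norm_ne_zero_iff.1 (he ▸ one_ne_zero))) fun ξ => ?_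
  rcases eq_or_ne ξ 0 with rfl | hξ
  · simp [hF.map_zero]
  · rw [hF.eq_norm_mul_normalize, hconst (NormedSpace.norm_normalize hξ) he, mul_comm]

theorem eq_zero_of_not_isEuclideanNorm (hF : IsMinkowskiNorm F) (hne : ¬ IsEuclideanNorm F)
    (hE : 1 < Module.rank ℝ E) (α : StrongDual ℝ E)
    (h : ∀ ξ p : E, (∀ η, ⟪p, η⟫ ≤ F η) → ⟪p, ξ⟫ = F ξ → ∀ v, α ξ * ⟪v, p⟫ ≤ α p * ⟪v, ξ⟫) :
    α = 0 := by
  by_contra hα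
  refine hne (hF.isEuclideanNorm_of_mul_inner_le hE fun ξ η => ?_)
  have hoff : ∀ ξ, α ξ ≠ 0 → F ξ * ⟪ξ, η⟫ ≤ F η * ‖ξ‖ ^ 2 := by
    intro ξ hξ
    obtain ⟨p, hp, hpξ⟩ := hF.exists_inner_le_inner_eq ξ
    have hparallel : p = (α p / α ξ) • ξ := by
      have hle : ⟪α ξ • p - α p • ξ, α ξ • p - α p • ξ⟫ ≤ 0 := by
        have := h ξ p hp hpξ (α ξ • p - α p • ξ)
        rw [inner_sub_right (α ξ • p - α p • ξ), real_inner_smul_right, real_inner_smul_right]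
        exact sub_nonpos.2 this
      have hzero := sub_eq_zero.1 (real_inner_self_nonpos.1 hle)
      rw [div_eq_inv_mul, mul_smul, ← hzero, inv_smul_smul₀ hξ]
    have hη := hp η
    rw [← hpξ]
    rw [hparallel, real_inner_smul_left] at hη ⊢
    rw [real_inner_self_eq_norm_sq]
    nlinarith [mul_le_mul_of_nonneg_right hη (sq_nonneg ‖ξ‖)]
  have hclosed : IsClosed {ξ : E | F ξ * ⟪ξ, η⟫ ≤ F η * ‖ξ‖ ^ 2} := by
    have := hF.continuous
    exact isClosed_le (by fun_prop) (by fun_prop)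
  have hdense : Dense {ξ : E | α ξ ≠ 0} :=
    (dense_compl_singleton 0).preimage (α.isOpenMap_of_ne_zero hα)
  exact closure_minimal hoff hclosed (hdense ξ)

end IsMinkowskiNorm

end EuclideanCharacterization

section ForwardDifferences

variable {E : Type*} [NormedAddCommGroup E] {W : Type*} [NormedAddCommGroup W]

theorem continuous_fwdDiff {g : E → W} (hg : Continuous g) (w : E) : Continuous (Δ_[w] g) :=
  (hg.comp (continuous_add_const w)).sub hg

theorem fwdDiff_mul_eq (w : E) (f g : E → ℝ) (x : E) :
    Δ_[w] f x * g x + Δ_[w] g x * f x = Δ_[w] (f * g) x - Δ_[w] f x * Δ_[w] g x := by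
  simp only [fwdDiff, Pi.mul_apply]
  ring

variable [MeasureSpace E]

theorem integrable_mul_of_hasCompactSupport [OpensMeasurableSpace E]
    [IsFiniteMeasureOnCompacts (volume : Measure E)] {φ g : E → ℝ} (hφ : Continuous φ)
    (hφs : HasCompactSupport φ) (hg : Continuous g) : Integrable fun x => φ x * g x :=
  (hφ.mul hg).integrable_of_hasCompactSupport hφs.mul_right

variable [BorelSpace E]

theorem integral_mul_fwdDiff [(volume : Measure E).IsAddHaarMeasure] {φ g : E → ℝ}
    (hφ : Continuous φ) (hφs : HasCompactSupport φ) (hg : Continuous g) (w : E) :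
    ∫ x, φ x * Δ_[w] g x = ∫ x, Δ_[-w] φ x * g x := by
  have hshift : ∫ x, φ (x + -w) * g x = ∫ x, φ x * g (x + w) := by
    rw [← integral_add_right_eq_self _ w]
    simp only [add_neg_cancel_right]
  simp only [fwdDiff, mul_sub, sub_mul]
  rw [integral_sub (integrable_mul_of_hasCompactSupport hφ hφs (by fun_prop))
    (integrable_mul_of_hasCompactSupport hφ hφs hg), integral_sub
    (integrable_mul_of_hasCompactSupport (φ := fun x => φ (x + -w)) (by fun_prop)
      (hφs.comp_homeomorph (Homeomorph.addRight (-w))) hg)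
    (integrable_mul_of_hasCompactSupport hφ hφs hg), hshift]

variable [NormedSpace ℝ E] [FiniteDimensional ℝ E] [(volume : Measure E).IsAddHaarMeasure]

theorem tendsto_inv_mul_integral_fwdDiff_mul {φ g : E → ℝ} (hφ : ContDiff ℝ 1 φ)
    (hφs : HasCompactSupport φ) (hg : Continuous g) (v : E) :
    Tendsto (fun h : ℝ => h⁻¹ * ∫ x, Δ_[h • v] φ x * g x) (𝓝[>] 0)
      (𝓝 (∫ x, fderiv ℝ φ x v * g x)) := by
  obtain ⟨C, hC⟩ := hφ.lipschitzWith_of_hasCompactSupport hφs one_ne_zero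
  have hlim := hC.integral_inv_smul_sub_mul_tendsto_integral_lineDeriv_mul' (μ := volume) hφs hg v
  simp only [(hφ.differentiable one_ne_zero _).lineDeriv_eq_fderiv] at hlim
  refine hlim.congr fun h => ?_
  simp only [fwdDiff, smul_eq_mul, mul_assoc, integral_const_mul]

theorem tendsto_inv_mul_integral_mul_fwdDiff {φ g : E → ℝ} (hφ : ContDiff ℝ 1 φ)
    (hφs : HasCompactSupport φ) (hg : Continuous g) (v : E) :
    Tendsto (fun h : ℝ => h⁻¹ * ∫ x, φ x * Δ_[h • v] g x) (𝓝[>] 0)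
      (𝓝 (-∫ x, fderiv ℝ φ x v * g x)) := by
  have hlim := tendsto_inv_mul_integral_fwdDiff_mul hφ hφs hg (-v)
  simp only [map_neg, neg_mul, integral_neg, smul_neg] at hlim
  refine hlim.congr fun h => ?_
  rw [integral_mul_fwdDiff hφ.continuous hφs hg]

theorem integral_mul_fderiv_eq_neg_of_hasCompactSupport {φ g : E → ℝ} (hφ : ContDiff ℝ 1 φ)
    (hφs : HasCompactSupport φ) (hg : ContDiff ℝ 1 g) (v : E) :
    ∫ x, φ x * fderiv ℝ g x v = -∫ x, fderiv ℝ φ x v * g x :=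
  integral_mul_fderiv_eq_neg_fderiv_mul_of_integrable
    (integrable_mul_of_hasCompactSupport
      ((hφ.continuous_fderiv one_ne_zero).clm_apply continuous_const)
      (hφs.fderiv_apply ℝ v) hg.continuous)
    (integrable_mul_of_hasCompactSupport hφ.continuous hφs
      ((hg.continuous_fderiv one_ne_zero).clm_apply continuous_const))
    (integrable_mul_of_hasCompactSupport hφ.continuous hφs hg.continuous)
    (fun x _ => hφ.differentiable one_ne_zero x) (fun x _ => hg.differentiable one_ne_zero x)

theorem tendsto_inv_mul_integral_mul_fwdDiff_fderiv {φ u : E → ℝ} (hφ : ContDiff ℝ 1 φ)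
    (hφs : HasCompactSupport φ) (hu : ContDiff ℝ 1 u) (hus : HasCompactSupport u) (v w : E) :
    Tendsto (fun h : ℝ => h⁻¹ * ∫ x, φ x * Δ_[h • v] (fun y => fderiv ℝ u y w) x) (𝓝[>] 0)
      (𝓝 (-∫ x, fderiv ℝ φ x w * fderiv ℝ u x v)) := by
  have hlim := (tendsto_inv_mul_integral_fwdDiff_mul hu hus (g := fun x => fderiv ℝ φ x w)
    ((hφ.continuous_fderiv one_ne_zero).clm_apply continuous_const) v).neg
  simp only [mul_comm (fderiv ℝ u _ v)] at hlim
  refine hlim.congr fun h => ?_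
  have hfderiv : ∀ x, Δ_[h • v] (fun y => fderiv ℝ u y w) x = fderiv ℝ (Δ_[h • v] u) x w := by
    intro x
    have hdiff := hu.differentiable one_ne_zero
    change _ = fderiv ℝ (fun y => u (y + h • v) - u y) x w
    rw [fderiv_fun_sub ((differentiableAt_comp_add_right _).2 (hdiff _)) (hdiff _),
      fderiv_comp_add_right]
    rfl
  have hΔ : ContDiff ℝ 1 (Δ_[h • v] u) := (hu.comp (contDiff_id.add contDiff_const)).sub hu
  simp only [hfderiv]
  rw [integral_mul_fderiv_eq_neg_of_hasCompactSupport hφ hφs hΔ, mul_neg]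
  simp only [mul_comm]

theorem tendsto_inv_mul_integral_mul_fwdDiff_fderiv_sub_swap {φ u : E → ℝ}
    (hφ : ContDiff ℝ 1 φ) (hφs : HasCompactSupport φ) (hu : ContDiff ℝ 1 u)
    (hus : HasCompactSupport u) (v w : E) :
    Tendsto (fun h : ℝ => h⁻¹ * (∫ x, φ x * Δ_[h • v] (fun y => fderiv ℝ u y w) x) -
      h⁻¹ * ∫ x, φ x * Δ_[h • w] (fun y => fderiv ℝ u y v) x) (𝓝[>] 0) (𝓝 0) := by
  have hcont : Continuous fun y => fderiv ℝ u y v :=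
    (hu.continuous_fderiv one_ne_zero).clm_apply continuous_const
  simpa using (tendsto_inv_mul_integral_mul_fwdDiff_fderiv hφ hφs hu hus v w).sub
    (tendsto_inv_mul_integral_mul_fwdDiff hφ hφs hcont w)

end ForwardDifferences

section L2BoundedSlopes

variable {E : Type*} [NormedAddCommGroup E] [NormedSpace ℝ E] [MeasureSpace E]
  {W : Type*} [NormedAddCommGroup W]

/-- The difference quotients of `X` stay bounded in `L²` with weight `φ`, that is, `X` belongs
locally to the Sobolev space `W^{1,2}` where `φ` is positive. -/
def HasL2BoundedSlopes (φ : E → ℝ) (X : E → W) : Prop :=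
  ∀ v, (fun h : ℝ => ∫ x, φ x * ‖Δ_[h • v] X x‖ ^ 2) =O[𝓝[>] 0] fun h => h ^ 2

variable [BorelSpace E] {φ : E → ℝ}

section FiniteMeasureOnCompacts

variable [IsFiniteMeasureOnCompacts (volume : Measure E)]

theorem HasL2BoundedSlopes.clm_apply [NormedSpace ℝ W] {X : E → E →L[ℝ] W}
    (hX : HasL2BoundedSlopes φ X) (hXc : Continuous X) (hφ : Continuous φ)
    (hφs : HasCompactSupport φ) (hφ0 : ∀ x, 0 ≤ φ x) (w : E) :
    HasL2BoundedSlopes φ fun x => X x w := by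
  intro v
  refine Asymptotics.IsBigO.trans (Asymptotics.IsBigO.of_bound (‖w‖ ^ 2) (.of_forall fun h => ?_))
    (hX v)
  have hint : Integrable fun x => φ x * ‖Δ_[h • v] X x‖ ^ 2 :=
    integrable_mul_of_hasCompactSupport hφ hφs ((continuous_fwdDiff hXc _).norm.pow 2)
  have hint' : Integrable fun x => φ x * ‖Δ_[h • v] (fun y => X y w) x‖ ^ 2 :=
    integrable_mul_of_hasCompactSupport hφ hφs
      ((continuous_fwdDiff (hXc.clm_apply continuous_const) _).norm.pow 2)
  rw [Real.norm_of_nonneg (integral_nonneg fun x => mul_nonneg (hφ0 x) (sq_nonneg _)),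
    Real.norm_of_nonneg (integral_nonneg fun x => mul_nonneg (hφ0 x) (sq_nonneg _)),
    ← integral_const_mul]
  refine integral_mono hint' (hint.const_mul _) fun x => ?_
  have hle : ‖Δ_[h • v] (fun y => X y w) x‖ ≤ ‖Δ_[h • v] X x‖ * ‖w‖ :=
    (Δ_[h • v] X x).le_opNorm w
  calc φ x * ‖Δ_[h • v] (fun y => X y w) x‖ ^ 2
      ≤ φ x * (‖Δ_[h • v] X x‖ * ‖w‖) ^ 2 := by gcongr; exact hφ0 x
    _ = ‖w‖ ^ 2 * (φ x * ‖Δ_[h • v] X x‖ ^ 2) := by ring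

theorem HasL2BoundedSlopes.isBigO_integral_norm {X : E → W} (hX : HasL2BoundedSlopes φ X)
    (hXc : Continuous X) (hφ : Continuous φ) (hφs : HasCompactSupport φ) (hφ0 : ∀ x, 0 ≤ φ x)
    (v : E) : (fun h : ℝ => ∫ x, φ x * ‖Δ_[h • v] X x‖) =O[𝓝[>] 0] fun h => h := by
  obtain ⟨C, hC⟩ := (hX v).bound
  refine Asymptotics.IsBigO.of_bound (((∫ x, φ x) + C) / 2) ?_
  filter_upwards [hC, self_mem_nhdsWithin] with h hCh (hh : 0 < h)
  have hΔ := (continuous_fwdDiff hXc (h • v)).norm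
  have hint : Integrable fun x => φ x * ‖Δ_[h • v] X x‖ ^ 2 :=
    integrable_mul_of_hasCompactSupport hφ hφs (hΔ.pow 2)
  rw [Real.norm_of_nonneg (integral_nonneg fun x => mul_nonneg (hφ0 x) (sq_nonneg _)),
    Real.norm_of_nonneg (by positivity)] at hCh
  rw [Real.norm_of_nonneg (integral_nonneg fun x => mul_nonneg (hφ0 x) (norm_nonneg _)),
    Real.norm_of_nonneg hh.le]
  have hφi : Integrable φ := hφ.integrable_of_hasCompactSupport hφs
  have hYoung : 2 * h * ∫ x, φ x * ‖Δ_[h • v] X x‖ ≤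
      h ^ 2 * (∫ x, φ x) + ∫ x, φ x * ‖Δ_[h • v] X x‖ ^ 2 := by
    rw [← integral_const_mul, ← integral_const_mul, ← integral_add (hφi.const_mul _) hint]
    refine integral_mono ((integrable_mul_of_hasCompactSupport hφ hφs hΔ).const_mul _)
      ((hφi.const_mul _).add hint) fun x => ?_
    beta_reduce
    nlinarith [mul_nonneg (hφ0 x) (sq_nonneg (h - ‖Δ_[h • v] X x‖))]
  refine le_of_mul_le_mul_left ?_ (mul_pos two_pos hh)
  linarith

theorem HasL2BoundedSlopes.isBigO_integral_mul {X Y : E → ℝ} (hX : HasL2BoundedSlopes φ X)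
    (hY : HasL2BoundedSlopes φ Y) (hXc : Continuous X) (hYc : Continuous Y) (hφ : Continuous φ)
    (hφs : HasCompactSupport φ) (hφ0 : ∀ x, 0 ≤ φ x) (v : E) :
    (fun h : ℝ => ∫ x, φ x * (Δ_[h • v] X x * Δ_[h • v] Y x)) =O[𝓝[>] 0] fun h => h ^ 2 := by
  refine Asymptotics.IsBigO.trans (Asymptotics.IsBigO.of_bound 1 (.of_forall fun h => ?_))
    ((hX v).add (hY v))
  have hΔX := continuous_fwdDiff hXc (h • v)
  have hΔY := continuous_fwdDiff hYc (h • v)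
  have hint : ∀ {T : E → ℝ}, Continuous T → Integrable fun x => φ x * ‖T x‖ ^ 2 := fun hT =>
    integrable_mul_of_hasCompactSupport hφ hφs (hT.norm.pow 2)
  rw [← integral_add (hint hΔX) (hint hΔY), one_mul]
  refine (norm_integral_le_of_norm_le ((hint hΔX).add (hint hΔY)) (.of_forall fun x => ?_)).trans
    (le_abs_self _)
  simp only [Pi.add_apply]
  rw [norm_mul, norm_mul, Real.norm_of_nonneg (hφ0 x), ← mul_add]
  refine mul_le_mul_of_nonneg_left ?_ (hφ0 x)
  nlinarith [sq_nonneg (‖Δ_[h • v] X x‖ - ‖Δ_[h • v] Y x‖), sq_nonneg ‖Δ_[h • v] X x‖,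
    sq_nonneg ‖Δ_[h • v] Y x‖]

theorem HasL2BoundedSlopes.isBigO_integral_norm_inv_mul_sub {X Y : E → ℝ}
    (hX : HasL2BoundedSlopes φ X) (hY : HasL2BoundedSlopes φ Y) (hXc : Continuous X)
    (hYc : Continuous Y) (hφ : Continuous φ) (hφs : HasCompactSupport φ) (hφ0 : ∀ x, 0 ≤ φ x)
    (v w : E) :
    (fun h : ℝ => ∫ x, φ x * ‖h⁻¹ * (Δ_[h • v] X x - Δ_[h • w] Y x)‖) =O[𝓝[>] 0]
      fun _ => (1 : ℝ) := by
  have hO := (Asymptotics.isBigO_refl (fun h : ℝ => h⁻¹) (𝓝[>] 0)).mul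
    ((hX.isBigO_integral_norm hXc hφ hφs hφ0 v).add (hY.isBigO_integral_norm hYc hφ hφs hφ0 w))
  refine Asymptotics.IsBigO.trans (Asymptotics.IsBigO.of_bound 1 (.of_forall fun h => ?_))
    (hO.trans (Asymptotics.IsBigO.of_bound 1 (.of_forall fun h => by
      rcases eq_or_ne h 0 with rfl | hh <;> simp [*])))
  have hΔX := continuous_fwdDiff hXc (h • v)
  have hΔY := continuous_fwdDiff hYc (h • w)
  have hint : ∀ {T : E → ℝ}, Continuous T → Integrable fun x => φ x * ‖T x‖ := fun hT =>
    integrable_mul_of_hasCompactSupport hφ hφs hT.norm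
  rw [Real.norm_of_nonneg (integral_nonneg fun x => mul_nonneg (hφ0 x) (norm_nonneg _)),
    ← integral_add (hint hΔX) (hint hΔY), one_mul, norm_mul]
  refine le_trans ?_ (mul_le_mul_of_nonneg_left (Real.le_norm_self _) (norm_nonneg h⁻¹))
  rw [← integral_const_mul]
  refine integral_mono (hint (continuous_const.mul (hΔX.sub hΔY)))
    (((hint hΔX).add (hint hΔY)).const_mul _) fun x => ?_
  calc φ x * ‖h⁻¹ * (Δ_[h • v] X x - Δ_[h • w] Y x)‖
      = ‖h⁻¹‖ * (φ x * ‖Δ_[h • v] X x - Δ_[h • w] Y x‖) := by rw [norm_mul]; ring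
    _ ≤ ‖h⁻¹‖ * (φ x * (‖Δ_[h • v] X x‖ + ‖Δ_[h • w] Y x‖)) := by
        gcongr
        exacts [hφ0 x, norm_sub_le _ _]
    _ = ‖h⁻¹‖ * (φ x * ‖Δ_[h • v] X x‖ + φ x * ‖Δ_[h • w] Y x‖) := by rw [mul_add]

theorem tendsto_integral_mul_zero_of_contDiff [FiniteDimensional ℝ E] {ι : Type*} {l : Filter ι}
    {D : ι → E → ℝ}
    (hφ : Continuous φ) (hφs : HasCompactSupport φ) (hφ0 : ∀ x, 0 ≤ φ x)
    (hD : ∀ i, Continuous (D i)) (hbound : (fun i => ∫ x, φ x * ‖D i x‖) =O[l] fun _ => (1 : ℝ))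
    (hlim : ∀ Z, ContDiff ℝ 1 Z → Tendsto (fun i => ∫ x, φ x * (D i x * Z x)) l (𝓝 0))
    {Y : E → ℝ} (hY : UniformContinuous Y) :
    Tendsto (fun i => ∫ x, φ x * (D i x * Y x)) l (𝓝 0) := by
  obtain ⟨C, hC, hCb⟩ := hbound.exists_pos
  rw [Metric.tendsto_nhds]
  intro ε hε
  obtain ⟨Z, hZ, hZY⟩ := hY.exists_contDiff_dist_le (show 0 < ε / (2 * C) by positivity)
  have hZ1 : ContDiff ℝ 1 Z := hZ.of_le (by exact_mod_cast le_top)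
  filter_upwards [hCb.bound, Metric.tendsto_nhds.1 (hlim Z hZ1) (ε / 2) (by positivity)]
    with i hi hiZ
  rw [Real.norm_of_nonneg (integral_nonneg fun x => mul_nonneg (hφ0 x) (norm_nonneg _)),
    norm_one, mul_one] at hi
  have hint : ∀ {T : E → ℝ}, Continuous T → Integrable fun x => φ x * (D i x * T x) :=
    fun hT => integrable_mul_of_hasCompactSupport hφ hφs ((hD i).mul hT)
  have hclose : ‖(∫ x, φ x * (D i x * Y x)) - ∫ x, φ x * (D i x * Z x)‖ ≤ ε / 2 := by
    rw [← integral_sub (hint hY.continuous) (hint hZ1.continuous)]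
    calc ‖∫ x, (φ x * (D i x * Y x) - φ x * (D i x * Z x))‖
        ≤ ∫ x, ε / (2 * C) * (φ x * ‖D i x‖) := by
          refine norm_integral_le_of_norm_le ((integrable_mul_of_hasCompactSupport hφ hφs
            (hD i).norm).const_mul _) (.of_forall fun x => ?_)
          rw [← mul_sub, ← mul_sub, norm_mul, norm_mul, Real.norm_of_nonneg (hφ0 x), ← mul_assoc,
            mul_comm, ← dist_eq_norm, dist_comm]
          exact mul_le_mul_of_nonneg_right (hZY x).le (mul_nonneg (hφ0 x) (norm_nonneg _))
      _ ≤ ε / (2 * C) * C := by rw [integral_const_mul]; gcongr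
      _ = ε / 2 := by field_simp
  rw [dist_zero_right] at hiZ ⊢
  have := norm_sub_norm_le (∫ x, φ x * (D i x * Y x)) (∫ x, φ x * (D i x * Z x))
  linarith

end FiniteMeasureOnCompacts

variable [FiniteDimensional ℝ E] [(volume : Measure E).IsAddHaarMeasure]

theorem HasL2BoundedSlopes.tendsto_inv_mul_integral_mul_add {X Y : E → ℝ}
    (hX : HasL2BoundedSlopes φ X) (hY : HasL2BoundedSlopes φ Y) (hXc : Continuous X)
    (hYc : Continuous Y) (hφ : ContDiff ℝ 1 φ) (hφs : HasCompactSupport φ) (hφ0 : ∀ x, 0 ≤ φ x)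
    (v : E) :
    Tendsto (fun h : ℝ => h⁻¹ * (∫ x, φ x * (Δ_[h • v] X x * Y x)) +
      h⁻¹ * ∫ x, φ x * (Δ_[h • v] Y x * X x)) (𝓝[>] 0)
      (𝓝 (-∫ x, fderiv ℝ φ x v * (X x * Y x))) := by
  have hcorr : Tendsto (fun h : ℝ => h⁻¹ * ∫ x, φ x * (Δ_[h • v] X x * Δ_[h • v] Y x))
      (𝓝[>] 0) (𝓝 0) := by
    have hO := (Asymptotics.isBigO_refl (fun h : ℝ => h⁻¹) (𝓝[>] 0)).mul
      (hX.isBigO_integral_mul hY hXc hYc hφ.continuous hφs hφ0 v)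
    refine hO.trans_tendsto ?_
    have hid : Tendsto (fun h : ℝ => h) (𝓝[>] 0) (𝓝 0) := nhdsWithin_le_nhds
    refine hid.congr' ?_
    filter_upwards [self_mem_nhdsWithin] with h (hh : 0 < h)
    field_simp
  have hprod := (tendsto_inv_mul_integral_mul_fwdDiff hφ hφs (hXc.mul hYc) v).sub hcorr
  rw [sub_zero] at hprod
  refine hprod.congr fun h => ?_
  have hint : ∀ {S T : E → ℝ}, Continuous S → Continuous T →
      Integrable fun x => φ x * (S x * T x) := fun hS hT =>
    integrable_mul_of_hasCompactSupport hφ.continuous hφs (hS.mul hT)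
  have hΔX := continuous_fwdDiff hXc (h • v)
  have hΔY := continuous_fwdDiff hYc (h • v)
  rw [← mul_sub, ← mul_add, ← integral_sub (integrable_mul_of_hasCompactSupport
    hφ.continuous hφs (continuous_fwdDiff (hXc.mul hYc) _)) (hint hΔX hΔY),
    ← integral_add (hint hΔX hYc) (hint hΔY hXc)]
  simp only [← mul_sub, ← mul_add, fwdDiff_mul_eq]

theorem HasL2BoundedSlopes.tendsto_inv_mul_integral_fwdDiff_fderiv_mul_sub_swap {u Y : E → ℝ}
    (hslopes : HasL2BoundedSlopes φ (fderiv ℝ u)) (hu : ContDiff ℝ 1 u)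
    (hus : HasCompactSupport u) (hY : UniformContinuous Y) (hφ : ContDiff ℝ 1 φ)
    (hφs : HasCompactSupport φ) (hφ0 : ∀ x, 0 ≤ φ x) (v w : E) :
    Tendsto (fun h : ℝ =>
      h⁻¹ * (∫ x, φ x * (Δ_[h • v] (fun y => fderiv ℝ u y w) x * Y x)) -
      h⁻¹ * ∫ x, φ x * (Δ_[h • w] (fun y => fderiv ℝ u y v) x * Y x)) (𝓝[>] 0) (𝓝 0) := by
  have hu' := hu.continuous_fderiv one_ne_zero
  have hcont : ∀ a b : E, Continuous (Δ_[a] fun y => fderiv ℝ u y b) := fun a b =>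
    continuous_fwdDiff (hu'.clm_apply continuous_const) a
  have hint : ∀ {S T : E → ℝ}, Continuous S → Continuous T →
      Integrable fun x => φ x * (S x * T x) := fun hS hT =>
    integrable_mul_of_hasCompactSupport hφ.continuous hφs (hS.mul hT)
  let D : ℝ → E → ℝ := fun h x => h⁻¹ * (Δ_[h • v] (fun y => fderiv ℝ u y w) x -
    Δ_[h • w] (fun y => fderiv ℝ u y v) x)
  have hsplit : ∀ {Z : E → ℝ}, Continuous Z → ∀ h, ∫ x, φ x * (D h x * Z x) =
      h⁻¹ * (∫ x, φ x * (Δ_[h • v] (fun y => fderiv ℝ u y w) x * Z x)) -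
      h⁻¹ * ∫ x, φ x * (Δ_[h • w] (fun y => fderiv ℝ u y v) x * Z x) := by
    intro Z hZ h
    rw [← mul_sub, ← integral_sub (hint (hcont _ _) hZ) (hint (hcont _ _) hZ),
      ← integral_const_mul]
    congr 1 with x
    simp only [D]
    ring
  simp only [← hsplit hY.continuous]
  refine tendsto_integral_mul_zero_of_contDiff (D := D) hφ.continuous hφs hφ0
    (fun h => continuous_const.mul ((hcont _ _).sub (hcont _ _))) ?_ (fun Z hZ => ?_) hY
  · have hslope : ∀ a, HasL2BoundedSlopes φ fun y => fderiv ℝ u y a := fun a =>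
      hslopes.clm_apply hu' hφ.continuous hφs hφ0 a
    exact (hslope w).isBigO_integral_norm_inv_mul_sub (hslope v)
      (hu'.clm_apply continuous_const) (hu'.clm_apply continuous_const) hφ.continuous hφs hφ0 v w
  · simp only [hsplit hZ.continuous]
    have := tendsto_inv_mul_integral_mul_fwdDiff_fderiv_sub_swap (hφ.mul hZ) hφs.mul_right
      hu hus v w
    simpa only [Pi.mul_apply, mul_assoc, mul_comm (Z _)] using this

/-- The second derivatives of `u` are determined, as in Koszul's formula, by metric compatibility
and symmetry, both of which hold for `γ v w z`, the weak form of `∂_v ∂_w u · ∂_z u`. -/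
theorem HasL2BoundedSlopes.tendsto_inv_mul_integral_fwdDiff_fderiv_mul_fderiv {u : E → ℝ}
    (hslopes : HasL2BoundedSlopes φ (fderiv ℝ u)) (hu : ContDiff ℝ 1 u)
    (hus : HasCompactSupport u) (hφ : ContDiff ℝ 1 φ) (hφs : HasCompactSupport φ)
    (hφ0 : ∀ x, 0 ≤ φ x) (v w z : E) :
    Tendsto (fun h : ℝ =>
      h⁻¹ * ∫ x, φ x * (Δ_[h • v] (fun y => fderiv ℝ u y w) x * fderiv ℝ u x z)) (𝓝[>] 0)
      (𝓝 (((∫ x, fderiv ℝ φ x z * (fderiv ℝ u x v * fderiv ℝ u x w)) -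
        (∫ x, fderiv ℝ φ x v * (fderiv ℝ u x w * fderiv ℝ u x z)) -
        ∫ x, fderiv ℝ φ x w * (fderiv ℝ u x v * fderiv ℝ u x z)) / 2)) := by
  have hcont : ∀ a, Continuous fun x => fderiv ℝ u x a := fun a =>
    (hu.continuous_fderiv one_ne_zero).clm_apply continuous_const
  have hslope : ∀ a, HasL2BoundedSlopes φ fun y => fderiv ℝ u y a := fun a =>
    hslopes.clm_apply (hu.continuous_fderiv one_ne_zero) hφ.continuous hφs hφ0 a
  let γ : E → E → E → ℝ → ℝ := fun a b c h =>
    h⁻¹ * ∫ x, φ x * (Δ_[h • a] (fun y => fderiv ℝ u y b) x * fderiv ℝ u x c)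
  have hmetric : ∀ a b c, Tendsto (fun h => γ a b c h + γ a c b h) (𝓝[>] 0)
      (𝓝 (-∫ x, fderiv ℝ φ x a * (fderiv ℝ u x b * fderiv ℝ u x c))) := fun a b c =>
    (hslope b).tendsto_inv_mul_integral_mul_add (hslope c) (hcont b) (hcont c) hφ hφs hφ0 a
  have hsymm : ∀ a b c, Tendsto (fun h => γ a b c h - γ b a c h) (𝓝[>] 0) (𝓝 0) :=
    fun a b c => hslopes.tendsto_inv_mul_integral_fwdDiff_fderiv_mul_sub_swap hu hus
      ((hus.fderiv_apply ℝ c).uniformContinuous_of_continuous (hcont c)) hφ hφs hφ0 a b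
  have hlim := ((((hmetric v w z).add (hmetric w v z)).sub (hmetric z v w)).add
    (((hsymm v w z).add (hsymm z v w)).add (hsymm z w v))).div_const 2
  convert hlim using 2 with h
  · simp only [γ]
    ring
  · ring

end L2BoundedSlopes

section WeaklyDivFree

theorem eventually_forall_add_smul_mem {E : Type*} [NormedAddCommGroup E] [NormedSpace ℝ E]
    {K Ω : Set E} (hK : IsCompact K) (hΩ : IsOpen Ω) (hKΩ : K ⊆ Ω) (v : E) :
    ∀ᶠ h : ℝ in 𝓝 0, ∀ x ∈ K, x + h • v ∈ Ω := by
  have hcont : Continuous fun p : ℝ × E => p.2 + p.1 • v := by fun_prop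
  exact hK.eventually_forall_of_forall_eventually fun x hx =>
    hcont.continuousAt.eventually_mem (hΩ.mem_nhds (by simpa using hKΩ hx))

theorem exists_contDiff_eq_one_nhdsSet_tsupport_subset {E : Type*} [NormedAddCommGroup E]
    [NormedSpace ℝ E] [FiniteDimensional ℝ E] {K Ω : Set E} (hK : IsCompact K) (hΩ : IsOpen Ω)
    (hKΩ : K ⊆ Ω) :
    ∃ η : E → ℝ, ContDiff ℝ 1 η ∧ HasCompactSupport η ∧ tsupport η ⊆ Ω ∧
      ∀ᶠ x in 𝓝ˢ K, η x = 1 := by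
  obtain ⟨L, hL, hKL, hLΩ⟩ := exists_compact_between hK hΩ hKΩ
  obtain ⟨η, hη1, hη0, -⟩ := exists_contMDiffMap_one_nhds_of_subset_interior (n := 1)
    (modelWithCornersSelf ℝ E) hK.isClosed hKL
  have hsupp : tsupport η ⊆ L :=
    closure_minimal (Function.support_subset_iff'.2 hη0) hL.isClosed
  exact ⟨η, η.contMDiff.contDiff, hL.of_isClosed_subset (isClosed_tsupport _) hsupp,
    hsupp.trans hLΩ, hη1⟩

variable {E : Type*} [NormedAddCommGroup E] [NormedSpace ℝ E]

theorem fderiv_sq_mul_fwdDiff_apply {u η : E → ℝ} (hu : Differentiable ℝ u)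
    (hη : Differentiable ℝ η) (w x z : E) :
    fderiv ℝ (fun y => η y ^ 2 * Δ_[w] u y) x z =
      η x ^ 2 * Δ_[w] (fderiv ℝ u) x z + 2 * η x * Δ_[w] u x * fderiv ℝ η x z := by
  have hΔ : HasFDerivAt (Δ_[w] u) (Δ_[w] (fderiv ℝ u) x) x :=
    ((hasFDerivAt_comp_add_right w).2 (hu (x + w)).hasFDerivAt).sub (hu x).hasFDerivAt
  have hprod := ((hη x).hasFDerivAt.pow 2).mul hΔ
  have hfun : (fun y => η y ^ 2 * Δ_[w] u y) = (fun y => η y ^ 2) * Δ_[w] u := rfl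
  rw [hfun, hprod.fderiv]
  simp only [Nat.add_one_sub_one, pow_one, nsmul_eq_mul, Nat.cast_ofNat, add_apply, smul_apply,
    smul_eq_mul]
  ring

theorem le_fderiv_sq_mul_fwdDiff_apply {u η : E → ℝ} (hu : Differentiable ℝ u)
    (hη : Differentiable ℝ η) {μ Λ : ℝ} (hμ : 0 ≤ μ) {w x z : E}
    (hzΛ : ‖z‖ ≤ Λ * ‖Δ_[w] (fderiv ℝ u) x‖)
    (hzμ : μ * ‖Δ_[w] (fderiv ℝ u) x‖ ^ 2 ≤ Δ_[w] (fderiv ℝ u) x z) :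
    μ ^ 2 * (η x ^ 2 * ‖Δ_[w] (fderiv ℝ u) x‖ ^ 2) ≤
      4 * Λ ^ 2 * (Δ_[w] u x ^ 2 * ‖fderiv ℝ η x‖ ^ 2) +
        2 * μ * fderiv ℝ (fun y => η y ^ 2 * Δ_[w] u y) x z := by
  rw [fderiv_sq_mul_fwdDiff_apply hu hη]
  set a := ‖Δ_[w] (fderiv ℝ u) x‖
  set t := Δ_[w] u x
  have hcross : |2 * μ * (2 * η x * t * fderiv ℝ η x z)| ≤
      (μ * η x * a) ^ 2 + (2 * Λ * t * ‖fderiv ℝ η x‖) ^ 2 := by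
    have hz : |fderiv ℝ η x z| ≤ ‖fderiv ℝ η x‖ * (Λ * a) :=
      ((fderiv ℝ η x).le_opNorm z).trans (by gcongr)
    calc |2 * μ * (2 * η x * t * fderiv ℝ η x z)|
        = 4 * μ * |η x| * |t| * |fderiv ℝ η x z| := by
          simp only [abs_mul, abs_two, abs_of_nonneg hμ]
          ring
      _ ≤ 4 * μ * |η x| * |t| * (‖fderiv ℝ η x‖ * (Λ * a)) := by gcongr
      _ = 2 * (μ * |η x| * a) * (2 * Λ * |t| * ‖fderiv ℝ η x‖) := by ring
      _ ≤ (μ * |η x| * a) ^ 2 + (2 * Λ * |t| * ‖fderiv ℝ η x‖) ^ 2 := two_mul_le_add_sq _ _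
      _ = (μ * η x * a) ^ 2 + (2 * Λ * t * ‖fderiv ℝ η x‖) ^ 2 := by
          simp only [mul_pow, sq_abs]
  have hmain : 2 * μ * (η x ^ 2 * (μ * a ^ 2)) ≤
      2 * μ * (η x ^ 2 * Δ_[w] (fderiv ℝ u) x z) := by gcongr
  linarith [neg_abs_le (2 * μ * (2 * η x * t * fderiv ℝ η x z))]

variable [MeasureSpace E]

theorem integral_sq_fwdDiff_mul_le {u g : E → ℝ} {C : NNReal} (hu : LipschitzWith C u)
    (hg : Integrable g) (hg0 : ∀ x, 0 ≤ g x) (h : ℝ) (v : E) :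
    ∫ x, Δ_[h • v] u x ^ 2 * g x ≤ h ^ 2 * ((C * ‖v‖) ^ 2 * ∫ x, g x) := by
  rw [← mul_assoc, ← integral_const_mul]
  refine integral_mono_of_nonneg (.of_forall fun x => mul_nonneg (sq_nonneg _) (hg0 x))
    (hg.const_mul _) (.of_forall fun x => mul_le_mul_of_nonneg_right ?_ (hg0 x))
  have hlip : |Δ_[h • v] u x| ≤ C * (|h| * ‖v‖) := by
    simpa [fwdDiff, norm_smul] using hu.norm_sub_le (x + h • v) x
  calc Δ_[h • v] u x ^ 2 = |Δ_[h • v] u x| ^ 2 := (sq_abs _).symm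
    _ ≤ (C * (|h| * ‖v‖)) ^ 2 := by gcongr
    _ = h ^ 2 * (C * ‖v‖) ^ 2 := by rw [mul_left_comm, mul_pow, sq_abs]

/-- The vector field `B` satisfies `div B = 0` on `Ω` in the sense of distributions, tested against
compactly supported `C¹` functions. -/
def IsWeaklyDivFreeOn (B : E → E) (Ω : Set E) : Prop :=
  ∀ ψ : E → ℝ, ContDiff ℝ 1 ψ → HasCompactSupport ψ → tsupport ψ ⊆ Ω →
    ∫ x, fderiv ℝ ψ x (B x) = 0

variable [BorelSpace E] [(volume : Measure E).IsAddHaarMeasure] {B : E → E} {Ω : Set E}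

theorem integrable_fderiv_apply {ψ : E → ℝ} (hψ : ContDiff ℝ 1 ψ) (hψs : HasCompactSupport ψ)
    (hB : Continuous B) : Integrable fun x => fderiv ℝ ψ x (B x) := by
  refine ((hψ.continuous_fderiv one_ne_zero).clm_apply hB).integrable_of_hasCompactSupport
    ((hψs.fderiv ℝ).mono fun x hx hzero => hx ?_)
  simp [hzero]

theorem IsWeaklyDivFreeOn.integral_fderiv_fwdDiff_eq_zero (hB : IsWeaklyDivFreeOn B Ω)
    (hBc : Continuous B) {ψ : E → ℝ} (hψ : ContDiff ℝ 1 ψ) (hψs : HasCompactSupport ψ)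
    (hψΩ : tsupport ψ ⊆ Ω) {w : E} (hw : ∀ x ∈ tsupport ψ, x + w ∈ Ω) :
    ∫ x, fderiv ℝ ψ x (Δ_[w] B x) = 0 := by
  have hshift : ∫ x, fderiv ℝ ψ x (B (x + w)) = 0 := by
    have hsupp : tsupport (fun x => ψ (x - w)) ⊆ Ω := by
      refine (tsupport_comp_subset_preimage ψ (continuous_sub_right w)).trans fun x hx => ?_
      simpa using hw _ hx
    have := hB (fun x => ψ (x - w)) (hψ.comp (contDiff_id.sub contDiff_const))
      (hψs.comp_homeomorph (Homeomorph.subRight w)) hsupp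
    rw [← integral_add_right_eq_self _ w] at this
    simpa [fderiv_comp_sub] using this
  simp only [fwdDiff, map_sub]
  rw [integral_sub (integrable_fderiv_apply hψ hψs (by fun_prop))
    (integrable_fderiv_apply hψ hψs hBc), hshift, hB ψ hψ hψs hψΩ, sub_zero]

theorem IsWeaklyDivFreeOn.integral_fderiv_sq_mul_fwdDiff_eq_zero (hB : IsWeaklyDivFreeOn B Ω)
    (hBc : Continuous B) {u η : E → ℝ} (hu : ContDiff ℝ 1 u) (hη : ContDiff ℝ 1 η)
    (hηs : HasCompactSupport η) (hηΩ : tsupport η ⊆ Ω) {w : E}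
    (hw : ∀ x ∈ tsupport η, x + w ∈ Ω) :
    Integrable (fun x => fderiv ℝ (fun y => η y ^ 2 * Δ_[w] u y) x (Δ_[w] B x)) ∧
      ∫ x, fderiv ℝ (fun y => η y ^ 2 * Δ_[w] u y) x (Δ_[w] B x) = 0 := by
  have hψ : ContDiff ℝ 1 fun y => η y ^ 2 * Δ_[w] u y :=
    (hη.pow 2).mul ((hu.comp (contDiff_id.add contDiff_const)).sub hu)
  have hψη : tsupport (fun y => η y ^ 2 * Δ_[w] u y) ⊆ tsupport η :=
    closure_mono fun x hx hzero => hx (by simp [hzero])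
  have hψs : HasCompactSupport fun y => η y ^ 2 * Δ_[w] u y :=
    hηs.isCompact.of_isClosed_subset (isClosed_tsupport _) hψη
  exact ⟨integrable_fderiv_apply hψ hψs (continuous_fwdDiff hBc w),
    hB.integral_fderiv_fwdDiff_eq_zero hBc hψ hψs (hψη.trans hηΩ) fun x hx => hw x (hψη hx)⟩

/-- Caccioppoli's argument: the equation for `Δ_w u` is tested against `η² Δ_w u`. -/
theorem IsWeaklyDivFreeOn.sq_mul_integral_sq_mul_norm_fwdDiff_sq_le (hB : IsWeaklyDivFreeOn B Ω)
    (hBc : Continuous B) {u η : E → ℝ} (hu : ContDiff ℝ 1 u) (hη : ContDiff ℝ 1 η)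
    (hηs : HasCompactSupport η) (hηΩ : tsupport η ⊆ Ω) {μ Λ : ℝ} (hμ : 0 ≤ μ)
    (hBΛ : ∀ x ∈ Ω, ∀ y ∈ Ω, ‖B x - B y‖ ≤ Λ * ‖fderiv ℝ u x - fderiv ℝ u y‖)
    (hBμ : ∀ x ∈ Ω, ∀ y ∈ Ω, μ * ‖fderiv ℝ u x - fderiv ℝ u y‖ ^ 2 ≤
      (fderiv ℝ u x - fderiv ℝ u y) (B x - B y))
    {w : E} (hw : ∀ x ∈ tsupport η, x + w ∈ Ω) :
    μ ^ 2 * ∫ x, η x ^ 2 * ‖Δ_[w] (fderiv ℝ u) x‖ ^ 2 ≤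
      4 * Λ ^ 2 * ∫ x, Δ_[w] u x ^ 2 * ‖fderiv ℝ η x‖ ^ 2 := by
  obtain ⟨hintψ, hweak⟩ :=
    hB.integral_fderiv_sq_mul_fwdDiff_eq_zero hBc hu hη hηs hηΩ hw
  have hη2s : HasCompactSupport fun x => η x ^ 2 :=
    hηs.comp_left (g := fun t : ℝ => t ^ 2) (by simp)
  have hint : Integrable fun x => η x ^ 2 * ‖Δ_[w] (fderiv ℝ u) x‖ ^ 2 :=
    integrable_mul_of_hasCompactSupport (hη.continuous.pow 2) hη2s
      ((continuous_fwdDiff (hu.continuous_fderiv one_ne_zero) w).norm.pow 2)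
  have hint' : Integrable fun x => Δ_[w] u x ^ 2 * ‖fderiv ℝ η x‖ ^ 2 := by
    simp only [mul_comm (Δ_[w] u _ ^ 2)]
    exact integrable_mul_of_hasCompactSupport ((hη.continuous_fderiv one_ne_zero).norm.pow 2)
      ((hηs.fderiv ℝ).comp_left (g := fun T => ‖T‖ ^ 2) (by simp))
      ((continuous_fwdDiff hu.continuous w).pow 2)
  have hpoint : ∀ x, μ ^ 2 * (η x ^ 2 * ‖Δ_[w] (fderiv ℝ u) x‖ ^ 2) ≤
      4 * Λ ^ 2 * (Δ_[w] u x ^ 2 * ‖fderiv ℝ η x‖ ^ 2) +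
        2 * μ * fderiv ℝ (fun y => η y ^ 2 * Δ_[w] u y) x (Δ_[w] B x) := by
    intro x
    by_cases hx : η x = 0
    · rw [fderiv_sq_mul_fwdDiff_apply (hu.differentiable one_ne_zero)
        (hη.differentiable one_ne_zero), hx]
      simp only [ne_eq, OfNat.ofNat_ne_zero, not_false_eq_true, zero_pow, zero_mul, mul_zero,
        add_zero]
      positivity
    · have hxη : x ∈ tsupport η := subset_tsupport _ hx
      exact le_fderiv_sq_mul_fwdDiff_apply (hu.differentiable one_ne_zero)
        (hη.differentiable one_ne_zero) hμ (hBΛ _ (hw x hxη) _ (hηΩ hxη))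
        (hBμ _ (hw x hxη) _ (hηΩ hxη))
  have := integral_mono (hint.const_mul _) ((hint'.const_mul _).add (hintψ.const_mul _)) hpoint
  simp only [Pi.add_apply] at this
  rwa [integral_add (hint'.const_mul _) (hintψ.const_mul _), integral_const_mul,
    integral_const_mul, integral_const_mul, hweak, mul_zero, add_zero] at this

theorem hasL2BoundedSlopes_of_eventually_integral_le {W : Type*} [NormedAddCommGroup W]
    {X : E → W} (hX : Continuous X) {φ ζ : E → ℝ} (hφ : Continuous φ) (hφs : HasCompactSupport φ)
    (hφ0 : ∀ x, 0 ≤ φ x) (hζ : Continuous ζ) (hζs : HasCompactSupport ζ) (hζ0 : ∀ x, 0 ≤ ζ x)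
    (hζ1 : ∀ x ∈ tsupport φ, ζ x = 1)
    (hbound : ∀ v, ∃ C : ℝ, ∀ᶠ h : ℝ in 𝓝 0, ∫ x, ζ x * ‖Δ_[h • v] X x‖ ^ 2 ≤ C * h ^ 2) :
    HasL2BoundedSlopes φ X := by
  obtain ⟨P, hP⟩ := hφs.exists_bound_of_continuous hφ
  have hP0 : 0 ≤ P := (norm_nonneg _).trans (hP 0)
  intro v
  obtain ⟨C, hC⟩ := hbound v
  refine Asymptotics.IsBigO.of_bound (P * C) ?_
  filter_upwards [nhdsWithin_le_nhds hC] with h hh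
  have hΔc : Continuous fun x => ‖Δ_[h • v] X x‖ ^ 2 := (continuous_fwdDiff hX _).norm.pow 2
  have hφζ : ∀ x, φ x ≤ P * ζ x := by
    intro x
    by_cases hx : φ x = 0
    · rw [hx]
      exact mul_nonneg hP0 (hζ0 x)
    · rw [hζ1 x (subset_tsupport _ hx), mul_one]
      exact (le_abs_self _).trans (hP x)
  rw [Real.norm_of_nonneg (integral_nonneg fun x => mul_nonneg (hφ0 x) (sq_nonneg _)),
    Real.norm_of_nonneg (sq_nonneg h), mul_assoc]
  calc ∫ x, φ x * ‖Δ_[h • v] X x‖ ^ 2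
      ≤ ∫ x, P * (ζ x * ‖Δ_[h • v] X x‖ ^ 2) := by
        refine integral_mono (integrable_mul_of_hasCompactSupport hφ hφs hΔc)
          ((integrable_mul_of_hasCompactSupport hζ hζs hΔc).const_mul P) fun x => ?_
        rw [← mul_assoc]
        exact mul_le_mul_of_nonneg_right (hφζ x) (sq_nonneg _)
    _ = P * ∫ x, ζ x * ‖Δ_[h • v] X x‖ ^ 2 := integral_const_mul _ _
    _ ≤ P * (C * h ^ 2) := by gcongr

theorem IsWeaklyDivFreeOn.hasL2BoundedSlopes_fderiv [FiniteDimensional ℝ E]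
    (hB : IsWeaklyDivFreeOn B Ω) (hBc : Continuous B) (hΩ : IsOpen Ω) {u : E → ℝ}
    (hu : ContDiff ℝ 1 u) (hus : HasCompactSupport u) {μ Λ : ℝ} (hμ : 0 < μ)
    (hBΛ : ∀ x ∈ Ω, ∀ y ∈ Ω, ‖B x - B y‖ ≤ Λ * ‖fderiv ℝ u x - fderiv ℝ u y‖)
    (hBμ : ∀ x ∈ Ω, ∀ y ∈ Ω, μ * ‖fderiv ℝ u x - fderiv ℝ u y‖ ^ 2 ≤
      (fderiv ℝ u x - fderiv ℝ u y) (B x - B y))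
    {φ : E → ℝ} (hφ : Continuous φ) (hφs : HasCompactSupport φ) (hφΩ : tsupport φ ⊆ Ω)
    (hφ0 : ∀ x, 0 ≤ φ x) : HasL2BoundedSlopes φ (fderiv ℝ u) := by
  obtain ⟨η, hη, hηs, hηΩ, hη1⟩ := exists_contDiff_eq_one_nhdsSet_tsupport_subset hφs hΩ hφΩ
  obtain ⟨C, hC⟩ := hu.lipschitzWith_of_hasCompactSupport hus one_ne_zero
  have hdηs : HasCompactSupport fun x => ‖fderiv ℝ η x‖ ^ 2 :=
    (hηs.fderiv ℝ).comp_left (g := fun T : StrongDual ℝ E => ‖T‖ ^ 2) (by simp)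
  have hdη : Integrable fun x => ‖fderiv ℝ η x‖ ^ 2 :=
    ((hη.continuous_fderiv one_ne_zero).norm.pow 2).integrable_of_hasCompactSupport hdηs
  refine hasL2BoundedSlopes_of_eventually_integral_le (ζ := fun x => η x ^ 2)
    (hu.continuous_fderiv one_ne_zero) hφ hφs hφ0 (hη.continuous.pow 2)
    (hηs.comp_left (g := fun t : ℝ => t ^ 2) (by simp)) (fun x => sq_nonneg _)
    (fun x hx => by rw [hη1.self_of_nhdsSet x hx, one_pow]) fun v =>
    ⟨4 * Λ ^ 2 * ((C * ‖v‖) ^ 2 * ∫ x, ‖fderiv ℝ η x‖ ^ 2) / μ ^ 2, ?_⟩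
  filter_upwards [eventually_forall_add_smul_mem hηs hΩ hηΩ v] with h hh
  have hcaccioppoli := hB.sq_mul_integral_sq_mul_norm_fwdDiff_sq_le hBc hu hη hηs hηΩ hμ.le
    hBΛ hBμ hh
  have hslope := integral_sq_fwdDiff_mul_le hC hdη (fun x => sq_nonneg _) h v
  rw [div_mul_eq_mul_div, le_div_iff₀' (by positivity)]
  calc _ ≤ _ := hcaccioppoli
    _ ≤ 4 * Λ ^ 2 * (h ^ 2 * ((C * ‖v‖) ^ 2 * ∫ x, ‖fderiv ℝ η x‖ ^ 2)) := by gcongr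
    _ = _ := by ring

end WeaklyDivFree

section PLaplace

variable {E : Type*} [NormedAddCommGroup E] [InnerProductSpace ℝ E]

theorem norm_norm_pow_smul_sub_le (k : ℕ) {M : ℝ} {a b : E} (ha : ‖a‖ ≤ M) (hb : ‖b‖ ≤ M) :
    ‖‖a‖ ^ k • a - ‖b‖ ^ k • b‖ ≤ (k + 1) * M ^ k * ‖a - b‖ := by
  have hM : 0 ≤ M := (norm_nonneg a).trans ha
  have hsplit : ‖a‖ ^ k • a - ‖b‖ ^ k • b = ‖a‖ ^ k • (a - b) + (‖a‖ ^ k - ‖b‖ ^ k) • b := by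
    rw [smul_sub, sub_smul]
    abel
  have hpow : |‖a‖ ^ k - ‖b‖ ^ k| ≤ ‖a - b‖ * k * M ^ (k - 1) := by
    refine (abs_pow_sub_pow_le ..).trans ?_
    gcongr
    · exact abs_norm_sub_norm_le a b
    · simp [ha, hb]
  have hsucc : (k : ℝ) * M ^ (k - 1) * M = k * M ^ k := by
    rcases k with _ | k
    · simp
    · simp [pow_succ, mul_assoc]
  calc ‖‖a‖ ^ k • a - ‖b‖ ^ k • b‖
      ≤ ‖a‖ ^ k * ‖a - b‖ + |‖a‖ ^ k - ‖b‖ ^ k| * ‖b‖ := by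
        rw [hsplit]
        refine (norm_add_le _ _).trans ?_
        rw [norm_smul, norm_smul, norm_pow, norm_norm, Real.norm_eq_abs]
    _ ≤ M ^ k * ‖a - b‖ + ‖a - b‖ * k * M ^ (k - 1) * M := by gcongr
    _ = (k + 1) * M ^ k * ‖a - b‖ := by linear_combination ‖a - b‖ * hsucc

theorem pow_mul_norm_sub_sq_le_inner (k : ℕ) {m : ℝ} (hm : 0 ≤ m) {a b : E} (ha : m ≤ ‖a‖)
    (hb : m ≤ ‖b‖) : m ^ k * ‖a - b‖ ^ 2 ≤ ⟪a - b, ‖a‖ ^ k • a - ‖b‖ ^ k • b⟫ := by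
  have hsplit : ⟪a - b, ‖a‖ ^ k • a - ‖b‖ ^ k • b⟫ = (‖a‖ ^ k + ‖b‖ ^ k) / 2 * ‖a - b‖ ^ 2 +
      (‖a‖ ^ k - ‖b‖ ^ k) * (‖a‖ ^ 2 - ‖b‖ ^ 2) / 2 := by
    rw [norm_sub_sq_real]
    simp only [inner_sub_left, inner_sub_right, real_inner_smul_right,
      real_inner_self_eq_norm_sq]
    rw [real_inner_comm a b]
    ring
  have hmono : 0 ≤ (‖a‖ ^ k - ‖b‖ ^ k) * (‖a‖ ^ 2 - ‖b‖ ^ 2) := by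
    rcases le_total ‖a‖ ‖b‖ with h | h
    · exact mul_nonneg_of_nonpos_of_nonpos (sub_nonpos.2 (by gcongr)) (sub_nonpos.2 (by gcongr))
    · exact mul_nonneg (sub_nonneg.2 (by gcongr)) (sub_nonneg.2 (by gcongr))
  have hmean : m ^ k ≤ (‖a‖ ^ k + ‖b‖ ^ k) / 2 := by
    have : m ^ k ≤ ‖a‖ ^ k := by gcongr
    have : m ^ k ≤ ‖b‖ ^ k := by gcongr
    linarith
  rw [hsplit]
  linarith [mul_le_mul_of_nonneg_right hmean (sq_nonneg ‖a - b‖)]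

variable [FiniteDimensional ℝ E] [MeasureSpace E] [BorelSpace E]
  [(volume : Measure E).IsAddHaarMeasure]

theorem hasL2BoundedSlopes_fderiv_of_isWeaklyDivFreeOn_norm_pow_smul_gradient {Ω : Set E}
    (hΩ : IsOpen Ω) {u : E → ℝ} (hu : ContDiff ℝ 1 u) (hus : HasCompactSupport u) {k : ℕ}
    (hdiv : IsWeaklyDivFreeOn (fun x => ‖∇ u x‖ ^ k • ∇ u x) Ω) {m : ℝ} (hm : 0 < m)
    (hum : ∀ x ∈ Ω, m ≤ ‖∇ u x‖) {φ : E → ℝ} (hφ : Continuous φ) (hφs : HasCompactSupport φ)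
    (hφΩ : tsupport φ ⊆ Ω) (hφ0 : ∀ x, 0 ≤ φ x) : HasL2BoundedSlopes φ (fderiv ℝ u) := by
  have hgrad : Continuous (∇ u) :=
    (InnerProductSpace.toDual ℝ E).symm.continuous.comp (hu.continuous_fderiv one_ne_zero)
  have happly : ∀ x y z, (fderiv ℝ u x - fderiv ℝ u y) z = ⟪∇ u x - ∇ u y, z⟫ := by
    intro x y z
    rw [inner_sub_left, inner_gradient_left, inner_gradient_left, sub_apply]
  have hnorm : ∀ x y, ‖fderiv ℝ u x - fderiv ℝ u y‖ = ‖∇ u x - ∇ u y‖ := by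
    intro x y
    rw [gradient, gradient, ← map_sub, LinearIsometryEquiv.norm_map]
  obtain ⟨M, hM⟩ := (hus.fderiv ℝ).exists_bound_of_continuous
    (hu.continuous_fderiv one_ne_zero)
  have hM' : ∀ x, ‖∇ u x‖ ≤ M := fun x => by
    rw [gradient, LinearIsometryEquiv.norm_map]
    exact hM x
  refine hdiv.hasL2BoundedSlopes_fderiv ((hgrad.norm.pow k).smul hgrad) hΩ hu hus (pow_pos hm k)
    (Λ := (k + 1) * M ^ k) (fun x _ y _ => ?_) (fun x hx y hy => ?_) hφ hφs hφΩ hφ0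
  · rw [hnorm]
    exact norm_norm_pow_smul_sub_le k (hM' x) (hM' y)
  · rw [hnorm, happly]
    exact pow_mul_norm_sub_sq_le_inner k hm.le (hum x hx) (hum y hy)

end PLaplace

section PiolaIdentity

variable {E : Type*} [NormedAddCommGroup E] [NormedSpace ℝ E]

theorem exists_contDiff_eqOn_comp_symm {G : Type*} [NormedAddCommGroup G] [NormedSpace ℝ G]
    (e : OpenPartialHomeomorph E G) (he : ContDiffOn ℝ 1 e.symm e.target) {ψ : E → ℝ}
    (hψ : ContDiff ℝ 1 ψ) (hψs : HasCompactSupport ψ) (hψe : tsupport ψ ⊆ e.source) :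
    ∃ χ : G → ℝ, ContDiff ℝ 1 χ ∧ HasCompactSupport χ ∧ tsupport χ ⊆ e.target ∧
      EqOn χ (ψ ∘ e.symm) e.target := by
  classical
  set χ : G → ℝ := e.target.indicator (ψ ∘ e.symm)
  have hχe : EqOn χ (ψ ∘ e.symm) e.target := fun y hy => indicator_of_mem hy _
  have hK : IsCompact (e '' tsupport ψ) :=
    hψs.isCompact.image_of_continuousOn (e.continuousOn.mono hψe)
  have hKe : e '' tsupport ψ ⊆ e.target := (e.mapsTo.mono_left hψe).image_subset
  have hχK : ∀ y ∉ e '' tsupport ψ, χ y = 0 := by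
    intro y hy
    by_cases hye : y ∈ e.target
    · rw [hχe hye, Function.comp_apply]
      exact image_eq_zero_of_notMem_tsupport fun h => hy ⟨_, h, e.right_inv hye⟩
    · exact indicator_of_notMem hye _
  have hχsupp : tsupport χ ⊆ e '' tsupport ψ :=
    closure_minimal (Function.support_subset_iff'.2 hχK) hK.isClosed
  refine ⟨χ, contDiff_iff_contDiffAt.2 fun y => ?_,
    hK.of_isClosed_subset (isClosed_tsupport _) hχsupp, hχsupp.trans hKe, hχe⟩
  by_cases hy : y ∈ e.target
  · have hnhds := e.open_target.mem_nhds hy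
    exact (hψ.contDiffAt.comp y (he.contDiffAt hnhds)).congr_of_eventuallyEq
      (hχe.eventuallyEq_of_mem hnhds)
  · refine (contDiffAt_const (c := (0 : ℝ))).congr_of_eventuallyEq ?_
    filter_upwards [hK.isClosed.isOpen_compl.mem_nhds fun h => hy (hKe h)] using hχK

variable [FiniteDimensional ℝ E] [MeasureSpace E] [BorelSpace E]
  [(volume : Measure E).IsAddHaarMeasure]

theorem integral_fderiv_apply_eq_zero {ψ : E → ℝ} (hψ : ContDiff ℝ 1 ψ)
    (hψs : HasCompactSupport ψ) (v : E) : ∫ x, fderiv ℝ ψ x v = 0 := by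
  simpa using integral_mul_fderiv_eq_neg_of_hasCompactSupport hψ hψs
    (contDiff_const (c := (1 : ℝ))) v

theorem isWeaklyDivFreeOn_abs_det_smul_fderiv_symm (e : OpenPartialHomeomorph E E)
    (he : ContDiffOn ℝ 1 e e.source) (he' : ContDiffOn ℝ 1 e.symm e.target) (v : E) :
    IsWeaklyDivFreeOn (fun x => |(fderiv ℝ e x).det| • fderiv ℝ e.symm (e x) v) e.source := by
  intro ψ hψ hψs hψe
  obtain ⟨χ, hχ, hχs, hχe, hχψ⟩ := exists_contDiff_eqOn_comp_symm e he' hψ hψs hψe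
  have hχ0 : ∫ y in e.target, fderiv ℝ χ y v = 0 := by
    rw [setIntegral_eq_integral_of_forall_compl_eq_zero, integral_fderiv_apply_eq_zero hχ hχs]
    intro y hy
    rw [fderiv_of_notMem_tsupport ℝ fun h => hy (hχe h), zero_apply]
  have hderiv : ∀ x ∈ e.source, HasFDerivWithinAt e (fderiv ℝ e x) e.source x := fun x hx =>
    (((he.contDiffAt (e.open_source.mem_nhds hx)).differentiableAt
      one_ne_zero).hasFDerivAt).hasFDerivWithinAt
  rw [← e.image_source_eq_target, integral_image_eq_integral_abs_det_fderiv_smul volume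
    e.open_source.measurableSet hderiv e.injOn] at hχ0
  rw [← setIntegral_eq_integral_of_forall_compl_eq_zero (s := e.source), ← hχ0]
  · refine setIntegral_congr_fun e.open_source.measurableSet fun x hx => ?_
    have hy := e.open_target.mem_nhds (e.map_source hx)
    have hψ' : HasFDerivAt ψ (fderiv ℝ ψ x) (e.symm (e x)) := by
      rw [e.left_inv hx]
      exact (hψ.differentiable one_ne_zero x).hasFDerivAt
    have hχ' : fderiv ℝ χ (e x) = fderiv ℝ ψ x ∘L fderiv ℝ e.symm (e x) := by
      rw [(hχψ.eventuallyEq_of_mem hy).fderiv_eq]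
      exact (hψ'.comp _
        ((he'.contDiffAt hy).differentiableAt one_ne_zero).hasFDerivAt).fderiv
    simp only [hχ', map_smul, ContinuousLinearMap.comp_apply]
  · intro x hx
    rw [fderiv_of_notMem_tsupport ℝ fun h => hx (hψe h), zero_apply]

end PiolaIdentity

section NormScalingMaps

variable {E : Type*} [NormedAddCommGroup E] [InnerProductSpace ℝ E]

theorem inner_map_map_of_norm_map {W : Type*} [NormedAddCommGroup W] [InnerProductSpace ℝ W]
    {A : E →L[ℝ] W} {a : ℝ} (hA : ∀ v, ‖A v‖ = a * ‖v‖) (v w : E) :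
    ⟪A v, A w⟫ = a ^ 2 * ⟪v, w⟫ := by
  simp only [real_inner_eq_norm_add_mul_self_sub_norm_mul_self_sub_norm_mul_self_div_two,
    ← map_add, hA]
  ring

variable [FiniteDimensional ℝ E] {A : E →L[ℝ] E} {a : ℝ}

theorem surjective_of_norm_map (ha : 0 < a) (hA : ∀ v, ‖A v‖ = a * ‖v‖) :
    Function.Surjective A := by
  refine LinearMap.injective_iff_surjective.1 ((injective_iff_map_eq_zero A).2 fun v hv => ?_)
  have := hA v
  rw [hv, norm_zero, eq_comm, mul_eq_zero] at this
  exact norm_eq_zero.1 (this.resolve_left ha.ne')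

theorem map_adjoint_of_norm_map (ha : 0 < a) (hA : ∀ v, ‖A v‖ = a * ‖v‖) (v : E) :
    A (A.adjoint v) = a ^ 2 • v := by
  obtain ⟨w, rfl⟩ := surjective_of_norm_map ha hA v
  have hw : A.adjoint (A w) = a ^ 2 • w := ext_inner_right ℝ fun z => by
    rw [ContinuousLinearMap.adjoint_inner_left, inner_map_map_of_norm_map hA,
      real_inner_smul_left]
  rw [hw, map_smul]

theorem norm_adjoint_of_norm_map (ha : 0 < a) (hA : ∀ v, ‖A v‖ = a * ‖v‖) (v : E) :
    ‖A.adjoint v‖ = a * ‖v‖ := by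
  have := hA (A.adjoint v)
  rw [map_adjoint_of_norm_map ha hA, norm_smul, Real.norm_of_nonneg (sq_nonneg a), sq,
    mul_assoc] at this
  exact (mul_left_cancel₀ ha.ne' this).symm

theorem abs_det_of_norm_map (ha : 0 < a) (hA : ∀ v, ‖A v‖ = a * ‖v‖) :
    |A.det| = a ^ Module.finrank ℝ E := by
  let I : E →ₗᵢ[ℝ] E := ⟨a⁻¹ • A.toLinearMap, fun v => by
    rw [LinearMap.smul_apply, norm_smul, norm_inv, Real.norm_of_nonneg ha.le,
      ContinuousLinearMap.coe_coe, hA, inv_mul_cancel_left₀ ha.ne']⟩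
  have hAI : A.toLinearMap = a • I.toLinearMap := (smul_inv_smul₀ ha.ne' _).symm
  rw [ContinuousLinearMap.det, ← LinearMap.normDet_eq_abs_det, hAI, LinearMap.normDet_smul,
    I.normDet_eq_one, mul_one, Real.norm_of_nonneg ha.le]

end NormScalingMaps

section ConformalMaps

/-- `f` is conformal on `U` with conformal factor `l`, with respect to the (possibly asymmetric)
norms `F` and `G`. -/
def IsConformalOn {V W : Type*} [NormedAddCommGroup V] [NormedSpace ℝ V] [NormedAddCommGroup W]
    [NormedSpace ℝ W] (F : V → ℝ) (G : W → ℝ) (f : V → W) (l : V → ℝ) (U : Set V) : Prop :=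
  ∀ x ∈ U, 0 < l x ∧ ∀ ξ, G (fderiv ℝ f x ξ) = l x * F ξ

variable {E : Type*} [NormedAddCommGroup E] [InnerProductSpace ℝ E] {f : E → E} {l : E → ℝ}
  {U : Set E}

theorem IsConformalOn.inner_fderiv (hf : IsConformalOn norm norm f l U) {x : E} (hx : x ∈ U)
    (v w : E) : ⟪fderiv ℝ f x v, fderiv ℝ f x w⟫ = l x ^ 2 * ⟪v, w⟫ :=
  inner_map_map_of_norm_map (hf x hx).2 v w

variable [FiniteDimensional ℝ E]

theorem gradient_inner_left_eq_adjoint {x : E} (hf : DifferentiableAt ℝ f x) (v : E) :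
    ∇ (fun y => ⟪v, f y⟫) x = (fderiv ℝ f x).adjoint v :=
  ext_inner_right ℝ fun z => by
    rw [inner_gradient_left, ContinuousLinearMap.adjoint_inner_left,
      fderiv_inner_apply ℝ (differentiableAt_const v) hf]
    simp

theorem IsConformalOn.norm_gradient_inner_left (hf : IsConformalOn norm norm f l U) {x : E}
    (hx : x ∈ U) (hfx : DifferentiableAt ℝ f x) (v : E) :
    ‖∇ (fun y => ⟪v, f y⟫) x‖ = l x * ‖v‖ := by
  rw [gradient_inner_left_eq_adjoint hfx, norm_adjoint_of_norm_map (hf x hx).1 (hf x hx).2]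

theorem IsConformalOn.exists_openPartialHomeomorph (hf : IsConformalOn norm norm f l U)
    (hfc : ContDiffOn ℝ 1 f U) (hU : IsOpen U) {x₀ : E} (hx₀ : x₀ ∈ U) :
    ∃ e : OpenPartialHomeomorph E E, ⇑e = f ∧ x₀ ∈ e.source ∧ e.source ⊆ U ∧
      ContDiffOn ℝ 1 e.symm e.target := by
  have hfat : ∀ x ∈ U, ContDiffAt ℝ 1 f x := fun x hx => hfc.contDiffAt (hU.mem_nhds hx)
  have hequiv : ∀ x ∈ U, ∃ D : E ≃L[ℝ] E, HasFDerivAt f (D : E →L[ℝ] E) x := by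
    intro x hx
    have hsurj := surjective_of_norm_map (hf x hx).1 (hf x hx).2
    refine ⟨(LinearEquiv.ofBijective (fderiv ℝ f x).toLinearMap
      ⟨LinearMap.injective_iff_surjective.2 hsurj, hsurj⟩).toContinuousLinearEquiv, ?_⟩
    exact ((hfat x hx).differentiableAt one_ne_zero).hasFDerivAt
  obtain ⟨D₀, hD₀⟩ := hequiv x₀ hx₀
  let e := ((hfat x₀ hx₀).toOpenPartialHomeomorph f hD₀ one_ne_zero).restrOpen U hU
  have hef : ⇑e = f := rfl
  have hsource : e.source ⊆ U := inter_subset_right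
  refine ⟨e, hef, ⟨(hfat x₀ hx₀).mem_toOpenPartialHomeomorph_source hD₀ one_ne_zero, hx₀⟩,
    hsource, fun y hy => ?_⟩
  have hyU := hsource (e.map_target hy)
  obtain ⟨D, hD⟩ := hequiv _ hyU
  exact (e.contDiffAt_symm hy hD (hfat _ hyU)).contDiffWithinAt

variable [MeasureSpace E] [BorelSpace E] [(volume : Measure E).IsAddHaarMeasure]

/-- The coordinates of an `n`-dimensional conformal map are `n`-harmonic. -/
theorem IsConformalOn.isWeaklyDivFreeOn_norm_pow_smul_gradient
    {e : OpenPartialHomeomorph E E} (hconf : IsConformalOn norm norm e l e.source)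
    (he : ContDiffOn ℝ 1 e e.source) (he' : ContDiffOn ℝ 1 e.symm e.target) {k : ℕ}
    (hk : Module.finrank ℝ E = k + 2) {v : E} (hv : ‖v‖ = 1) :
    IsWeaklyDivFreeOn (fun x => ‖∇ (fun y => ⟪v, e y⟫) x‖ ^ k • ∇ (fun y => ⟪v, e y⟫) x)
      e.source := by
  intro ψ hψ hψs hψe
  rw [← isWeaklyDivFreeOn_abs_det_smul_fderiv_symm e he he' v ψ hψ hψs hψe]
  congr with x
  by_cases hx : x ∈ e.source
  · obtain ⟨hl, hDe⟩ := hconf x hx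
    have hex : DifferentiableAt ℝ e x :=
      (he.contDiffAt (e.open_source.mem_nhds hx)).differentiableAt one_ne_zero
    have hsymm : DifferentiableAt ℝ e.symm (e x) := (he'.contDiffAt
      (e.open_target.mem_nhds (e.map_source hx))).differentiableAt one_ne_zero
    have hinv : fderiv ℝ e.symm (e x) ∘L fderiv ℝ e x = .id ℝ E :=
      (hsymm.hasFDerivAt.comp x hex.hasFDerivAt).unique
        ((hasFDerivAt_id x).congr_of_eventuallyEq (e.eventually_left_inverse hx))
    have hadj : (fderiv ℝ e x).adjoint v = l x ^ 2 • fderiv ℝ e.symm (e x) v := by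
      rw [← map_smul, ← map_adjoint_of_norm_map hl hDe]
      exact (DFunLike.congr_fun hinv _).symm
    beta_reduce
    rw [hconf.norm_gradient_inner_left hx hex, gradient_inner_left_eq_adjoint hex, hv, mul_one,
      abs_det_of_norm_map hl hDe, hk, hadj, smul_smul, ← pow_add]
  · rw [fderiv_of_notMem_tsupport ℝ fun h => hx (hψe h), zero_apply, zero_apply]

end ConformalMaps

section KoszulFormula

variable {E : Type*} [NormedAddCommGroup E] [MeasureSpace E] [BorelSpace E]
  [(volume : Measure E).IsAddHaarMeasure] {φ : E → ℝ}
  {W : Type*} [NormedAddCommGroup W] [InnerProductSpace ℝ W]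

theorem sum_integral_mul_inner_mul_inner {ι : Type*} [Fintype ι] (b : OrthonormalBasis ι ℝ W)
    {P Q : E → W} (hφ : Continuous φ) (hφs : HasCompactSupport φ) (hP : Continuous P)
    (hQ : Continuous Q) :
    ∑ i, ∫ x, φ x * (⟪b i, P x⟫ * ⟪b i, Q x⟫) = ∫ x, φ x * ⟪P x, Q x⟫ := by
  have hint : ∀ i, Integrable fun x => φ x * (⟪b i, P x⟫ * ⟪b i, Q x⟫) := fun i =>
    integrable_mul_of_hasCompactSupport hφ hφs
      ((continuous_const.inner hP).mul (continuous_const.inner hQ))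
  rw [← integral_finsetSum _ fun i _ => hint i]
  congr with x
  rw [← Finset.mul_sum, ← b.sum_inner_mul_inner (P x)]
  simp only [real_inner_comm (P x)]

variable [NormedSpace ℝ E]

theorem integral_smul_fderiv_apply {g : E → ℝ} (hg : Continuous g) (hφ : ContDiff ℝ 1 φ)
    (hφs : HasCompactSupport φ) (v : E) :
    (∫ x, g x • fderiv ℝ φ x) v = ∫ x, fderiv ℝ φ x v * g x := by
  have hint : Integrable fun x => g x • fderiv ℝ φ x :=
    (hg.smul (hφ.continuous_fderiv one_ne_zero)).integrable_of_hasCompactSupport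
      (hφs.fderiv ℝ).smul_left
  rw [ContinuousLinearMap.integral_apply hint]
  simp only [smul_apply, smul_eq_mul, mul_comm]

variable [FiniteDimensional ℝ E]

theorem tendsto_inv_mul_integral_mul_inner_fwdDiff_fderiv {ι : Type*} [Fintype ι]
    (b : OrthonormalBasis ι ℝ W) {f : E → W} (hf : ContDiff ℝ 1 f) (hfs : HasCompactSupport f)
    (hφ : ContDiff ℝ 1 φ) (hφs : HasCompactSupport φ) (hφ0 : ∀ x, 0 ≤ φ x)
    (hslopes : ∀ i, HasL2BoundedSlopes φ (fderiv ℝ fun x => ⟪b i, f x⟫)) (v w z : E) :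
    Tendsto (fun h : ℝ =>
      h⁻¹ * ∫ x, φ x * ⟪Δ_[h • v] (fun y => fderiv ℝ f y w) x, fderiv ℝ f x z⟫) (𝓝[>] 0)
      (𝓝 (((∫ x, fderiv ℝ φ x z * ⟪fderiv ℝ f x v, fderiv ℝ f x w⟫) -
        (∫ x, fderiv ℝ φ x v * ⟪fderiv ℝ f x w, fderiv ℝ f x z⟫) -
        ∫ x, fderiv ℝ φ x w * ⟪fderiv ℝ f x v, fderiv ℝ f x z⟫) / 2)) := by
  have hcont : ∀ w, Continuous fun x => fderiv ℝ f x w := fun w =>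
    (hf.continuous_fderiv one_ne_zero).clm_apply continuous_const
  have hcoord : ∀ i x w, fderiv ℝ (fun y => ⟪b i, f y⟫) x w = ⟪b i, fderiv ℝ f x w⟫ := by
    intro i x w
    rw [fderiv_inner_apply ℝ (differentiableAt_const _) (hf.differentiable one_ne_zero x)]
    simp
  have hdφ : ∀ v w z, ∑ i, ∫ x, fderiv ℝ φ x v *
      (⟪b i, fderiv ℝ f x w⟫ * ⟪b i, fderiv ℝ f x z⟫) =
      ∫ x, fderiv ℝ φ x v * ⟪fderiv ℝ f x w, fderiv ℝ f x z⟫ := fun v w z =>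
    sum_integral_mul_inner_mul_inner b
      ((hφ.continuous_fderiv one_ne_zero).clm_apply continuous_const) (hφs.fderiv_apply ℝ v)
      (hcont w) (hcont z)
  have hsum := tendsto_finsetSum Finset.univ fun i _ =>
    (hslopes i).tendsto_inv_mul_integral_fwdDiff_fderiv_mul_fderiv
      (contDiff_const.inner ℝ hf) (hfs.comp_left (g := fun y => ⟪b i, y⟫) (inner_zero_right _))
      hφ hφs hφ0 v w z
  simp only [hcoord, ← Finset.sum_div, Finset.sum_sub_distrib, hdφ, ← Finset.mul_sum, fwdDiff,
    ← inner_sub_right] at hsum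
  refine hsum.congr fun h => congrArg (h⁻¹ * ·) ?_
  exact sum_integral_mul_inner_mul_inner b hφ.continuous hφs
    (continuous_fwdDiff (hcont w) (h • v)) (hcont z)

end KoszulFormula

section Rigidity

variable {E : Type*} [NormedAddCommGroup E] [InnerProductSpace ℝ E] [FiniteDimensional ℝ E]
  {F : E → ℝ}

theorem IsMinkowskiNorm.inner_map_sub_map_le (hF : IsMinkowskiNorm F) {A B : E →L[ℝ] E}
    {a b : ℝ} (ha : 0 < a) (hA : ∀ v, ‖A v‖ = a * ‖v‖) (hFA : ∀ ξ, F (A ξ) = a * F ξ)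
    (hFB : ∀ ξ, F (B ξ) = b * F ξ) {ξ p : E} (hp : ∀ η, ⟪p, η⟫ ≤ F η) (hpξ : ⟪p, ξ⟫ = F ξ) :
    ⟪B ξ - A ξ, A p⟫ ≤ (b ^ 2 - a ^ 2) * (F ξ / 2) := by
  obtain ⟨η, hη⟩ := surjective_of_norm_map ha hA (B ξ)
  have hFη : a * F η = b * F ξ := by rw [← hFA, hη, hFB]
  calc ⟪B ξ - A ξ, A p⟫ = a ^ 2 * ⟪p, η⟫ - a ^ 2 * F ξ := by
        rw [inner_sub_left, ← hη, inner_map_map_of_norm_map hA, inner_map_map_of_norm_map hA,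
          real_inner_comm p η, real_inner_comm p ξ, hpξ]
    _ ≤ a ^ 2 * F η - a ^ 2 * F ξ := by
        gcongr
        exact hp η
    _ = (a * b - a ^ 2) * F ξ := by linear_combination a * hFη
    _ ≤ (b ^ 2 - a ^ 2) * (F ξ / 2) := by
        linarith [mul_nonneg (sq_nonneg (a - b)) (hF.nonneg ξ)]

variable [MeasureSpace E] [BorelSpace E] [(volume : Measure E).IsAddHaarMeasure]
  {f : E → E} {l φ : E → ℝ} {Ω : Set E}

theorem IsConformalOn.tendsto_inv_mul_integral_mul_inner_fwdDiff_fderiv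
    (hconf : IsConformalOn norm norm f l Ω) (hf : ContDiff ℝ 1 f) (hfs : HasCompactSupport f)
    (hl : Continuous l) (hφ : ContDiff ℝ 1 φ) (hφs : HasCompactSupport φ)
    (hφΩ : tsupport φ ⊆ Ω) (hφ0 : ∀ x, 0 ≤ φ x)
    (hslopes : ∀ c, ‖c‖ = 1 → HasL2BoundedSlopes φ (fderiv ℝ fun x => ⟪c, f x⟫))
    {β : StrongDual ℝ E} (hβ : β = ∫ x, l x ^ 2 • fderiv ℝ φ x) (v w z : E) :
    Tendsto (fun h : ℝ =>
      h⁻¹ * ∫ x, φ x * ⟪Δ_[h • v] (fun y => fderiv ℝ f y w) x, fderiv ℝ f x z⟫) (𝓝[>] 0)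
      (𝓝 ((β z * ⟪v, w⟫ - β v * ⟪w, z⟫ - β w * ⟪v, z⟫) / 2)) := by
  have hmetric : ∀ v w z, ∫ x, fderiv ℝ φ x v * ⟪fderiv ℝ f x w, fderiv ℝ f x z⟫ =
      β v * ⟪w, z⟫ := by
    intro v w z
    rw [hβ, integral_smul_fderiv_apply (g := fun x => l x ^ 2) (hl.pow 2) hφ hφs,
      ← integral_mul_const]
    congr with x
    by_cases hx : x ∈ Ω
    · rw [hconf.inner_fderiv hx, mul_assoc]
    · rw [fderiv_of_notMem_tsupport ℝ fun h => hx (hφΩ h), zero_apply, zero_mul, zero_mul,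
        zero_mul]
  simpa only [hmetric] using _root_.tendsto_inv_mul_integral_mul_inner_fwdDiff_fderiv
    (stdOrthonormalBasis ℝ E) hf hfs hφ hφs hφ0
    (fun i => hslopes _ ((stdOrthonormalBasis ℝ E).orthonormal.1 i)) v w z

theorem IsMinkowskiNorm.eventually_integral_mul_inner_fwdDiff_fderiv_le (hF : IsMinkowskiNorm F)
    (hΩ : IsOpen Ω) (hconf : IsConformalOn norm norm f l Ω) (hFconf : IsConformalOn F F f l Ω)
    (hf : ContDiff ℝ 1 f) (hl : Continuous l) (hφ : Continuous φ) (hφs : HasCompactSupport φ)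
    (hφΩ : tsupport φ ⊆ Ω) (hφ0 : ∀ x, 0 ≤ φ x) {ξ p : E} (hp : ∀ η, ⟪p, η⟫ ≤ F η)
    (hpξ : ⟪p, ξ⟫ = F ξ) (v : E) :
    ∀ᶠ h : ℝ in 𝓝 0,
      ∫ x, φ x * ⟪Δ_[h • v] (fun y => fderiv ℝ f y ξ) x, fderiv ℝ f x p⟫ ≤
        (∫ x, φ x * Δ_[h • v] (fun y => l y ^ 2) x) * (F ξ / 2) := by
  have hcont : ∀ w, Continuous fun x => fderiv ℝ f x w := fun w =>
    (hf.continuous_fderiv one_ne_zero).clm_apply continuous_const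
  filter_upwards [eventually_forall_add_smul_mem hφs hΩ hφΩ v] with h hh
  rw [← integral_mul_const]
  refine integral_mono (integrable_mul_of_hasCompactSupport hφ hφs
    ((continuous_fwdDiff (hcont ξ) _).inner (hcont p)))
    ((integrable_mul_of_hasCompactSupport hφ hφs
      (continuous_fwdDiff (hl.pow 2) _)).mul_const _) fun x => ?_
  by_cases hx : φ x = 0
  · simp only [hx, zero_mul, le_refl]
  · have hxφ := subset_tsupport φ hx
    have hxΩ := hφΩ hxφ
    rw [mul_assoc]
    exact mul_le_mul_of_nonneg_left (hF.inner_map_sub_map_le (hconf x hxΩ).1 (hconf x hxΩ).2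
      (hFconf x hxΩ).2 (hFconf _ (hh x hxφ)).2 hp hpξ) (hφ0 x)

theorem IsMinkowskiNorm.integral_sq_smul_fderiv_eq_zero (hF : IsMinkowskiNorm F)
    (hne : ¬IsEuclideanNorm F) (hE : 1 < Module.rank ℝ E) (hΩ : IsOpen Ω)
    (hconf : IsConformalOn norm norm f l Ω) (hFconf : IsConformalOn F F f l Ω)
    (hf : ContDiff ℝ 1 f) (hfs : HasCompactSupport f) (hl : Continuous l)
    (hφ : ContDiff ℝ 1 φ) (hφs : HasCompactSupport φ) (hφΩ : tsupport φ ⊆ Ω)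
    (hφ0 : ∀ x, 0 ≤ φ x)
    (hslopes : ∀ c, ‖c‖ = 1 → HasL2BoundedSlopes φ (fderiv ℝ fun x => ⟪c, f x⟫)) :
    ∫ x, l x ^ 2 • fderiv ℝ φ x = 0 := by
  obtain ⟨β, hβ⟩ : ∃ β, β = ∫ x, l x ^ 2 • fderiv ℝ φ x := ⟨_, rfl⟩
  have hα : -β = 0 := by
    refine hF.eq_zero_of_not_isEuclideanNorm hne hE (-β) fun ξ p hp hpξ v => ?_
    have hkoszul := hconf.tendsto_inv_mul_integral_mul_inner_fwdDiff_fderiv hf hfs hl hφ hφs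
      hφΩ hφ0 hslopes hβ v ξ p
    have hfactor := (tendsto_inv_mul_integral_mul_fwdDiff (g := fun x => l x ^ 2) hφ hφs
      (hl.pow 2) v).mul_const (F ξ / 2)
    rw [← integral_smul_fderiv_apply (g := fun x => l x ^ 2) (hl.pow 2) hφ hφs, ← hβ] at hfactor
    have hle := le_of_tendsto_of_tendsto hkoszul hfactor (by
      filter_upwards [nhdsWithin_le_nhds (hF.eventually_integral_mul_inner_fwdDiff_fderiv_le hΩ
        hconf hFconf hf hl hφ.continuous hφs hφΩ hφ0 hp hpξ v), self_mem_nhdsWithin]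
        with h hh (hpos : 0 < h)
      rw [mul_assoc]
      exact mul_le_mul_of_nonneg_left hh (inv_pos.2 hpos).le)
    rw [real_inner_comm p ξ, hpξ] at hle
    simp only [neg_apply]
    linarith
  rw [← hβ, neg_eq_zero.1 hα]

end Rigidity

section DuBoisReymond

open ContinuousLinearMap
open scoped Convolution

variable {E : Type*} [NormedAddCommGroup E] [NormedSpace ℝ E] [FiniteDimensional ℝ E]
  [MeasureSpace E] [BorelSpace E] [(volume : Measure E).IsAddHaarMeasure] {g : E → ℝ}

theorem hasFDerivAt_convolution_zero {ρ : E → ℝ} (hρ : ContDiff ℝ 1 ρ) (hρs : HasCompactSupport ρ)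
    (hg : Continuous g) {z : E} (h : ∫ t, g t • fderiv ℝ (fun s => ρ (z - s)) t = 0) :
    HasFDerivAt (ρ ⋆[lsmul ℝ ℝ] g) (0 : StrongDual ℝ E) z := by
  have hderiv : (fderiv ℝ ρ ⋆[(lsmul ℝ ℝ).precompL E] g) z = (0 : StrongDual ℝ E) := by
    rw [convolution_eq_swap, ← neg_eq_zero, ← integral_neg, ← h]
    congr with t v
    have hsub : HasFDerivAt (fun s => ρ (z - s)) (fderiv ℝ ρ (z - t) ∘L (-.id ℝ E)) t :=
      (hρ.differentiable one_ne_zero _).hasFDerivAt.comp t ((hasFDerivAt_id t).const_sub z)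
    rw [hsub.fderiv]
    simp [precompL_apply, mul_comm]
  exact hderiv ▸ hρs.hasFDerivAt_convolution_left (lsmul ℝ ℝ) hρ hg.locallyIntegrable z

theorem eventually_eq_of_forall_integral_smul_fderiv_eq_zero (hg : Continuous g) {Ω : Set E}
    (h : ∀ φ : E → ℝ, ContDiff ℝ 1 φ → HasCompactSupport φ → tsupport φ ⊆ Ω → (∀ x, 0 ≤ φ x) →
      ∫ x, g x • fderiv ℝ φ x = 0) {x₀ : E} (hΩ : Ω ∈ 𝓝 x₀) :
    ∀ᶠ x in 𝓝 x₀, g x = g x₀ := by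
  obtain ⟨r, hr, hrΩ⟩ := Metric.nhds_basis_closedBall.mem_iff.1 hΩ
  let ρ : ℕ → ContDiffBump (0 : E) := fun n =>
    ⟨1 / (n + 1) / 2, 1 / (n + 1), by positivity, half_lt_self (by positivity)⟩
  have hρ : Tendsto (fun n => (ρ n).rOut) atTop (𝓝 0) := tendsto_one_div_add_atTop_nhds_zero_nat
  have hconst : ∀ x ∈ Metric.ball x₀ (r / 2), ∀ᶠ n in atTop,
      ((ρ n).normed volume ⋆[lsmul ℝ ℝ] g) x = ((ρ n).normed volume ⋆[lsmul ℝ ℝ] g) x₀ := by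
    intro x hx
    filter_upwards [hρ.eventually_lt_const (half_pos hr)] with n hn
    have hderiv : ∀ z ∈ Metric.ball x₀ (r / 2),
        HasFDerivAt ((ρ n).normed volume ⋆[lsmul ℝ ℝ] g) (0 : StrongDual ℝ E) z := by
      intro z hz
      have hsupp : tsupport (fun t => (ρ n).normed volume (z - t)) ⊆
          Metric.closedBall z (r / 2) := by
        refine closure_minimal (fun t ht => ?_) Metric.isClosed_closedBall
        have ht' : z - t ∈ Function.support ((ρ n).normed volume) := ht
        rw [ContDiffBump.support_normed_eq, mem_ball_zero_iff] at ht'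
        rw [Metric.mem_closedBall', dist_eq_norm]
        exact (ht'.trans hn).le
      refine hasFDerivAt_convolution_zero (ρ n).contDiff_normed (ρ n).hasCompactSupport_normed hg
        (h _ ((ρ n).contDiff_normed.comp (contDiff_const.sub contDiff_id))
          ((isCompact_closedBall z (r / 2)).of_isClosed_subset (isClosed_tsupport _) hsupp)
          ((hsupp.trans ?_).trans hrΩ) fun t => (ρ n).nonneg_normed _)
      exact Metric.closedBall_subset_closedBall' (by linarith [Metric.mem_ball.1 hz])
    exact Metric.isOpen_ball.is_const_of_fderiv_eq_zero (convex_ball x₀ (r / 2)).isPreconnected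
      (fun z hz => (hderiv z hz).differentiableAt.differentiableWithinAt)
      (fun z hz => (hderiv z hz).fderiv) hx (Metric.mem_ball_self (half_pos hr))
  filter_upwards [Metric.ball_mem_nhds x₀ (half_pos hr)] with x hx
  exact tendsto_nhds_unique ((ContDiffBump.convolution_tendsto_right_of_continuous hρ hg x).congr'
    (hconst x hx)) (ContDiffBump.convolution_tendsto_right_of_continuous hρ hg x₀)

end DuBoisReymond

section ConformalFactor

theorem exists_contDiff_hasCompactSupport_eventuallyEq {E W : Type*} [NormedAddCommGroup E]
    [NormedSpace ℝ E] [FiniteDimensional ℝ E] [NormedAddCommGroup W] [NormedSpace ℝ W] {f : E → W}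
    {U : Set E} (hU : IsOpen U) (hf : ContDiffOn ℝ 1 f U) {x₀ : E} (hx₀ : x₀ ∈ U) :
    ∃ g : E → W, ContDiff ℝ 1 g ∧ HasCompactSupport g ∧ g =ᶠ[𝓝 x₀] f := by
  obtain ⟨η, hη, hηs, hηU, hη1⟩ := exists_contDiff_eq_one_nhdsSet_tsupport_subset
    isCompact_singleton hU (singleton_subset_iff.2 hx₀)
  rw [nhdsSet_singleton] at hη1
  refine ⟨fun x => η x • f x, contDiff_iff_contDiffAt.2 fun x => ?_, hηs.smul_right, ?_⟩
  · by_cases hx : x ∈ U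
    · exact hη.contDiffAt.smul (hf.contDiffAt (hU.mem_nhds hx))
    · refine (contDiffAt_const (c := (0 : W))).congr_of_eventuallyEq ?_
      filter_upwards [(isClosed_tsupport η).isOpen_compl.mem_nhds fun h => hx (hηU h)] with z hz
      rw [image_eq_zero_of_notMem_tsupport hz, zero_smul]
  · filter_upwards [hη1] with x hx
    rw [hx, one_smul]

variable {E : Type*} [NormedAddCommGroup E] [InnerProductSpace ℝ E] [FiniteDimensional ℝ E]
  [MeasureSpace E] [BorelSpace E] [(volume : Measure E).IsAddHaarMeasure]
  {F : E → ℝ} {f : E → E} {l : E → ℝ} {U : Set E} {x₀ : E}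

theorem IsConformalOn.hasL2BoundedSlopes_fderiv_inner {e : OpenPartialHomeomorph E E}
    (hconf : IsConformalOn norm norm e l e.source) (he : ContDiff ℝ 1 e)
    (hes : HasCompactSupport e) (he' : ContDiffOn ℝ 1 e.symm e.target)
    (hE : 1 < Module.rank ℝ E) {Ω : Set E} (hΩ : IsOpen Ω) (hΩe : Ω ⊆ e.source) {m : ℝ}
    (hm : 0 < m) (hml : ∀ x ∈ Ω, m ≤ l x) {φ : E → ℝ} (hφ : Continuous φ)
    (hφs : HasCompactSupport φ) (hφΩ : tsupport φ ⊆ Ω) (hφ0 : ∀ x, 0 ≤ φ x) {v : E}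
    (hv : ‖v‖ = 1) : HasL2BoundedSlopes φ (fderiv ℝ fun x => ⟪v, e x⟫) := by
  obtain ⟨k, hk⟩ : ∃ k, Module.finrank ℝ E = k + 2 :=
    Nat.exists_eq_add_of_le' (by rwa [← Module.finrank_eq_rank, Nat.one_lt_cast] at hE)
  have hdiv := hconf.isWeaklyDivFreeOn_norm_pow_smul_gradient he.contDiffOn he' hk hv
  refine hasL2BoundedSlopes_fderiv_of_isWeaklyDivFreeOn_norm_pow_smul_gradient hΩ
    (contDiff_const.inner ℝ he) (hes.comp_left (g := fun y => ⟪v, y⟫) (inner_zero_right v))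
    (fun ψ hψ hψs hψΩ => hdiv ψ hψ hψs (hψΩ.trans hΩe)) hm (fun x hx => ?_) hφ hφs hφΩ hφ0
  rw [hconf.norm_gradient_inner_left (hΩe hx) (he.differentiable one_ne_zero x), hv, mul_one]
  exact hml x hx

theorem IsConformalOn.eventually_factor_eq_of_contDiff (hF : IsMinkowskiNorm F)
    (hne : ¬IsEuclideanNorm F) (hE : 1 < Module.rank ℝ E) (hU : IsOpen U)
    (hconf : IsConformalOn norm norm f l U) (hFconf : IsConformalOn F F f l U)
    (hf : ContDiff ℝ 1 f) (hfs : HasCompactSupport f) (hl : Continuous l) (hx₀ : x₀ ∈ U) :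
    ∀ᶠ x in 𝓝 x₀, l x = l x₀ := by
  obtain ⟨e, rfl, hx₀e, heU, he'⟩ := hconf.exists_openPartialHomeomorph hf.contDiffOn hU hx₀
  have hm : 0 < l x₀ / 2 := half_pos (hconf x₀ hx₀).1
  set Ω := e.source ∩ {x | l x₀ / 2 < l x}
  have hΩ : IsOpen Ω := e.open_source.inter (isOpen_lt continuous_const hl)
  have hΩU : Ω ⊆ U := inter_subset_left.trans heU
  have hx₀Ω : Ω ∈ 𝓝 x₀ := hΩ.mem_nhds ⟨hx₀e, half_lt_self (hconf x₀ hx₀).1⟩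
  have hsq := eventually_eq_of_forall_integral_smul_fderiv_eq_zero (g := fun x => l x ^ 2)
    (hl.pow 2) (fun φ hφ hφs hφΩ hφ0 => hF.integral_sq_smul_fderiv_eq_zero hne hE hΩ
      (fun x hx => hconf x (hΩU hx)) (fun x hx => hFconf x (hΩU hx)) hf hfs hl hφ hφs hφΩ hφ0
      fun v hv => IsConformalOn.hasL2BoundedSlopes_fderiv_inner
        (fun x hx => hconf x (heU hx)) hf hfs he' hE hΩ inter_subset_left hm
        (fun x hx => hx.2.le) hφ.continuous hφs hφΩ hφ0 hv) hx₀Ω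
  filter_upwards [hsq, hx₀Ω] with x hx hxΩ
  exact (sq_eq_sq₀ (hconf x (hΩU hxΩ)).1.le (hconf x₀ hx₀).1.le).1 hx

theorem IsConformalOn.eventually_factor_eq (hF : IsMinkowskiNorm F) (hne : ¬IsEuclideanNorm F)
    (hE : 1 < Module.rank ℝ E) (hU : IsOpen U) (hconf : IsConformalOn norm norm f l U)
    (hFconf : IsConformalOn F F f l U) (hf : ContDiffOn ℝ 1 f U) (hx₀ : x₀ ∈ U) :
    ∀ᶠ x in 𝓝 x₀, l x = l x₀ := by
  obtain ⟨g, hg, hgs, hgf⟩ := exists_contDiff_hasCompactSupport_eventuallyEq hU hf hx₀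
  have : Nontrivial E := (rank_pos_iff_nontrivial (R := ℝ)).1 (zero_lt_one.trans hE)
  obtain ⟨v, hv⟩ := exists_norm_eq E zero_le_one
  set k : E → ℝ := fun x => ‖fderiv ℝ g x v‖
  have hk : Continuous k :=
    ((hg.continuous_fderiv one_ne_zero).clm_apply continuous_const).norm
  obtain ⟨Ω, hΩsub, hΩ, hx₀Ω⟩ :=
    eventually_nhds_iff.1 ((hgf.fderiv (𝕜 := ℝ)).and (hU.mem_nhds hx₀))
  have hkl : ∀ x ∈ Ω, k x = l x := fun x hx => by
    rw [← mul_one (l x), ← hv, ← (hconf x (hΩsub x hx).2).2, ← (hΩsub x hx).1]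
  have hconf_g : ∀ {G : E → ℝ}, IsConformalOn G G f l U → IsConformalOn G G g k Ω := by
    intro G hG x hx
    rw [hkl x hx, (hΩsub x hx).1]
    exact hG x (hΩsub x hx).2
  filter_upwards [IsConformalOn.eventually_factor_eq_of_contDiff hF hne hE hΩ (hconf_g hconf)
    (hconf_g hFconf) hg hgs hk hx₀Ω, hΩ.mem_nhds hx₀Ω] with x hx hxΩ
  rw [← hkl x hxΩ, hx, hkl x₀ hx₀Ω]

end ConformalFactor

section LocalSimilarities

variable {E : Type*} [NormedAddCommGroup E] [InnerProductSpace ℝ E] {f : E → E} {l : E → ℝ}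
  {U : Set E} {x₀ : E} {c : ℝ}

theorem IsConformalOn.eventually_norm_sub_le (hf : IsConformalOn norm norm f l U)
    (hU : IsOpen U) (hfd : DifferentiableOn ℝ f U) (hx₀ : x₀ ∈ U)
    (hl : ∀ᶠ x in 𝓝 x₀, l x = c) :
    ∀ᶠ q in 𝓝 (x₀, x₀), ‖f q.1 - f q.2‖ ≤ c * ‖q.1 - q.2‖ := by
  obtain ⟨r, hr, hrU⟩ := Metric.nhds_basis_ball.mem_iff.1 (inter_mem (hU.mem_nhds hx₀) hl)
  have hball := Metric.ball_mem_nhds x₀ hr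
  filter_upwards [prod_mem_nhds hball hball] with q hq
  refine (convex_ball x₀ r).norm_image_sub_le_of_norm_fderiv_le
    (fun z hz => (hfd z (hrU hz).1).differentiableAt (hU.mem_nhds (hrU hz).1))
    (fun z hz => ?_) hq.2 hq.1
  obtain ⟨hlz, hDz⟩ := hf z (hrU hz).1
  rw [show l z = c from (hrU hz).2] at hlz hDz
  exact ContinuousLinearMap.opNorm_le_bound _ hlz.le fun v => (hDz v).le

theorem eventually_eq_add_fderiv_of_norm_sub_eq (hf : DifferentiableAt ℝ f x₀)
    (hsurj : Function.Surjective (fderiv ℝ f x₀)) (hA : ∀ v, ‖fderiv ℝ f x₀ v‖ = c * ‖v‖)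
    (h : ∀ᶠ q in 𝓝 (x₀, x₀), ‖f q.1 - f q.2‖ = c * ‖q.1 - q.2‖) :
    ∀ᶠ x in 𝓝 x₀, f x = f x₀ + fderiv ℝ f x₀ (x - x₀) := by
  have h₀ : ∀ᶠ x in 𝓝 x₀, ‖f x - f x₀‖ = c * ‖x - x₀‖ :=
    h.curry_nhds.mono fun _ hx => hx.self_of_nhds
  filter_upwards [h.curry_nhds, h₀] with z hz hz₀
  have hinner : ∀ᶠ x in 𝓝 x₀, ⟪f z - f x₀, f x - f x₀⟫ = c ^ 2 * ⟪z - x₀, x - x₀⟫ := by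
    filter_upwards [hz, h₀] with x hx hx₀
    rw [real_inner_eq_norm_mul_self_add_norm_mul_self_sub_norm_sub_mul_self_div_two,
      real_inner_eq_norm_mul_self_add_norm_mul_self_sub_norm_sub_mul_self_div_two,
      sub_sub_sub_cancel_right, sub_sub_sub_cancel_right, hx, hx₀, hz₀]
    ring
  have hderiv : ∀ v, ⟪f z - f x₀, fderiv ℝ f x₀ v⟫ = c ^ 2 * ⟪z - x₀, v⟫ := fun v =>
    have hleft := (innerSL ℝ (f z - f x₀)).hasFDerivAt.comp x₀ (hf.hasFDerivAt.sub_const (f x₀))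
    have hright := ((innerSL ℝ (z - x₀)).hasFDerivAt.comp x₀
      ((hasFDerivAt_id x₀).sub_const x₀)).const_mul (c ^ 2)
    DFunLike.congr_fun (hleft.unique (hright.congr_of_eventuallyEq hinner)) v
  rw [← sub_eq_iff_eq_add', ← sub_eq_zero]
  refine ext_inner_right ℝ fun w => ?_
  obtain ⟨v, rfl⟩ := hsurj w
  rw [inner_sub_left, hderiv, inner_map_map_of_norm_map hA, sub_self, inner_zero_left]

variable [FiniteDimensional ℝ E]

theorem IsConformalOn.symm {e : OpenPartialHomeomorph E E}
    (hconf : IsConformalOn norm norm e l e.source) (he : DifferentiableOn ℝ e e.source)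
    (he' : DifferentiableOn ℝ e.symm e.target) :
    IsConformalOn norm norm e.symm (fun y => (l (e.symm y))⁻¹) e.target := by
  intro y hy
  obtain ⟨x, hx, rfl⟩ : ∃ x ∈ e.source, e x = y := ⟨_, e.map_target hy, e.right_inv hy⟩
  obtain ⟨hl, hD⟩ := hconf x hx
  beta_reduce
  rw [e.left_inv hx]
  refine ⟨inv_pos.2 hl, fun w => ?_⟩
  obtain ⟨v, rfl⟩ := surjective_of_norm_map hl hD w
  have hinv : fderiv ℝ e.symm (e x) ∘L fderiv ℝ e x = .id ℝ E :=
    (((he' _ hy).differentiableAt (e.open_target.mem_nhds hy)).hasFDerivAt.comp x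
      ((he x hx).differentiableAt (e.open_source.mem_nhds hx)).hasFDerivAt).unique
      ((hasFDerivAt_id x).congr_of_eventuallyEq (e.eventually_left_inverse hx))
  rw [hD, inv_mul_cancel_left₀ hl.ne']
  exact congrArg norm (DFunLike.congr_fun hinv v)

theorem IsConformalOn.eventually_norm_sub_eq {e : OpenPartialHomeomorph E E}
    (hconf : IsConformalOn norm norm e l e.source) (he : DifferentiableOn ℝ e e.source)
    (he' : DifferentiableOn ℝ e.symm e.target) (hx₀ : x₀ ∈ e.source)
    (hl : ∀ᶠ x in 𝓝 x₀, l x = c) :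
    ∀ᶠ q in 𝓝 (x₀, x₀), ‖e q.1 - e q.2‖ = c * ‖q.1 - q.2‖ := by
  have hc : 0 < c := hl.self_of_nhds ▸ (hconf x₀ hx₀).1
  have hl' : ∀ᶠ y in 𝓝 (e x₀), (l (e.symm y))⁻¹ = c⁻¹ :=
    ((e.tendsto_symm hx₀).eventually hl).mono fun _ => congrArg _
  have hsource := e.open_source.mem_nhds hx₀
  have he₀ := e.continuousAt hx₀
  filter_upwards [hconf.eventually_norm_sub_le e.open_source he hx₀ hl,
    (he₀.prodMap he₀).eventually ((hconf.symm he he').eventually_norm_sub_le e.open_target he'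
      (e.map_source hx₀) hl'), prod_mem_nhds hsource hsource] with q hle hge hq
  refine hle.antisymm ?_
  rwa [Prod.map_fst, Prod.map_snd, e.left_inv hq.1, e.left_inv hq.2, le_inv_mul_iff₀ hc] at hge

theorem IsConformalOn.eventually_fderiv_eq_of_eventually_factor_eq
    (hconf : IsConformalOn norm norm f l U) (hU : IsOpen U) (hf : ContDiffOn ℝ 1 f U)
    (hx₀ : x₀ ∈ U) (hl : ∀ᶠ x in 𝓝 x₀, l x = l x₀) :
    ∀ᶠ x in 𝓝 x₀, fderiv ℝ f x = fderiv ℝ f x₀ := by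
  obtain ⟨e, rfl, hx₀e, heU, he'⟩ := hconf.exists_openPartialHomeomorph hf hU hx₀
  obtain ⟨hl₀, hD⟩ := hconf x₀ hx₀
  have hfd := hf.differentiableOn one_ne_zero
  have haffine := eventually_eq_add_fderiv_of_norm_sub_eq
    ((hfd x₀ hx₀).differentiableAt (hU.mem_nhds hx₀)) (surjective_of_norm_map hl₀ hD) hD
    (IsConformalOn.eventually_norm_sub_eq (fun x hx => hconf x (heU hx)) (hfd.mono heU)
      (he'.differentiableOn one_ne_zero) hx₀e hl)
  filter_upwards [EventuallyEq.fderiv (𝕜 := ℝ) haffine] with x hx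
  rw [hx]
  exact (((fderiv ℝ e x₀).hasFDerivAt.comp x
    ((hasFDerivAt_id x).sub_const x₀)).const_add (e x₀)).fderiv

end LocalSimilarities

section LocalConstancy

theorem eqOn_add_fderiv_of_eventually_fderiv_eq {V W : Type*} [NormedAddCommGroup V]
    [NormedSpace ℝ V] [NormedAddCommGroup W] [NormedSpace ℝ W] {f : V → W} {U : Set V} {x₀ : V}
    (hU : IsOpen U) (hUc : IsPreconnected U) (hf : DifferentiableOn ℝ f U)
    (h : ∀ x ∈ U, ∀ᶠ y in 𝓝 x, fderiv ℝ f y = fderiv ℝ f x) (hx₀ : x₀ ∈ U) :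
    EqOn f (fun x => f x₀ + fderiv ℝ f x₀ (x - x₀)) U := by
  have hconst : ∀ x ∈ U, HasFDerivAt (fderiv ℝ f) (0 : V →L[ℝ] V →L[ℝ] W) x := fun x hx =>
    (hasFDerivAt_const (fderiv ℝ f x) x).congr_of_eventuallyEq (h x hx)
  have haffine : ∀ x, HasFDerivAt (fun x => f x₀ + fderiv ℝ f x₀ (x - x₀)) (fderiv ℝ f x₀) x :=
    fun x => ((fderiv ℝ f x₀).hasFDerivAt.comp x
      ((hasFDerivAt_id x).sub_const x₀)).const_add (f x₀)
  refine hU.eqOn_of_fderiv_eq hUc hf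
    (fun x _ => (haffine x).differentiableAt.differentiableWithinAt) (fun x hx => ?_) hx₀ (by simp)
  rw [(haffine x).fderiv]
  exact hU.is_const_of_fderiv_eq_zero hUc
    (fun x hx => (hconst x hx).differentiableAt.differentiableWithinAt)
    (fun x hx => (hconst x hx).fderiv) hx hx₀

variable {V W : Type*} [NormedAddCommGroup V] [NormedSpace ℝ V] [NormedAddCommGroup W]
  [NormedSpace ℝ W] {F : V → ℝ} {f : V → V} {l : V → ℝ} {U : Set V} {x₀ : V}

theorem fderiv_conj_continuousLinearEquiv (Ψ : V ≃L[ℝ] W) (f : V → V) (y : W) :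
    fderiv ℝ (Ψ ∘ f ∘ Ψ.symm) y =
      (Ψ : V →L[ℝ] W) ∘L fderiv ℝ f (Ψ.symm y) ∘L (Ψ.symm : W →L[ℝ] V) := by
  rw [Ψ.comp_fderiv, Ψ.symm.comp_right_fderiv]

theorem eventually_fderiv_eq_of_conj_continuousLinearEquiv (Ψ : V ≃L[ℝ] W)
    (h : ∀ᶠ y in 𝓝 (Ψ x₀), fderiv ℝ (Ψ ∘ f ∘ Ψ.symm) y = fderiv ℝ (Ψ ∘ f ∘ Ψ.symm) (Ψ x₀)) :
    ∀ᶠ x in 𝓝 x₀, fderiv ℝ f x = fderiv ℝ f x₀ := by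
  filter_upwards [Ψ.continuous.continuousAt.eventually h] with x hx
  ext v
  simpa [fderiv_conj_continuousLinearEquiv] using DFunLike.congr_fun hx (Ψ v)

theorem IsConformalOn.conj_continuousLinearEquiv (hf : IsConformalOn F F f l U) (Ψ : V ≃L[ℝ] W) :
    IsConformalOn (F ∘ Ψ.symm) (F ∘ Ψ.symm) (Ψ ∘ f ∘ Ψ.symm) (l ∘ Ψ.symm) (Ψ.symm ⁻¹' U) :=
  fun y hy => ⟨(hf _ hy).1, fun v => by
    simp [fderiv_conj_continuousLinearEquiv, (hf _ hy).2]⟩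

variable [FiniteDimensional ℝ V]

theorem IsMinkowskiNorm.exists_equiv_isConformalOn_norm (hF : IsMinkowskiNorm F) :
    ∃ Ψ : V ≃L[ℝ] EuclideanSpace ℝ (Fin (Module.finrank ℝ V)), ∀ (f : V → V) (l : V → ℝ)
      (U : Set V), IsConformalOn F F f l U →
        IsConformalOn norm norm (Ψ ∘ f ∘ Ψ.symm) (l ∘ Ψ.symm) (Ψ.symm ⁻¹' U) := by
  obtain ⟨Ψ, hΨ⟩ := hF.exists_equiv_norm_map_eq
  refine ⟨Ψ, fun f l U hf y hy => ?_⟩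
  obtain ⟨hl, hD⟩ := hf _ hy
  refine ⟨hl, fun v => ?_⟩
  let A : V →ₗ[ℝ] V := (l (Ψ.symm y))⁻¹ • (fderiv ℝ f (Ψ.symm y)).toLinearMap
  have hA : ∀ ξ, F (A ξ) = F ξ := fun ξ =>
    (hF.map_smul (inv_pos.2 hl).le _).trans <| by
      rw [ContinuousLinearMap.coe_coe, hD, inv_mul_cancel_left₀ hl.ne']
  have hΨA := hΨ A hA (Ψ.symm v)
  rw [LinearMap.smul_apply, _root_.map_smul, norm_smul, Ψ.apply_symm_apply, norm_inv,
    Real.norm_of_nonneg hl.le, inv_mul_eq_iff_eq_mul₀ hl.ne'] at hΨA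
  rw [fderiv_conj_continuousLinearEquiv]
  exact hΨA

theorem IsConformalOn.eventually_fderiv_eq (hF : IsMinkowskiNorm F) (hne : ¬IsEuclideanNorm F)
    (hV : 2 ≤ Module.finrank ℝ V) (hconf : IsConformalOn F F f l U) (hU : IsOpen U)
    (hf : ContDiffOn ℝ 1 f U) (hx₀ : x₀ ∈ U) :
    ∀ᶠ x in 𝓝 x₀, fderiv ℝ f x = fderiv ℝ f x₀ := by
  obtain ⟨Ψ, hΨ⟩ := hF.exists_equiv_isConformalOn_norm
  have hneΨ : ¬IsEuclideanNorm (F ∘ Ψ.symm) := fun h => hne <| by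
    simpa [Function.comp_assoc] using h.comp_linearEquiv Ψ
  have hrank : 1 < Module.rank ℝ (EuclideanSpace ℝ (Fin (Module.finrank ℝ V))) := by
    rw [← Module.finrank_eq_rank, finrank_euclideanSpace_fin]
    exact_mod_cast hV
  have hUΨ : IsOpen (Ψ.symm ⁻¹' U) := hU.preimage Ψ.symm.continuous
  have hfΨ : ContDiffOn ℝ 1 (Ψ ∘ f ∘ Ψ.symm) (Ψ.symm ⁻¹' U) :=
    Ψ.contDiff.comp_contDiffOn (hf.comp Ψ.symm.contDiff.contDiffOn (mapsTo_preimage _ _))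
  have hxΨ : Ψ x₀ ∈ Ψ.symm ⁻¹' U := by simpa using hx₀
  have hnorm := hΨ f l U hconf
  exact eventually_fderiv_eq_of_conj_continuousLinearEquiv Ψ <|
    hnorm.eventually_fderiv_eq_of_eventually_factor_eq hUΨ hfΨ hxΨ <|
      IsConformalOn.eventually_factor_eq (hF.comp_linearEquiv Ψ.symm) hneΨ hrank hUΨ hnorm
        (hconf.conj_continuousLinearEquiv Ψ) hfΨ hxΨ

end LocalConstancy

section Similarities

variable {V₁ V₂ : Type*} [NormedAddCommGroup V₁] [NormedSpace ℝ V₁]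
  [NormedAddCommGroup V₂] [NormedSpace ℝ V₂] {F₁ : V₁ → ℝ} {F₂ : V₂ → ℝ}
  {f : V₁ → V₂} {l : V₁ → ℝ} {U : Set V₁} {x₀ : V₁}

theorem IsConformalOn.symm_comp {c : ℝ} (hc : 0 < c) {D : V₁ ≃L[ℝ] V₂}
    (hD : ∀ ξ, F₂ (D ξ) = c * F₁ ξ) (hconf : IsConformalOn F₁ F₂ f l U) :
    IsConformalOn F₁ F₁ (D.symm ∘ f) (fun x => c⁻¹ * l x) U := by
  intro x hx
  refine ⟨mul_pos (inv_pos.2 hc) (hconf x hx).1, fun ξ => ?_⟩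
  rw [D.symm.comp_fderiv, mul_assoc, ← (hconf x hx).2, eq_inv_mul_iff_mul_eq₀ hc.ne', ← hD]
  simp

variable [FiniteDimensional ℝ V₁] [FiniteDimensional ℝ V₂]

theorem IsConformalOn.exists_continuousLinearEquiv_eq_fderiv (hF : IsMinkowskiNorm F₁)
    (hdim_eq : Module.finrank ℝ V₁ = Module.finrank ℝ V₂) (hconf : IsConformalOn F₁ F₂ f l U)
    (hx₀ : x₀ ∈ U) : ∃ D : V₁ ≃L[ℝ] V₂, D = fderiv ℝ f x₀ := by
  have hinj := hF.injective_of_map_eq (A := (fderiv ℝ f x₀).toLinearMap) (hconf x₀ hx₀).1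
    (hconf x₀ hx₀).2
  exact ⟨(LinearEquiv.ofInjectiveOfFinrankEq _ hinj hdim_eq).toContinuousLinearEquiv,
    ContinuousLinearMap.ext fun _ => rfl⟩

theorem IsConformalOn.eventually_fderiv_eq_of_finrank_eq (hF : IsMinkowskiNorm F₁)
    (hne : ¬IsEuclideanNorm F₁) (hdim : 2 ≤ Module.finrank ℝ V₁)
    (hdim_eq : Module.finrank ℝ V₁ = Module.finrank ℝ V₂) (hconf : IsConformalOn F₁ F₂ f l U)
    (hU : IsOpen U) (hf : ContDiffOn ℝ 1 f U) (hx₀ : x₀ ∈ U) :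
    ∀ᶠ x in 𝓝 x₀, fderiv ℝ f x = fderiv ℝ f x₀ := by
  obtain ⟨D, hD⟩ := hconf.exists_continuousLinearEquiv_eq_fderiv hF hdim_eq hx₀
  obtain ⟨hc, hfac⟩ := hconf x₀ hx₀
  rw [← hD] at hfac
  filter_upwards [IsConformalOn.eventually_fderiv_eq hF hne hdim (hconf.symm_comp hc hfac) hU
    (D.symm.contDiff.comp_contDiffOn hf) hx₀] with x hx
  ext ξ
  simpa [D.symm.comp_fderiv] using DFunLike.congr_fun hx ξ

theorem statement7_general (hdim : 2 ≤ Module.finrank ℝ V₁)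
    (hdim_eq : Module.finrank ℝ V₁ = Module.finrank ℝ V₂) (hF₁ : IsMinkowskiNorm F₁)
    (hne₁ : ¬IsEuclideanNorm F₁) (hU : IsOpen U) (hUc : IsConnected U)
    (hf : ContDiffOn ℝ 1 f U) (hconf : IsConformalOn F₁ F₂ f l U) :
    ∃ L : V₁ ≃ₗ[ℝ] V₂, (∀ ξ, F₂ (L ξ) = F₁ ξ) ∧
      ∃ c : ℝ, 0 < c ∧ ∃ b : V₂, ∀ x ∈ U, f x = c • L x + b := by
  obtain ⟨x₀, hx₀⟩ := hUc.nonempty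
  obtain ⟨D, hD⟩ := hconf.exists_continuousLinearEquiv_eq_fderiv hF₁ hdim_eq hx₀
  obtain ⟨hc, hfac⟩ := hconf x₀ hx₀
  rw [← hD] at hfac
  have haffine := eqOn_add_fderiv_of_eventually_fderiv_eq hU hUc.isPreconnected
    (hf.differentiableOn one_ne_zero) (fun x hx =>
      hconf.eventually_fderiv_eq_of_finrank_eq hF₁ hne₁ hdim hdim_eq hU hf hx) hx₀
  rw [← hD] at haffine
  let L : V₁ ≃ₗ[ℝ] V₂ :=
    (LinearEquiv.smulOfNeZero ℝ V₁ (l x₀)⁻¹ (inv_ne_zero hc.ne')).trans D.toLinearEquiv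
  have hL : ∀ ξ, L ξ = D ((l x₀)⁻¹ • ξ) := fun _ => rfl
  refine ⟨L, fun ξ => ?_, l x₀, hc, f x₀ - D x₀, fun x hx => ?_⟩
  · calc F₂ (L ξ) = l x₀ * F₁ ((l x₀)⁻¹ • ξ) := hfac _
      _ = F₁ ξ := by rw [hF₁.map_smul (inv_pos.2 hc).le, mul_inv_cancel_left₀ hc.ne']
  · calc f x = f x₀ + D (x - x₀) := haffine hx
      _ = D x + (f x₀ - D x₀) := by rw [map_sub]; abel
      _ = l x₀ • L x + (f x₀ - D x₀) := by rw [hL, ← map_smul, smul_inv_smul₀ hc.ne']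

end Similarities

/-- Liouville theorem for Minkowski spaces: a conformal `C¹` diffeomorphism between
domains of two non-Euclidean Minkowski spaces of the same dimension `n ≥ 2` is the
restriction of a similarity `x ↦ c·L(x) + b`, where `L` is a linear isometry between
the two Minkowski spaces; in particular the two spaces are linearly isometric. -/
theorem statement7 (n : ℕ) (hn : 2 ≤ n)
    (V₁ V₂ : Type*) [NormedAddCommGroup V₁] [NormedSpace ℝ V₁] [FiniteDimensional ℝ V₁]
    [NormedAddCommGroup V₂] [NormedSpace ℝ V₂] [FiniteDimensional ℝ V₂]
    (hdim₁ : Module.finrank ℝ V₁ = n) (hdim₂ : Module.finrank ℝ V₂ = n)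
    (F₁ : V₁ → ℝ) (F₂ : V₂ → ℝ)
    (hF₁ : IsMinkowskiNorm F₁) (hF₂ : IsMinkowskiNorm F₂)
    (hne₁ : ¬ IsEuclideanNorm F₁) (hne₂ : ¬ IsEuclideanNorm F₂)
    (U₁ : Set V₁) (U₂ : Set V₂)
    (hU₁o : IsOpen U₁) (hU₁c : IsConnected U₁)
    (hU₂o : IsOpen U₂) (hU₂c : IsConnected U₂)
    -- `f : U₁ → U₂` is a `C¹` diffeomorphism, with inverse `f'`
    (f : V₁ → V₂) (hf : ContDiffOn ℝ 1 f U₁) (hbij : Set.BijOn f U₁ U₂)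
    (f' : V₂ → V₁) (hf' : ContDiffOn ℝ 1 f' U₂)
    (hinv : ∀ x ∈ U₁, f' (f x) = x) (hinv' : ∀ y ∈ U₂, f (f' y) = y)
    -- `f` is conformal: `F₂(df_x(ξ)) = λ(x)·F₁(ξ)`
    (lam : V₁ → ℝ) (hlam : ∀ x ∈ U₁, 0 < lam x)
    (hconf : ∀ x ∈ U₁, ∀ ξ, F₂ (fderiv ℝ f x ξ) = lam x * F₁ ξ) :
    ∃ L : V₁ ≃ₗ[ℝ] V₂, (∀ ξ, F₂ (L ξ) = F₁ ξ) ∧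
      ∃ c : ℝ, 0 < c ∧ ∃ b : V₂, ∀ x ∈ U₁, f x = c • L x + b :=
  statement7_general (by lia) (hdim₁.trans hdim₂.symm) hF₁ hne₁ hU₁o hU₁c hf
    fun x hx => ⟨hlam x hx, hconf x hx⟩
end

section
/- Let n ≥ 2, let F be a Minkowski norm on Euclidean ℝⁿ, and let Q ∈ O(n) be a fixed orthogonal transformation. For a unit vector v ∈ ℝⁿ let R_v denote the orthogonal reflection across the hyperplane v^⊥, i.e., R_v(ξ) = ξ − 2⟨v,ξ⟩v. If F(Q(R_v(ξ))) = F(ξ) for every unit vector v and every ξ ∈ ℝⁿ, then F is Euclidean: there is a constant c > 0 such that F(ξ) = c·‖ξ‖ for all ξ ∈ ℝⁿ, where ‖·‖ is the standard Euclidean norm. -/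
open scoped RealInnerProductSpace

/-!
Two vectors of equal norm are exchanged by the reflection across the hyperplane orthogonal to their
difference, and in dimension at least two every vector is fixed by some hyperplane reflection. Hence
`F ξ = F (Q (R_v ξ))` gives `F ξ = F (Q η) = F η` whenever `‖ξ‖ = ‖η‖`: a reflection carrying `ξ` to
`η` yields the first equality, one fixing `η` the second. So `F` is constant on spheres, and
homogeneity makes it a multiple of the norm.
-/

open Submodule

section Hyperplanes

theorem span_singleton_ne_top_of_one_lt_rank {R M : Type*} [Ring R] [StrongRankCondition R]
    [AddCommGroup M] [Module R M] (hM : 1 < Module.rank R M) (x : M) : span R {x} ≠ ⊤ := by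
  intro htop
  have hle : Module.rank R (span R {x}) ≤ 1 := by simpa using rank_span_le (R := R) {x}
  rw [htop, rank_top] at hle
  exact hle.not_gt hM

variable {𝕜 E : Type*} [RCLike 𝕜] [NormedAddCommGroup E] [InnerProductSpace 𝕜 E]

theorem exists_ne_zero_inner_eq_zero (hE : 1 < Module.rank 𝕜 E) (x : E) :
    ∃ v : E, v ≠ 0 ∧ inner 𝕜 v x = 0 := by
  have hbot : (𝕜 ∙ x)ᗮ ≠ ⊥ := by
    simpa only [Ne, orthogonal_eq_bot_iff] using span_singleton_ne_top_of_one_lt_rank hE x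
  obtain ⟨v, hv, hv0⟩ := exists_mem_ne_zero_of_ne_bot hbot
  exact ⟨v, hv0, mem_orthogonal_singleton_iff_inner_left.mp hv⟩

theorem reflection_orthogonal_unit_singleton {v : E} (hv : ‖v‖ = 1) (x : E) :
    (𝕜 ∙ v)ᗮ.reflection x = x - (2 * inner 𝕜 v x) • v := by
  rw [reflection_orthogonal_apply, reflection_apply, starProjection_unit_singleton 𝕜 hv, neg_sub,
    two_smul, two_mul, add_smul]

end Hyperplanes

section Reflections

variable {E : Type*} [NormedAddCommGroup E] [InnerProductSpace ℝ E]

theorem exists_reflection_eq_of_norm_eq (hE : 1 < Module.rank ℝ E) {x y : E} (hxy : ‖x‖ = ‖y‖) :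
    ∃ v : E, ‖v‖ = 1 ∧ (ℝ ∙ v)ᗮ.reflection x = y := by
  suffices ∃ w : E, w ≠ 0 ∧ (ℝ ∙ w)ᗮ.reflection x = y by
    obtain ⟨w, hw, hwxy⟩ := this
    have hspan : (ℝ ∙ (‖w‖⁻¹ • w)) = ℝ ∙ w :=
      span_singleton_smul_eq (inv_ne_zero (norm_ne_zero_iff.mpr hw)).isUnit w
    exact ⟨‖w‖⁻¹ • w, norm_smul_inv_norm (𝕜 := ℝ) hw, by simpa only [hspan] using hwxy⟩
  rcases eq_or_ne x y with rfl | hne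
  · obtain ⟨w, hw, hwx⟩ := exists_ne_zero_inner_eq_zero hE x
    exact ⟨w, hw, reflection_mem_subspace_eq_self <|
      mem_orthogonal_singleton_iff_inner_right.mpr hwx⟩
  · exact ⟨x - y, sub_ne_zero.mpr hne, reflection_sub hxy⟩

theorem eq_of_norm_eq_of_forall_comp_reflection_eq {α : Type*} (hE : 1 < Module.rank ℝ E)
    {f g : E → α} (hfg : ∀ v : E, ‖v‖ = 1 → ∀ x, g ((ℝ ∙ v)ᗮ.reflection x) = f x) {x y : E}
    (hxy : ‖x‖ = ‖y‖) : f x = f y := by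
  have g_eq_f {a b : E} (hab : ‖a‖ = ‖b‖) : g b = f a := by
    obtain ⟨v, hv, rfl⟩ := exists_reflection_eq_of_norm_eq hE hab
    exact hfg v hv a
  exact (g_eq_f hxy).symm.trans (g_eq_f rfl)

end Reflections

theorem eq_norm_smul_of_forall_norm_eq {E α : Type*} [SeminormedAddCommGroup E] [NormedSpace ℝ E]
    [SMul ℝ α] {f : E → α} (hhom : ∀ c : ℝ, 0 ≤ c → ∀ x, f (c • x) = c • f x)
    (hnorm : ∀ x y, ‖x‖ = ‖y‖ → f x = f y) {e : E} (he : ‖e‖ = 1) (x : E) :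
    f x = ‖x‖ • f e := by
  rw [← hhom _ (norm_nonneg x)]
  exact hnorm _ _ (by rw [norm_smul, norm_norm, he, mul_one])

theorem IsMinkowskiNorm.pos_s9 {V : Type*} [AddCommGroup V] [Module ℝ V] [TopologicalSpace V]
    {F : V → ℝ} (hF : IsMinkowskiNorm F) (ξ : V) (hξ : ξ ≠ 0) : 0 < F ξ := by
  obtain ⟨-, hnonneg, -, -, hzero⟩ := hF
  exact (hnonneg ξ).lt_of_ne fun h => hξ (hzero ξ h.symm)

theorem statement9_general {E : Type*} [NormedAddCommGroup E] [InnerProductSpace ℝ E]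
    (hE : 1 < Module.rank ℝ E) (F : E → ℝ) (hpos : ∀ ξ, ξ ≠ 0 → 0 < F ξ)
    (hhom : ∀ c : ℝ, 0 ≤ c → ∀ ξ, F (c • ξ) = c * F ξ) (Q : E → E)
    (hinv : ∀ v : E, ‖v‖ = 1 → ∀ ξ : E, F (Q (ξ - (2 * ⟪v, ξ⟫) • v)) = F ξ) :
    ∃ c : ℝ, 0 < c ∧ ∀ ξ, F ξ = c * ‖ξ‖ := by
  have hsphere (ξ η : E) (h : ‖ξ‖ = ‖η‖) : F ξ = F η :=
    eq_of_norm_eq_of_forall_comp_reflection_eq hE (g := F ∘ Q)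
      (fun v hv ζ => by
        rw [reflection_orthogonal_unit_singleton hv]
        exact hinv v hv ζ) h
  have : Nontrivial E := rank_pos_iff_nontrivial.mp (zero_lt_one.trans hE)
  obtain ⟨e, he⟩ := exists_norm_eq E zero_le_one
  have he0 : e ≠ 0 := norm_ne_zero_iff.mp (he.trans_ne one_ne_zero)
  refine ⟨F e, hpos e he0, fun ξ => ?_⟩
  rw [mul_comm]
  exact eq_norm_smul_of_forall_norm_eq hhom hsphere he ξ

/-- If a Minkowski norm `F` on Euclidean `ℝⁿ` (`n ≥ 2`) is invariant under all the maps
`Q ∘ R_v`, where `Q` is a fixed orthogonal transformation and `R_v` is the reflection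
across the hyperplane `v^⊥` for an arbitrary unit vector `v`, then `F` is Euclidean:
`F = c·‖·‖` for some constant `c > 0`. -/
theorem statement9 (n : ℕ) (hn : 2 ≤ n)
    (F : EuclideanSpace ℝ (Fin n) → ℝ) (hF : IsMinkowskiNorm F)
    (Q : EuclideanSpace ℝ (Fin n) ≃ₗᵢ[ℝ] EuclideanSpace ℝ (Fin n))
    (hinv : ∀ v : EuclideanSpace ℝ (Fin n), ‖v‖ = 1 →
      ∀ ξ : EuclideanSpace ℝ (Fin n), F (Q (ξ - (2 * ⟪v, ξ⟫) • v)) = F ξ) :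
    ∃ c : ℝ, 0 < c ∧ ∀ ξ, F ξ = c * ‖ξ‖ := by
  have hdim : 1 < Module.rank ℝ (EuclideanSpace ℝ (Fin n)) :=
    Module.one_lt_rank_of_one_lt_finrank (by rwa [finrank_euclideanSpace_fin])
  exact statement9_general hdim F hF.pos_s9 hF.2.2.1 Q hinv
end

section
/- The composition of a Euclidean isometry and an inversion cannot be conformal for a non-Euclidean Minkowski norm: let n ≥ 2 and let F be a Minkowski norm on ℝⁿ whose Binet–Legendre scalar product g_F equals the standard inner product of ℝⁿ, and assume F is not the standard Euclidean norm. Let c, b ∈ ℝⁿ, r > 0, Q ∈ O(n), and define f(x) = Q(r²·(x−c)/‖x−c‖²) + b. Then for no nonempty open set U ⊆ ℝⁿ∖{c} does there exist a function λ : U → (0,∞) with F(df_x(ξ)) = λ(x)·F(ξ) for all x ∈ U and all ξ ∈ ℝⁿ; i.e., f is not a conformal map of (ℝⁿ, F) on any domain. -/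
open MeasureTheory
open scoped RealInnerProductSpace

/-!
The differential at `x` of the isometric inversion is a positive multiple of `Q ∘ s`, where `s` is
the reflection in the hyperplane orthogonal to `x - c`. Conformality therefore says that `Q ∘ s`
rescales `F`; as it maps the compact unit sphere onto itself, the factor is `1`, so
`F ∘ Q ∘ s = F` for all mirror directions `x - c` in a nonempty open set. Composing two such
reflections moves a point `ξ` to every nearby point of its sphere, and `F ∘ Q` takes the same value
there. Spheres being connected in dimension at least two, `F ∘ Q` is constant on them and hence
`F = k ‖·‖`. The trace of the Binet–Legendre dual scalar product of `k ‖·‖` is `n / k ^ 2`, which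
forces `k = 1`.
-/

open Filter Metric Module Topology

theorem IsMinkowskiNorm.pos_of_ne_zero {V : Type*} [AddCommGroup V] [Module ℝ V]
    [TopologicalSpace V] {F : V → ℝ} (hF : IsMinkowskiNorm F) {ξ : V} (hξ : ξ ≠ 0) : 0 < F ξ :=
  (hF.2.1 ξ).lt_of_ne' (mt (hF.2.2.2.2 ξ) hξ)

theorem factor_eq_one_of_isCompact {X : Type*} [TopologicalSpace X] {K : Set X} {F : X → ℝ}
    {A : X → X} {l : ℝ} (hK : IsCompact K) (hKne : K.Nonempty) (hcont : ContinuousOn F K)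
    (hpos : ∀ x ∈ K, 0 < F x) (hmaps : Set.MapsTo A K K) (hsurj : Set.SurjOn A K K)
    (hA : ∀ x ∈ K, F (A x) = l * F x) : l = 1 := by
  obtain ⟨x, hx, hmax⟩ := hK.exists_isMaxOn hKne hcont
  obtain ⟨y, hy, rfl⟩ := hsurj hx
  have hle : l * F (A y) ≤ F (A y) := hA _ hx ▸ hmax (hmaps hx)
  have hge : F y ≤ l * F y := hA y hy ▸ hmax hy
  exact le_antisymm ((mul_le_iff_le_one_left (hpos _ hx)).1 hle)
    ((le_mul_iff_one_le_left (hpos y hy)).1 hge)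

section InnerProduct

variable {E : Type*} [NormedAddCommGroup E] [InnerProductSpace ℝ E]

theorem factor_eq_one_of_linearIsometryEquiv [FiniteDimensional ℝ E] [Nontrivial E]
    {F : E → ℝ} (hcont : Continuous F) (hpos : ∀ ξ, ξ ≠ 0 → 0 < F ξ) (A : E ≃ₗᵢ[ℝ] E) {l : ℝ}
    (hA : ∀ ξ, F (A ξ) = l * F ξ) : l = 1 :=
  factor_eq_one_of_isCompact (isCompact_sphere 0 1) (NormedSpace.sphere_nonempty.2 zero_le_one)
    hcont.continuousOn (fun _ hx => hpos _ (ne_of_mem_sphere hx one_ne_zero))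
    (fun x hx => by simpa using hx) (fun x hx => ⟨A.symm x, by simpa using hx, by simp⟩)
    fun x _ => hA x

theorem exists_eq_const_mul_norm [Nontrivial E] {F : E → ℝ} (hpos : ∀ ξ, ξ ≠ 0 → 0 < F ξ)
    (hhom : ∀ t : ℝ, 0 ≤ t → ∀ ξ, F (t • ξ) = t * F ξ)
    (hsphere : ∀ x y, ‖x‖ = ‖y‖ → F x = F y) : ∃ k > 0, F = fun ξ => k * ‖ξ‖ := by
  obtain ⟨e, he⟩ := exists_norm_eq E zero_le_one
  have he0 : e ≠ 0 := norm_ne_zero_iff.1 (he ▸ one_ne_zero)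
  refine ⟨F e, hpos e he0, funext fun ξ => ?_⟩
  rw [hsphere ξ (‖ξ‖ • e) (by simp [norm_smul, he]), hhom _ (norm_nonneg ξ), mul_comm]

theorem exists_mem_inner_ne_zero_of_isOpen {V : Set E} (hVo : IsOpen V) (hVne : V.Nonempty) {ξ : E}
    (hξ : ξ ≠ 0) : ∃ v ∈ V, ⟪v, ξ⟫ ≠ 0 := by
  by_contra! h
  have hV : V ⊆ (ℝ ∙ ξ)ᗮ := fun v hv => Submodule.mem_orthogonal_singleton_iff_inner_left.2 (h v hv)
  have htop : (ℝ ∙ ξ)ᗮ = ⊤ :=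
    Submodule.eq_top_of_nonempty_interior' _ (hVne.mono (interior_maximal hV hVo))
  simp [hξ] at htop

theorem reflection_orthogonal_singleton_sub_self (v ξ : E) :
    (ℝ ∙ v)ᗮ.reflection ξ - ξ = (-2 * (⟪v, ξ⟫ / ‖v‖ ^ 2)) • v := by
  rw [Submodule.reflection_orthogonal_apply, Submodule.reflection_singleton_apply]
  simp only [RCLike.ofReal_real_eq_id, id]
  module

/-- The witness `w` is the difference of the mirror image of `ξ` and `z`, rescaled so that it equals
`v` at `z = ξ`: it depends continuously on `z`, hence stays in `V`. -/
theorem eventually_exists_reflection_comp_reflection_eq {V : Set E} (hVo : IsOpen V) {v ξ : E}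
    (hv : v ∈ V) (hvξ : ⟪v, ξ⟫ ≠ 0) : ∀ᶠ z in 𝓝[sphere 0 ‖ξ‖] ξ,
      ∃ w ∈ V, (ℝ ∙ w)ᗮ.reflection ((ℝ ∙ v)ᗮ.reflection ξ) = z := by
  have hv0 : v ≠ 0 := by rintro rfl; simp at hvξ
  have hsub := reflection_orthogonal_singleton_sub_self v ξ
  have ht : -2 * (⟪v, ξ⟫ / ‖v‖ ^ 2) ≠ 0 := by simp [hvξ, hv0]
  have hnorm : ‖(ℝ ∙ v)ᗮ.reflection ξ‖ = ‖ξ‖ := LinearIsometryEquiv.norm_map _ ξ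
  generalize (ℝ ∙ v)ᗮ.reflection ξ = η, -2 * (⟪v, ξ⟫ / ‖v‖ ^ 2) = t at *
  have hcont : Continuous fun z : E => t⁻¹ • (η - z) := by fun_prop
  have hlim : Tendsto (fun z : E => t⁻¹ • (η - z)) (𝓝 ξ) (𝓝 v) := by
    simpa [hsub, smul_smul, ht] using hcont.tendsto ξ
  filter_upwards [nhdsWithin_le_nhds (hlim (hVo.mem_nhds hv)), self_mem_nhdsWithin] with z hzV hz
  have hspan : (ℝ ∙ (t⁻¹ • (η - z))) = ℝ ∙ (η - z) :=
    Submodule.span_singleton_smul_eq (IsUnit.mk0 _ (inv_ne_zero ht)) _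
  refine ⟨_, hzV, ?_⟩
  simp only [hspan]
  exact Submodule.reflection_sub (hnorm.trans (mem_sphere_zero_iff_norm.1 hz).symm)

theorem eq_of_norm_eq_of_comp_reflection_eq {α : Type*} {G H : E → α} {V : Set E}
    (hrank : 1 < Module.rank ℝ E) (hVo : IsOpen V) (hVne : V.Nonempty)
    (hGH : ∀ v ∈ V, ∀ ξ, G ((ℝ ∙ v)ᗮ.reflection ξ) = H ξ) {x y : E} (hxy : ‖x‖ = ‖y‖) :
    G x = G y := by
  rcases eq_or_ne x 0 with rfl | hx
  · rw [norm_eq_zero.1 (hxy.symm.trans norm_zero)]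
  refine (isPreconnected_sphere hrank 0 ‖x‖).induction₂ (fun z w => G z = G w) (fun ξ hξ => ?_)
    (fun _ _ _ _ _ _ => Eq.trans) (fun _ _ _ _ => Eq.symm) (by simp) (by simp [hxy])
  have hξ0 : ξ ≠ 0 := ne_of_mem_sphere hξ (norm_ne_zero_iff.2 hx)
  obtain ⟨v, hvV, hvξ⟩ := exists_mem_inner_ne_zero_of_isOpen hVo hVne hξ0
  rw [← mem_sphere_zero_iff_norm.1 hξ]
  filter_upwards [eventually_exists_reflection_comp_reflection_eq hVo hvV hvξ]
  rintro z ⟨w, hwV, rfl⟩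
  rw [hGH w hwV, ← hGH v hvV, Submodule.reflection_reflection]

theorem hasFDerivAt_isometry_comp_inversion (Q : E ≃ₗᵢ[ℝ] E) (b : E) (r : ℝ) {c x : E}
    (hx : x ≠ c) :
    HasFDerivAt (fun x => Q ((r ^ 2 / ‖x - c‖ ^ 2) • (x - c)) + b)
      ((r / dist x c) ^ 2 • ((ℝ ∙ (x - c))ᗮ.reflection.trans Q : E →L[ℝ] E)) x := by
  have hinv := (EuclideanGeometry.hasFDerivAt_inversion (R := r) hx).sub_const c
  convert ((Q : E →L[ℝ] E).hasFDerivAt.comp x hinv).add_const b using 1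
  · ext y
    simp [EuclideanGeometry.inversion_def, dist_eq_norm, div_pow]
  · ext ζ
    simp

theorem apply_reflection_eq_of_conformal_inversion [FiniteDimensional ℝ E] [Nontrivial E]
    {F : E → ℝ} (hcont : Continuous F) (hpos : ∀ ξ, ξ ≠ 0 → 0 < F ξ)
    (hhom : ∀ t : ℝ, 0 ≤ t → ∀ ξ, F (t • ξ) = t * F ξ) (Q : E ≃ₗᵢ[ℝ] E) (b : E) {r : ℝ}
    (hr : r ≠ 0) {c x : E} (hx : x ≠ c) {l : ℝ}
    (hconf : ∀ ξ,
      F (fderiv ℝ (fun x => Q ((r ^ 2 / ‖x - c‖ ^ 2) • (x - c)) + b) x ξ) = l * F ξ) (ξ : E) :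
    F (Q ((ℝ ∙ (x - c))ᗮ.reflection ξ)) = F ξ := by
  have hs : 0 < (r / dist x c) ^ 2 := by have := dist_ne_zero.2 hx; positivity
  have hscale : ∀ ζ, F (((ℝ ∙ (x - c))ᗮ.reflection.trans Q) ζ) =
      l / (r / dist x c) ^ 2 * F ζ := fun ζ => by
    have hζ := hconf ζ
    rw [(hasFDerivAt_isometry_comp_inversion Q b r hx).fderiv, smul_apply,
      hhom _ hs.le] at hζ
    rw [div_mul_eq_mul_div, eq_div_iff hs.ne', mul_comm]
    exact hζ
  have hone := factor_eq_one_of_linearIsometryEquiv hcont hpos _ hscale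
  simpa [hone] using hscale ξ

theorem exists_eq_const_mul_norm_of_conformal_inversion [FiniteDimensional ℝ E]
    (hd : 2 ≤ finrank ℝ E) {F : E → ℝ} (hcont : Continuous F) (hpos : ∀ ξ, ξ ≠ 0 → 0 < F ξ)
    (hhom : ∀ t : ℝ, 0 ≤ t → ∀ ξ, F (t • ξ) = t * F ξ) (Q : E ≃ₗᵢ[ℝ] E) (c b : E) {r : ℝ}
    (hr : r ≠ 0) {U : Set E} (hUo : IsOpen U) (hUne : U.Nonempty) (hUc : U ⊆ {x | x ≠ c})
    (hconf : ∀ x ∈ U, ∃ l : ℝ, ∀ ξ,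
      F (fderiv ℝ (fun x => Q ((r ^ 2 / ‖x - c‖ ^ 2) • (x - c)) + b) x ξ) = l * F ξ) :
    ∃ k > 0, F = fun ξ => k * ‖ξ‖ := by
  have : Nontrivial E := nontrivial_of_finrank_pos (R := ℝ) (by lia)
  refine exists_eq_const_mul_norm hpos hhom fun x y hxy => ?_
  have hrefl : ∀ v ∈ (· + c) ⁻¹' U, ∀ ξ, F (Q ((ℝ ∙ v)ᗮ.reflection ξ)) = F ξ := fun v hv ξ => by
    obtain ⟨l, hl⟩ := hconf _ hv
    simpa using apply_reflection_eq_of_conformal_inversion hcont hpos hhom Q b hr (hUc hv) hl ξ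
  have hsphere := eq_of_norm_eq_of_comp_reflection_eq (G := F ∘ Q)
    (by simpa using lt_rank_of_lt_finrank (show 1 < finrank ℝ E by lia))
    (hUo.preimage (continuous_add_const c)) (hUne.preimage (add_right_surjective c)) hrefl
    (x := Q.symm x) (y := Q.symm y) (by simpa using hxy)
  simpa using hsphere

end InnerProduct

section Moments

theorem setIntegral_ball_norm_pow {E : Type*} [NormedAddCommGroup E] [NormedSpace ℝ E]
    [FiniteDimensional ℝ E] [Nontrivial E] [MeasurableSpace E] [BorelSpace E] (μ : Measure E)
    [μ.IsAddHaarMeasure] (p : ℕ) {ρ : ℝ} (hρ : 0 ≤ ρ) :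
    ∫ x in ball (0 : E) ρ, ‖x‖ ^ p ∂μ =
      finrank ℝ E / (finrank ℝ E + p) * ρ ^ p * μ.real (ball 0 ρ) := by
  have hd : 0 < finrank ℝ E := finrank_pos
  have hvol : μ.real (ball (0 : E) ρ) = ρ ^ finrank ℝ E * μ.real (ball 0 1) := by
    rw [measureReal_def, Measure.addHaar_ball μ 0 hρ, ENNReal.toReal_mul,
      ENNReal.toReal_ofReal (by positivity), measureReal_def]
  have hradial : ∀ x : E, (ball (0 : E) ρ).indicator (‖·‖ ^ p) x =
      (Set.Iio ρ).indicator (· ^ p) ‖x‖ := fun x => by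
    by_cases hx : ‖x‖ < ρ <;> simp [hx]
  have hweight : ∀ y : ℝ, y ^ (finrank ℝ E - 1) • (Set.Iio ρ).indicator (· ^ p) y =
      (Set.Iio ρ).indicator (· ^ (finrank ℝ E - 1 + p)) y := fun y => by
    by_cases hy : y < ρ <;> simp [hy, pow_add]
  have hint : ∫ y in Set.Ioi (0 : ℝ), (Set.Iio ρ).indicator (· ^ (finrank ℝ E - 1 + p)) y =
      ρ ^ (finrank ℝ E + p) / (finrank ℝ E + p) := by
    rw [setIntegral_indicator measurableSet_Iio, Set.Ioi_inter_Iio, ← integral_Ioc_eq_integral_Ioo,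
      ← intervalIntegral.integral_of_le hρ, integral_pow, Nat.cast_add, Nat.cast_pred hd,
      show finrank ℝ E - 1 + p + 1 = finrank ℝ E + p by lia, zero_pow (by lia)]
    ring
  rw [← integral_indicator isOpen_ball.measurableSet]
  simp_rw [hradial]
  rw [integral_fun_norm_addHaar μ ((Set.Iio ρ).indicator (· ^ p))]
  simp_rw [hweight]
  rw [hint, hvol, nsmul_eq_mul, smul_eq_mul, pow_add]
  ring

variable {E : Type*} [NormedAddCommGroup E] [InnerProductSpace ℝ E] [MeasurableSpace E]
  [BorelSpace E]

theorem sum_integral_orthonormalBasis_inner_mul_inner {ι : Type*} [Fintype ι]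
    (e : OrthonormalBasis ι ℝ E) {ν : Measure E} (hν : Integrable (fun x => ‖x‖ ^ 2) ν) :
    ∑ i, ∫ x, ⟪e i, x⟫ * ⟪e i, x⟫ ∂ν = ∫ x, ‖x‖ ^ 2 ∂ν := by
  have : FiniteDimensional ℝ E := e.toBasis.finiteDimensional_of_finite
  have hint : ∀ i, Integrable (fun x => ⟪e i, x⟫ * ⟪e i, x⟫) ν := fun i =>
    hν.mono' (by fun_prop) (.of_forall fun x => by
      have hx := abs_real_inner_le_norm (e i) x
      rw [e.norm_eq_one, one_mul] at hx
      rw [Real.norm_eq_abs, abs_mul, ← sq]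
      gcongr)
  rw [← integral_finsetSum _ fun i _ => hint i]
  simp_rw [← sq, e.sum_sq_inner_right]

/-- The Binet–Legendre dual scalar product of `F` with respect to the Haar measure `μ`, where the
dual of `E` is identified with `E` through the inner product. -/
noncomputable def binetLegendreDual (μ : Measure E) (F : E → ℝ) (a b : E) : ℝ :=
  (finrank ℝ E + 2) / μ.real {ξ | F ξ < 1} * ∫ η in {ξ | F ξ < 1}, ⟪a, η⟫ * ⟪b, η⟫ ∂μ

variable [FiniteDimensional ℝ E] [Nontrivial E] (μ : Measure E) [μ.IsAddHaarMeasure]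

theorem sum_binetLegendreDual_const_mul_norm {ι : Type*} [Fintype ι] (e : OrthonormalBasis ι ℝ E)
    {k : ℝ} (hk : 0 < k) :
    ∑ i, binetLegendreDual μ (fun ξ => k * ‖ξ‖) (e i) (e i) = finrank ℝ E * k⁻¹ ^ 2 := by
  have hball : {ξ : E | k * ‖ξ‖ < 1} = ball 0 k⁻¹ := by
    ext ξ
    simp [← lt_div_iff₀' hk]
  have hint : IntegrableOn (fun x : E => ‖x‖ ^ 2) (ball 0 k⁻¹) μ :=
    ((continuous_norm.pow 2).continuousOn.integrableOn_compact
      (isCompact_closedBall 0 k⁻¹)).mono_set ball_subset_closedBall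
  have hvol : μ.real (ball (0 : E) k⁻¹) ≠ 0 :=
    (measureReal_ne_zero_iff).2 (measure_ball_pos μ 0 (inv_pos.2 hk)).ne'
  simp only [binetLegendreDual, hball]
  rw [← Finset.mul_sum, sum_integral_orthonormalBasis_inner_mul_inner e hint,
    setIntegral_ball_norm_pow μ 2 (inv_pos.2 hk).le]
  generalize μ.real (ball (0 : E) k⁻¹) = v at hvol
  push_cast
  field_simp

theorem eq_one_of_binetLegendreDual_const_mul_norm {k : ℝ} (hk : 0 < k)
    (hBL : ∀ a b, binetLegendreDual μ (fun ξ : E => k * ‖ξ‖) a b = ⟪a, b⟫) : k = 1 := by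
  have htrace := sum_binetLegendreDual_const_mul_norm μ (stdOrthonormalBasis ℝ E) hk
  have hd : (finrank ℝ E : ℝ) ≠ 0 := Nat.cast_ne_zero.2 finrank_pos.ne'
  simp only [hBL, OrthonormalBasis.inner_eq_one, Finset.sum_const, Finset.card_univ,
    Fintype.card_fin, nsmul_eq_mul, mul_right_inj' hd] at htrace
  exact inv_eq_one.1 ((pow_eq_one_iff_of_nonneg (inv_pos.2 hk).le two_ne_zero).1 htrace.symm)

end Moments

theorem statement10_general {E : Type*} [NormedAddCommGroup E] [InnerProductSpace ℝ E]
    [FiniteDimensional ℝ E] [MeasurableSpace E] [BorelSpace E] (μ : Measure E)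
    [μ.IsAddHaarMeasure] (hd : 2 ≤ finrank ℝ E) {F : E → ℝ} (hcont : Continuous F)
    (hpos : ∀ ξ, ξ ≠ 0 → 0 < F ξ) (hhom : ∀ t : ℝ, 0 ≤ t → ∀ ξ, F (t • ξ) = t * F ξ)
    (hBL : ∀ a b, binetLegendreDual μ F a b = ⟪a, b⟫) (Q : E ≃ₗᵢ[ℝ] E) (c b : E) {r : ℝ}
    (hr : r ≠ 0) {U : Set E} (hUo : IsOpen U) (hUne : U.Nonempty) (hUc : U ⊆ {x | x ≠ c})
    (hconf : ∀ x ∈ U, ∃ l : ℝ, ∀ ξ,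
      F (fderiv ℝ (fun x => Q ((r ^ 2 / ‖x - c‖ ^ 2) • (x - c)) + b) x ξ) = l * F ξ) (ξ : E) :
    F ξ = ‖ξ‖ := by
  have : Nontrivial E := nontrivial_of_finrank_pos (R := ℝ) (by lia)
  obtain ⟨k, hk, rfl⟩ := exists_eq_const_mul_norm_of_conformal_inversion hd hcont hpos hhom Q c b
    hr hUo hUne hUc hconf
  simp [eq_one_of_binetLegendreDual_const_mul_norm μ hk hBL]

/-- The composition of a Euclidean isometry and an inversion cannot be conformal for a
non-Euclidean Minkowski norm: if `F` is a Minkowski norm on `ℝⁿ` (`n ≥ 2`) whose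
Binet–Legendre scalar product is the standard inner product (expressed dually: the
Binet–Legendre dual scalar product is the standard dual inner product), and `F` is not
the standard Euclidean norm, then the map `f(x) = Q(r²(x−c)/‖x−c‖²) + b` is not
conformal for `F` on any nonempty open set `U ⊆ ℝⁿ∖{c}`. -/
theorem statement10 (n : ℕ) (hn : 2 ≤ n)
    (F : EuclideanSpace ℝ (Fin n) → ℝ) (hF : IsMinkowskiNorm F)
    -- the Binet–Legendre scalar product of `F` is the standard inner product
    (hBL : ∀ a b : EuclideanSpace ℝ (Fin n),
      ((n + 2 : ℝ) / (volume {ξ : EuclideanSpace ℝ (Fin n) | F ξ < 1}).toReal) *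
        ∫ η in {ξ : EuclideanSpace ℝ (Fin n) | F ξ < 1}, ⟪a, η⟫ * ⟪b, η⟫ = ⟪a, b⟫)
    -- `F` is not the standard Euclidean norm
    (hne : ¬ ∀ ξ, F ξ = ‖ξ‖)
    (c b : EuclideanSpace ℝ (Fin n)) (r : ℝ) (hr : 0 < r)
    (Q : EuclideanSpace ℝ (Fin n) ≃ₗᵢ[ℝ] EuclideanSpace ℝ (Fin n))
    (f : EuclideanSpace ℝ (Fin n) → EuclideanSpace ℝ (Fin n))
    (hf : ∀ x, f x = Q ((r ^ 2 / ‖x - c‖ ^ 2) • (x - c)) + b)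
    (U : Set (EuclideanSpace ℝ (Fin n)))
    (hUo : IsOpen U) (hUne : U.Nonempty) (hUc : U ⊆ {x | x ≠ c}) :
    ¬ ∃ lam : EuclideanSpace ℝ (Fin n) → ℝ, (∀ x ∈ U, 0 < lam x) ∧
      ∀ x ∈ U, ∀ ξ, F (fderiv ℝ f x ξ) = lam x * F ξ := by
  rintro ⟨lam, -, hconf⟩
  obtain rfl := funext hf
  exact hne (statement10_general volume (by simpa using hn) hF.1 (fun _ => hF.pos_of_ne_zero)
    hF.2.2.1 (by simpa [binetLegendreDual, measureReal_def] using hBL) Q c b hr.ne' hUo hUne hUc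
    fun x hx => ⟨lam x, hconf x hx⟩)
end

section
/- Let U ⊆ ℝⁿ be an open set with 0 ∈ U and let F : U × ℝⁿ → ℝ be a continuous Finsler metric on U (each F(x,·) a Minkowski norm). Let Q ∈ O(n) and 0 < a < 1, and set f(x) = a·Q(x). Assume f(U) ⊆ U and that f is a similarity for F with dilation constant a, i.e., F(a·Q(x), a·Q(ξ)) = a·F(x,ξ) for all x ∈ U and ξ ∈ ℝⁿ. Then F is independent of the base point: F(x,ξ) = F(0,ξ) for all x ∈ U and all ξ ∈ ℝⁿ; that is, F is the restriction of a Minkowski metric. -/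
/-!
Homogeneity turns the similarity condition into the invariance `F (a • Q x) (Q ξ) = F x ξ`, and
hence into `F (aᵏQᵏx) (Qᵏξ) = F x ξ` for linear `Q` and every `k`. The base points `aᵏQᵏx` tend
to `0`, while the bounded vectors `Qᵏξ` accumulate at some `η` which depends on `ξ` but not on `x`.
By continuity `F x ξ = F 0 η` for every `x ∈ U`, and the right-hand side does not involve `x`.
-/

section Dynamics

open Filter Set Topology

variable {X Y Z : Type*} {f : X → X} {g : Y → Y} {F : X → Y → Z} {U : Set X}

theorem apply_iterate_iterate_of_mapsTo (hf : MapsTo f U U)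
    (hF : ∀ x ∈ U, ∀ y, F (f x) (g y) = F x y) {x : X} (hx : x ∈ U) (y : Y) (k : ℕ) :
    F (f^[k] x) (g^[k] y) = F x y := by
  induction k with
  | zero => rfl
  | succ k ih =>
    rw [Function.iterate_succ_apply', Function.iterate_succ_apply', hF _ (hf.iterate k hx), ih]

variable [TopologicalSpace X] [TopologicalSpace Y] [TopologicalSpace Z] [T2Space Z] {x₀ : X}

theorem apply_eq_of_tendsto_iterate_of_mapClusterPt (hf : MapsTo f U U)
    (hF : ∀ x ∈ U, ∀ y, F (f x) (g y) = F x y) {x : X} (hx : x ∈ U) {y η : Y}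
    (hcont : ContinuousWithinAt (fun p : X × Y => F p.1 p.2) (U ×ˢ univ) (x₀, η))
    (hlim : Tendsto (fun k => f^[k] x) atTop (𝓝 x₀))
    (hη : MapClusterPt η atTop fun k => g^[k] y) :
    F x y = F x₀ η := by
  obtain ⟨𝒰, h𝒰, hg⟩ := mapClusterPt_iff_ultrafilter.1 hη
  have horbit : Tendsto (fun k => (f^[k] x, g^[k] y)) 𝒰 (𝓝[U ×ˢ univ] (x₀, η)) :=
    tendsto_nhdsWithin_iff.2 ⟨(hlim.mono_left h𝒰).prodMk_nhds hg,
      Eventually.of_forall fun k => ⟨hf.iterate k hx, mem_univ _⟩⟩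
  have hF_orbit : Tendsto (fun k => F (f^[k] x) (g^[k] y)) 𝒰 (𝓝 (F x₀ η)) :=
    hcont.tendsto.comp horbit
  simp only [apply_iterate_iterate_of_mapsTo hf hF hx] at hF_orbit
  exact tendsto_nhds_unique tendsto_const_nhds hF_orbit

end Dynamics

section Norm

open Filter Topology

variable {E : Type*} [SeminormedAddCommGroup E] {T : E → E} {c : ℝ}

theorem norm_iterate_le_pow_mul (hc : 0 ≤ c) (hT : ∀ v, ‖T v‖ ≤ c * ‖v‖) (k : ℕ) (v : E) :
    ‖T^[k] v‖ ≤ c ^ k * ‖v‖ := by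
  induction k with
  | zero => simp
  | succ k ih =>
    calc ‖T^[k + 1] v‖ = ‖T (T^[k] v)‖ := by rw [Function.iterate_succ_apply']
      _ ≤ c * ‖T^[k] v‖ := hT _
      _ ≤ c * (c ^ k * ‖v‖) := by gcongr
      _ = c ^ (k + 1) * ‖v‖ := by ring

theorem tendsto_iterate_zero_of_norm_le_mul (hc₀ : 0 ≤ c) (hc₁ : c < 1)
    (hT : ∀ v, ‖T v‖ ≤ c * ‖v‖) (v : E) : Tendsto (fun k => T^[k] v) atTop (𝓝 0) :=
  squeeze_zero_norm (fun k => norm_iterate_le_pow_mul hc₀ hT k v) <| by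
    simpa only [zero_mul] using (tendsto_pow_atTop_nhds_zero_of_lt_one hc₀ hc₁).mul_const ‖v‖

theorem exists_mapClusterPt_iterate_of_norm_le [ProperSpace E] (hT : ∀ v, ‖T v‖ ≤ ‖v‖) (v : E) :
    ∃ w, MapClusterPt w atTop fun k => T^[k] v := by
  have hbounded (k : ℕ) : ‖T^[k] v‖ ≤ ‖v‖ := by
    simpa only [one_pow, one_mul] using
      norm_iterate_le_pow_mul zero_le_one (by simpa only [one_mul] using hT) k v
  obtain ⟨w, -, hw⟩ := (isCompact_closedBall (0 : E) ‖v‖).exists_mapClusterPt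
    (f := atTop) (u := fun k => T^[k] v) (by simp [hbounded])
  exact ⟨w, hw⟩

end Norm

theorem statement11_general {E : Type*} [SeminormedAddCommGroup E] [NormedSpace ℝ E]
    [ProperSpace E] {U : Set E} (h0 : (0 : E) ∈ U) {F : E → E → ℝ}
    (hFcont : ∀ η, ContinuousWithinAt (fun p : E × E => F p.1 p.2) (U ×ˢ Set.univ) (0, η))
    (hFhom : ∀ x ∈ U, ∀ c : ℝ, 0 < c → ∀ ξ, F x (c • ξ) = c * F x ξ)
    {Q : E → E} (hQ : ∀ v, ‖Q v‖ ≤ ‖v‖) {a : ℝ} (ha0 : 0 < a) (ha1 : a < 1)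
    (hmaps : Set.MapsTo (fun x => a • Q x) U U)
    (hsim : ∀ x ∈ U, ∀ ξ, F (a • Q x) (a • Q ξ) = a * F x ξ) :
    ∀ x ∈ U, ∀ ξ, F x ξ = F 0 ξ := by
  have hinv : ∀ x ∈ U, ∀ ξ, F (a • Q x) (Q ξ) = F x ξ := fun x hx ξ =>
    mul_left_cancel₀ ha0.ne' <| by rw [← hFhom _ (hmaps hx) a ha0, hsim x hx]
  have hcontract (v : E) : ‖a • Q v‖ ≤ a * ‖v‖ := by
    rw [norm_smul, Real.norm_of_nonneg ha0.le]
    exact mul_le_mul_of_nonneg_left (hQ v) ha0.le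
  intro x hx ξ
  obtain ⟨η, hη⟩ := exists_mapClusterPt_iterate_of_norm_le hQ ξ
  have hlimit : ∀ y ∈ U, F y ξ = F 0 η := fun y hy =>
    apply_eq_of_tendsto_iterate_of_mapClusterPt hmaps hinv hy (hFcont η)
      (tendsto_iterate_zero_of_norm_le_mul ha0.le ha1 hcontract y) hη
  rw [hlimit x hx, hlimit 0 h0]

/-- If a continuous Finsler metric `F` on an open set `U ∋ 0` of `ℝⁿ` admits the
linear contraction `f(x) = a·Q(x)` (`Q ∈ O(n)`, `0 < a < 1`, `f(U) ⊆ U`) as a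
similarity with dilation constant `a`, then `F` is independent of the base point:
`F(x,ξ) = F(0,ξ)`, i.e. `F` is the restriction of a Minkowski metric. -/
theorem statement11 (n : ℕ)
    (U : Set (EuclideanSpace ℝ (Fin n))) (hU : IsOpen U) (h0 : (0 : EuclideanSpace ℝ (Fin n)) ∈ U)
    (F : EuclideanSpace ℝ (Fin n) → EuclideanSpace ℝ (Fin n) → ℝ)
    (hFcont : ContinuousOn (fun p : EuclideanSpace ℝ (Fin n) × EuclideanSpace ℝ (Fin n) =>
      F p.1 p.2) (U ×ˢ (Set.univ : Set (EuclideanSpace ℝ (Fin n)))))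
    (hFmink : ∀ x ∈ U, IsMinkowskiNorm (F x))
    (Q : EuclideanSpace ℝ (Fin n) ≃ₗᵢ[ℝ] EuclideanSpace ℝ (Fin n))
    (a : ℝ) (ha0 : 0 < a) (ha1 : a < 1)
    (hmaps : ∀ x ∈ U, a • Q x ∈ U)
    (hsim : ∀ x ∈ U, ∀ ξ : EuclideanSpace ℝ (Fin n),
      F (a • Q x) (a • Q ξ) = a * F x ξ) :
    ∀ x ∈ U, ∀ ξ : EuclideanSpace ℝ (Fin n), F x ξ = F 0 ξ := by
  exact statement11_general h0 (fun η => hFcont (0, η) ⟨h0, Set.mem_univ η⟩)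
    (fun x hx c hc => (hFmink x hx).2.2.1 c hc.le) (fun v => (Q.norm_map v).le) ha0 ha1 hmaps hsim
end

section
/- Let Q ∈ O(n), b ∈ ℝⁿ, and suppose the affine map f(x) = Q(x) + b has no fixed point in ℝⁿ. Then there exists a vector v₀ ∈ ℝⁿ such that, with T(x) = x + v₀, the conjugate satisfies (T⁻¹ ∘ f ∘ T)(x) = Q(x) + b₁ for some vector b₁ ∈ ℝⁿ with Q(b₁) = b₁ and b₁ ≠ 0. -/
/-!
Conjugating by the translation by `v` replaces `b` by `b - (v - Q v)`, so `b` may be changed by any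
element of the range of `1 - Q`. Choosing `v - Q v` to be the orthogonal projection of `b` onto that
range leaves a remainder `b₁` orthogonal to it. Then `⟪Q b₁, b₁⟫ = ‖b₁‖ ^ 2` while `‖Q b₁‖ ≤ ‖b₁‖`,
and the equality case of the Cauchy–Schwarz inequality gives `Q b₁ = b₁`.
-/

section Contraction

variable {𝕜 E : Type*} [RCLike 𝕜] [NormedAddCommGroup E] [InnerProductSpace 𝕜 E]
  {f : E →ₗ[𝕜] E}

theorem apply_eq_self_of_mem_orthogonal_range_one_sub (hf : ∀ x, ‖f x‖ ≤ ‖x‖) {w : E}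
    (hw : w ∈ (1 - f).rangeᗮ) : f w = w := by
  have inner_sub_apply : inner 𝕜 (w - f w) w = 0 :=
    Submodule.inner_right_of_mem_orthogonal (LinearMap.mem_range_self (1 - f) w) hw
  have inner_apply : inner 𝕜 (f w) w = inner 𝕜 w w := by
    rw [inner_sub_left, sub_eq_zero] at inner_sub_apply
    exact inner_sub_apply.symm
  refine eq_of_norm_le_re_inner_eq_norm_sq (𝕜 := 𝕜) (hf w) ?_
  rw [inner_apply, inner_self_eq_norm_sq]

theorem exists_eq_sub_apply_add_fixed (hf : ∀ x, ‖f x‖ ≤ ‖x‖)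
    [(1 - f).range.HasOrthogonalProjection] (b : E) :
    ∃ v w : E, f w = w ∧ b = v - f v + w := by
  obtain ⟨_, ⟨v, rfl⟩, w, hw, hb⟩ := (1 - f).range.exists_add_mem_mem_orthogonal b
  exact ⟨v, w, apply_eq_self_of_mem_orthogonal_range_one_sub hf hw, hb⟩

theorem statement12_general (hf : ∀ x, ‖f x‖ ≤ ‖x‖)
    [(1 - f).range.HasOrthogonalProjection] (b : E) (hnofix : ∀ x, f x + b ≠ x) :
    ∃ v₀ b₁ : E, f b₁ = b₁ ∧ b₁ ≠ 0 ∧ ∀ x, (f (x + v₀) + b) - v₀ = f x + b₁ := by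
  obtain ⟨v, w, hw, rfl⟩ := exists_eq_sub_apply_add_fixed hf b
  refine ⟨v, w, hw, ?_, fun x ↦ ?_⟩
  · rintro rfl
    exact hnofix v (by abel)
  · rw [map_add]
    abel

end Contraction

/-- If the affine map `f(x) = Q(x) + b` (`Q ∈ O(n)`) has no fixed point in `ℝⁿ`, then
conjugating by a suitable translation `T(x) = x + v₀` yields
`(T⁻¹ ∘ f ∘ T)(x) = Q(x) + b₁` with `Q(b₁) = b₁` and `b₁ ≠ 0`. -/
theorem statement12 (n : ℕ)
    (Q : EuclideanSpace ℝ (Fin n) ≃ₗᵢ[ℝ] EuclideanSpace ℝ (Fin n))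
    (b : EuclideanSpace ℝ (Fin n))
    (hnofix : ∀ x : EuclideanSpace ℝ (Fin n), Q x + b ≠ x) :
    ∃ v₀ b₁ : EuclideanSpace ℝ (Fin n), Q b₁ = b₁ ∧ b₁ ≠ 0 ∧
      ∀ x : EuclideanSpace ℝ (Fin n), (Q (x + v₀) + b) - v₀ = Q x + b₁ :=
  statement12_general (f := Q.toLinearEquiv.toLinearMap) (fun x ↦ (Q.norm_map x).le) b hnofix
end

section
/- A uniform limit of flat metrics is flat: let X be a nonempty set, let d and d_m (m ∈ ℕ) be metrics on X such that d_m converges to d uniformly, i.e., sup_{x,y ∈ X} |d_m(x,y) − d(x,y)| → 0 as m → ∞, and suppose (X,d) is compact. If for every m there exists an isometric embedding φ_m : (X,d_m) → ℝⁿ (Euclidean), i.e., ‖φ_m(x) − φ_m(y)‖ = d_m(x,y) for all x,y ∈ X, then there exists an isometric embedding φ : (X,d) → ℝⁿ, i.e., ‖φ(x) − φ(y)‖ = d(x,y) for all x,y ∈ X. -/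
/-!
Translate each embedding so that it sends a base point to the origin. The image of every point
then stays bounded because its distance to the origin converges, so in a proper space it converges
along an ultrafilter. The pointwise limit of the embeddings along that ultrafilter realizes the
limiting distances by continuity of the distance.
-/

open Filter Topology

theorem tendsto_atTop_iff_dist_le {ι E : Type*} [Preorder ι] [IsDirectedOrder ι] [Nonempty ι]
    [PseudoMetricSpace E] {u : ι → E} {a : E} :
    Tendsto u atTop (𝓝 a) ↔ ∀ ε > 0, ∃ N, ∀ n ≥ N, dist (u n) a ≤ ε := by
  simp only [atTop_basis.tendsto_iff Metric.nhds_basis_closedBall, true_and, Set.mem_Ici,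
    Metric.mem_closedBall]

theorem exists_tendsto_ultrafilter_of_isBoundedUnder_dist {ι E : Type*} [PseudoMetricSpace E]
    [ProperSpace E] {U : Ultrafilter ι} {g : ι → E} {c : E}
    (hg : IsBoundedUnder (· ≤ ·) U fun i => dist (g i) c) : ∃ a, Tendsto g U (𝓝 a) := by
  obtain ⟨r, hr⟩ := hg.eventually_le
  have hmem : ∀ᶠ i in (U : Filter ι), g i ∈ Metric.closedBall c r := hr
  obtain ⟨a, -, ha⟩ := (isCompact_closedBall c r).ultrafilter_le_nhds' (U.map g) hmem
  exact ⟨a, ha⟩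

theorem exists_dist_eq_of_tendsto_dist_of_isBoundedUnder {ι X E : Type*} [PseudoMetricSpace E]
    [ProperSpace E] {l : Filter ι} [l.NeBot] {f : ι → X → E} {δ : X → X → ℝ} {c : E}
    (hbdd : ∀ x, IsBoundedUnder (· ≤ ·) l fun i => dist (f i x) c)
    (hδ : ∀ x y, Tendsto (fun i => dist (f i x) (f i y)) l (𝓝 (δ x y))) :
    ∃ ψ : X → E, ∀ x y, dist (ψ x) (ψ y) = δ x y := by
  have hU : (Ultrafilter.of l : Filter ι) ≤ l := Ultrafilter.of_le l
  choose ψ hψ using fun x =>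
    exists_tendsto_ultrafilter_of_isBoundedUnder_dist (g := (f · x)) ((hbdd x).mono hU)
  exact ⟨ψ, fun x y => tendsto_nhds_unique ((hψ x).dist (hψ y)) ((hδ x y).mono_left hU)⟩

theorem statement13_general {ι X E : Type*} [SeminormedAddCommGroup E] [ProperSpace E]
    {l : Filter ι} [l.NeBot] {φ : ι → X → E} {δ : X → X → ℝ}
    (hφ : ∀ x y, Tendsto (fun i => ‖φ i x - φ i y‖) l (𝓝 (δ x y))) :
    ∃ ψ : X → E, ∀ x y, ‖ψ x - ψ y‖ = δ x y := by
  rcases isEmpty_or_nonempty X with _ | ⟨⟨x₀⟩⟩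
  · exact ⟨isEmptyElim, isEmptyElim⟩
  have hbdd (x : X) : IsBoundedUnder (· ≤ ·) l fun i => dist (φ i x - φ i x₀) 0 := by
    simpa only [dist_zero_right] using (hφ x x₀).isBoundedUnder_le
  have hdist (x y : X) :
      Tendsto (fun i => dist (φ i x - φ i x₀) (φ i y - φ i x₀)) l (𝓝 (δ x y)) := by
    simpa only [dist_eq_norm_sub, sub_sub_sub_cancel_right] using hφ x y
  simpa only [dist_eq_norm_sub] using
    exists_dist_eq_of_tendsto_dist_of_isBoundedUnder hbdd hdist

/-- A uniform limit of flat metrics is flat: if `(X, dist)` is a nonempty compact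
metric space, `d_m` are metrics on `X` converging uniformly to `dist`, and each
`(X, d_m)` embeds isometrically into Euclidean `ℝⁿ`, then `(X, dist)` embeds
isometrically into Euclidean `ℝⁿ`. -/
theorem statement13 (n : ℕ) (X : Type*) [Nonempty X] [MetricSpace X] [CompactSpace X]
    (d : ℕ → X → X → ℝ)
    (hnonneg : ∀ m x y, 0 ≤ d m x y)
    (hsymm : ∀ m x y, d m x y = d m y x)
    (heq : ∀ m x y, d m x y = 0 ↔ x = y)
    (htriangle : ∀ m x y z, d m x z ≤ d m x y + d m y z)
    (hconv : ∀ ε : ℝ, 0 < ε → ∃ N : ℕ, ∀ m ≥ N, ∀ x y : X, |d m x y - dist x y| ≤ ε)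
    (φ : ℕ → X → EuclideanSpace ℝ (Fin n))
    (hφ : ∀ m x y, ‖φ m x - φ m y‖ = d m x y) :
    ∃ ψ : X → EuclideanSpace ℝ (Fin n), ∀ x y : X, ‖ψ x - ψ y‖ = dist x y := by
  have hd (x y : X) : Tendsto (d · x y) atTop (𝓝 (dist x y)) :=
    tendsto_atTop_iff_dist_le.2 fun ε hε => (hconv ε hε).imp fun N hN m hm => hN m hm x y
  exact statement13_general (φ := φ) (by simpa only [hφ] using hd)
end

section
/- A holomorphic map sending parallel lines to parallel lines is affine: let U ⊆ ℂ be open and connected, f : U → ℂ holomorphic, and u, u' ∈ ℂ∖{0}. Suppose that for all z, w ∈ U with w − z ∈ ℝ·u and the straight segment from z to w contained in U, one has f(w) − f(z) ∈ ℝ·u'. Then there exist a, b ∈ ℂ such that f(z) = a·z + b for all z ∈ U. -/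
/-!
The derivative of `f` in direction `u`, namely `f' z * u`, is a limit of real multiples of the
increments `f (z + t • u) - f z`, hence lies in any real subspace `K` containing them. If `K ≠ ℂ`,
for instance `K = ℝ·u'`, the holomorphic function `z ↦ f' z * u` takes values in a set with empty
interior. By the open mapping theorem it is constant, and therefore `f` is affine.
-/

open Filter Set Topology

theorem hasLineDerivAt_mem_of_frequently_sub_mem {𝕜 E F : Type*} [NontriviallyNormedField 𝕜]
    [AddCommGroup E] [Module 𝕜 E] [NormedAddCommGroup F] [NormedSpace 𝕜 F]
    {K : Submodule 𝕜 F} (hK : IsClosed (K : Set F)) {f : E → F} {f' : F} {x v : E}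
    (hf : HasLineDerivAt 𝕜 f f' x v)
    (hmem : ∃ᶠ t : 𝕜 in 𝓝[≠] 0, f (x + t • v) - f x ∈ K) : f' ∈ K :=
  hK.mem_of_frequently_of_tendsto (hmem.mono fun t ht ↦ K.smul_mem t⁻¹ ht) hf.tendsto_slope_zero

theorem exists_eq_const_of_mapsTo_of_interior_eq_empty {E : Type*} [NormedAddCommGroup E]
    [NormedSpace ℂ E] {U : Set E} (hUo : IsOpen U) (hUc : IsPreconnected U)
    {g : E → ℂ} (hg : AnalyticOnNhd ℂ g U) {S : Set ℂ} (hS : interior S = ∅)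
    (hmaps : MapsTo g U S) : ∃ c, ∀ z ∈ U, g z = c := by
  refine (hg.is_constant_or_isOpen hUc).elim id fun hopen ↦ ?_
  have himage : g '' U = ∅ :=
    subset_empty_iff.1 (hS ▸ interior_maximal hmaps.image_subset (hopen U Subset.rfl hUo))
  exact ⟨0, by simp [image_eq_empty.1 himage]⟩

theorem exists_eq_smul_add_of_deriv_eq_const {𝕜 G : Type*} [RCLike 𝕜] [NormedAddCommGroup G]
    [NormedSpace 𝕜 G] {U : Set 𝕜} (hUo : IsOpen U) (hUc : IsPreconnected U)
    {f : 𝕜 → G} (hf : DifferentiableOn 𝕜 f U) {a : G} (hderiv : ∀ z ∈ U, deriv f z = a) :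
    ∃ b, ∀ z ∈ U, f z = z • a + b :=
  hUo.exists_eq_add_of_deriv_eq hUc hf (by fun_prop) fun z hz ↦ by
    rw [hderiv z hz, ((hasDerivAt_id' z).smul_const a).deriv, one_smul]

theorem eventually_segment_add_smul_subset {E : Type*} [AddCommGroup E] [Module ℝ E]
    [TopologicalSpace E] [ContinuousAdd E] [ContinuousSMul ℝ E] [LocallyConvexSpace ℝ E]
    {U : Set E} {x : E} (hU : U ∈ 𝓝 x) (v : E) :
    ∀ᶠ t : ℝ in 𝓝 0, segment ℝ x (x + t • v) ⊆ U := by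
  have hsegment : ∀ᶠ y in 𝓝 x, segment ℝ x y ⊆ U := by
    rw [← nhdsWithin_univ] at hU ⊢
    exact (convex_univ (𝕜 := ℝ)).eventually_nhdsWithin_segment (mem_univ x) hU
  have hline : Tendsto (fun t : ℝ ↦ x + t • v) (𝓝 0) (𝓝 x) :=
    Continuous.tendsto' (by fun_prop) _ _ (by simp)
  exact hline.eventually hsegment

theorem statement14_general {U : Set ℂ} (hUo : IsOpen U) (hUc : IsPreconnected U)
    {f : ℂ → ℂ} (hf : DifferentiableOn ℂ f U) {u : ℂ} (hu : u ≠ 0)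
    {K : Submodule ℝ ℂ} (hK : K ≠ ⊤)
    (hchord : ∀ z ∈ U, ∃ᶠ t : ℝ in 𝓝[≠] 0, f (z + t • u) - f z ∈ K) :
    ∃ a b : ℂ, ∀ z ∈ U, f z = a * z + b := by
  have hmem : MapsTo (fun z ↦ deriv f z * u) U K := fun z hz ↦ by
    have hfz : HasLineDerivAt ℝ f (deriv f z * u) z u := by
      simpa [mul_comm] using
        ((hf.hasDerivAt (hUo.mem_nhds hz)).hasFDerivAt.restrictScalars ℝ).hasLineDerivAt u
    exact hasLineDerivAt_mem_of_frequently_sub_mem K.closed_of_finiteDimensional hfz (hchord z hz)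
  have hK_interior : interior (K : Set ℂ) = ∅ :=
    not_nonempty_iff_eq_empty.1 fun h ↦ hK (K.eq_top_of_nonempty_interior' h)
  have hanalytic : AnalyticOnNhd ℂ (fun z ↦ deriv f z * u) U :=
    ((hf.deriv hUo).mul_const u).analyticOnNhd hUo
  obtain ⟨c, hc⟩ :=
    exists_eq_const_of_mapsTo_of_interior_eq_empty hUo hUc hanalytic hK_interior hmem
  have hderiv : ∀ z ∈ U, deriv f z = c / u := fun z hz ↦ eq_div_of_mul_eq hu (hc z hz)
  obtain ⟨b, hb⟩ := exists_eq_smul_add_of_deriv_eq_const hUo hUc hf hderiv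
  exact ⟨c / u, b, fun z hz ↦ by rw [hb z hz, smul_eq_mul, mul_comm]⟩

/-- A holomorphic map on a connected open set `U ⊆ ℂ` that sends (segments of) lines
parallel to a fixed direction `u ≠ 0` to lines parallel to a fixed direction `u' ≠ 0`
is affine: `f(z) = a·z + b`. -/
theorem statement14 (U : Set ℂ) (hUo : IsOpen U) (hUc : IsConnected U)
    (f : ℂ → ℂ) (hf : DifferentiableOn ℂ f U)
    (u u' : ℂ) (hu : u ≠ 0) (hu' : u' ≠ 0)
    (hlines : ∀ z ∈ U, ∀ w ∈ U, (∃ t : ℝ, w - z = (t : ℂ) * u) →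
      segment ℝ z w ⊆ U → ∃ s : ℝ, f w - f z = (s : ℂ) * u') :
    ∃ a b : ℂ, ∀ z ∈ U, f z = a * z + b := by
  refine statement14_general hUo hUc.isPreconnected hf hu
    (span_lt_top_of_card_lt_finrank (s := {u'}) (by simp)).ne fun z hz ↦ ?_
  have hsegments := eventually_segment_add_smul_subset (hUo.mem_nhds hz) u
  refine (hsegments.filter_mono nhdsWithin_le_nhds).frequently.mono fun t hsegment ↦ ?_
  obtain ⟨s, hs⟩ := hlines z hz _ (hsegment (right_mem_segment ℝ _ _)) ⟨t, by simp⟩ hsegment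
  exact Submodule.mem_span_singleton.2 ⟨s, hs.symm⟩
end
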